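/- arXiv:2212.02300 — 4 statements merged into one kernel-verified Lean document; each statement's English description precedes it below -/
import Mathlib

section
/- Let R be an associative ring. If M is an FpProj-periodic right R-module, i.e. there exists a short exact sequence 0 → M → A → M → 0 of right R-modules with A fp-projective, then M is weakly fp-projective. -/
/-!
STATEMENT 0: Let R be an associative ring. If M is an FpProj-periodic right
R-module (there is a short exact sequence 0 → M → A → M → 0 with A
fp-projective), then M is weakly fp-projective.

Right `R`-modules are formalized as modules over the opposite ring `Rᵐᵒᵖ`.
-/

open CategoryTheory Limits

universe u

namespace Stmt0

variable (R : Type u) [Ring R]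

/-- The category of right `R`-modules. -/
abbrev RightMod := ModuleCat.{u} Rᵐᵒᵖ

instance : HasExt.{u + 1} (RightMod R) := by
  letI := HasDerivedCategory.standard (RightMod R)
  exact hasExt_of_hasDerivedCategory _

/-- A right `R`-module `J` is fp-injective if `Ext¹(T, J) = 0` for every
finitely presented right `R`-module `T`. -/
def FpInjective (J : RightMod R) : Prop :=
  ∀ T : RightMod R, Module.FinitePresentation Rᵐᵒᵖ T →
    Subsingleton (Abelian.Ext T J 1)

/-- A right `R`-module `J` is strongly fp-injective if `Extⁿ(T, J) = 0` for
every finitely presented right `R`-module `T` and every `n ≥ 1`. -/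
def StronglyFpInjective (J : RightMod R) : Prop :=
  ∀ T : RightMod R, Module.FinitePresentation Rᵐᵒᵖ T →
    ∀ n : ℕ, 1 ≤ n → Subsingleton (Abelian.Ext T J n)

/-- A right `R`-module `P` is fp-projective if `Ext¹(P, J) = 0` for every
fp-injective right `R`-module `J`. -/
def FpProjective (P : RightMod R) : Prop :=
  ∀ J : RightMod R, FpInjective R J → Subsingleton (Abelian.Ext P J 1)

/-- A right `R`-module `P` is weakly fp-projective if `Ext¹(P, J) = 0` for
every strongly fp-injective right `R`-module `J`. -/
def WeaklyFpProjective (P : RightMod R) : Prop :=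
  ∀ J : RightMod R, StronglyFpInjective R J → Subsingleton (Abelian.Ext P J 1)

end Stmt0

/-!
Let `d : A → M → A` be the composite coming from the periodicity sequence; it is an endomorphism
of `A` with kernel equal to its image, and as `Ext¹(A, J) = 0`, the claim `Ext¹(M, J) = 0` means
that every `φ : A → J` with `φ ∘ d = 0` has the form `h ∘ d`. Let `G` be an injective resolution
of `J`. Since the `G n` are injective, `φ` is `f₀ ∘ d` for some `f₀ : A → G 0`, and `f₀` extends to
maps `fₙ : A → G n` with `fₙ₊₁ ∘ d = δ ∘ fₙ`. If the maps `fₙ₊₁` are null-homotopic, by a homotopy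
`k`, then `f₀ - k₀ ∘ d` takes values in `J`, and it still restricts to `φ` along `d`.

As `J` is strongly fp-injective, `Hom(T, G)` is exact in positive degrees for finitely presented
`T`. By the small object argument `A` is a quotient, with fp-injective kernel, of a module `P`
filtered by finitely presented modules; `A` is fp-projective, so it is a summand of `P`. The Hill
lemma provides many submodules of `P` that can be enlarged within the same family by finitely
presented extensions, and the homotopy on `P` is built by transfinite extension along sequences
`Bₙ ⊆ P` of such submodules with `d(Bₙ) ⊆ Bₙ₊₁`. To extend it to a larger sequence `B'ₙ`,
one treats first the relative boundaries `Dₙ = Bₙ + d(B'ₙ₋₁)` and then all of `B'ₙ`; both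
`B'ₙ / Bₙ` and `B'ₙ / Dₙ` are finitely presented.
-/

namespace FpPeriodicity

section FpExtension

variable {R P : Type*} [Ring R] [AddCommGroup P] [Module R P]

/-- `B' / B` is finitely presented, where the quotient is encoded as the image of `B'` in
`P ⧸ B`. -/
structure IsFpExtension (B B' : Submodule R P) : Prop where
  le : B ≤ B'
  finitePresentation_map : Module.FinitePresentation R (B'.map B.mkQ)

variable {B B' B'' B₀ N : Submodule R P}

theorem map_mkQ_sup : (B ⊔ N).map B.mkQ = N.map B.mkQ := by
  rw [Submodule.map_sup, Submodule.mkQ_map_self, bot_sup_eq]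

theorem IsFpExtension.refl (B : Submodule R P) : IsFpExtension B B where
  le := le_rfl
  finitePresentation_map := by
    rw [Submodule.mkQ_map_self]
    infer_instance

/-- The surjection `B'' / B → B'' / B'` for `B ≤ B'`. -/
def mapMkQFactor (h : B ≤ B') (B'' : Submodule R P) :
    B''.map B.mkQ →ₗ[R] B''.map B'.mkQ :=
  (Submodule.factor h).restrict <| by
    rintro _ ⟨x, hx, rfl⟩
    exact ⟨x, hx, rfl⟩

theorem mapMkQFactor_surjective (h : B ≤ B') :
    Function.Surjective (mapMkQFactor h B'') := by
  rintro ⟨_, x, hx, rfl⟩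
  exact ⟨⟨B.mkQ x, x, hx, rfl⟩, rfl⟩

theorem ker_mapMkQFactor (h : B ≤ B') :
    LinearMap.ker (mapMkQFactor h B'') = (B'.map B.mkQ).comap (B''.map B.mkQ).subtype := by
  have hB' : (B'.map B.mkQ).comap B.mkQ = B' := by simpa using h
  ext ⟨_, x, hx, rfl⟩
  rw [LinearMap.mem_ker, Subtype.ext_iff]
  change B'.mkQ x = 0 ↔ x ∈ (B'.map B.mkQ).comap B.mkQ
  rw [hB', Submodule.mkQ_apply, Submodule.Quotient.mk_eq_zero]

theorem IsFpExtension.trans (h : IsFpExtension B B') (h' : IsFpExtension B' B'') :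
    IsFpExtension B B'' where
  le := h.le.trans h'.le
  finitePresentation_map := by
    have := h.finitePresentation_map
    have := h'.finitePresentation_map
    have : Module.FinitePresentation R (LinearMap.ker (mapMkQFactor h.le B'')) := by
      rw [ker_mapMkQFactor]
      exact .of_equiv (M := B'.map B.mkQ) (N := (B'.map B.mkQ).comap (B''.map B.mkQ).subtype)
        (Submodule.comapSubtypeEquivOfLe (Submodule.map_mono h'.le)).symm
    exact Module.finitePresentation_of_ker _ (mapMkQFactor_surjective h.le)

theorem IsFpExtension.of_fg_sup (h : IsFpExtension B B') (hN : N.FG) (hle : N ≤ B') :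
    IsFpExtension (B ⊔ N) B' where
  le := sup_le h.le hle
  finitePresentation_map := by
    have := h.finitePresentation_map
    refine Module.finitePresentation_of_surjective _
      (mapMkQFactor_surjective (B'' := B') (le_sup_left : B ≤ B ⊔ N)) ?_
    rw [ker_mapMkQFactor, map_mkQ_sup]
    apply Submodule.fg_of_fg_map_injective _ (Submodule.injective_subtype _)
    rw [Submodule.map_comap_subtype, inf_eq_right.mpr (Submodule.map_mono hle)]
    exact hN.map _

theorem IsFpExtension.exists_fg_sup (h : IsFpExtension B B') :
    ∃ N : Submodule R P, N.FG ∧ B' = B ⊔ N := by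
  classical
  have := h.finitePresentation_map
  obtain ⟨s, hs⟩ : (B'.map B.mkQ).FG := Module.Finite.iff_fg.mp inferInstance
  obtain ⟨t, -, rfl⟩ := Finset.subset_set_image_iff.mp
    (show (s : Set (P ⧸ B)) ⊆ B.mkQ '' B' by
      rw [← Submodule.map_coe, ← hs]
      exact Submodule.subset_span)
  refine ⟨.span R t, ⟨t, rfl⟩, ?_⟩
  rw [Finset.coe_image, ← Submodule.map_span] at hs
  simpa [h.le, sup_eq_right.mpr h.le] using congrArg (Submodule.comap B.mkQ) hs.symm

theorem isFpExtension_sup_range {F : Type*} [AddCommGroup F] [Module R F]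
    [Module.FinitePresentation R F] (f : F →ₗ[R] P) (h : (B.comap f).FG) :
    IsFpExtension B (B ⊔ LinearMap.range f) where
  le := le_sup_left
  finitePresentation_map := by
    rw [map_mkQ_sup, ← LinearMap.range_comp]
    refine Module.finitePresentation_of_surjective _ (B.mkQ ∘ₗ f).surjective_rangeRestrict ?_
    rwa [LinearMap.ker_rangeRestrict, LinearMap.ker_comp, B.ker_mkQ]

theorem IsFpExtension.fg_comap_subtype (hN : N.FG) (h : IsFpExtension B (B ⊔ N)) :
    (B.comap N.subtype).FG := by
  have : Module.Finite R N := Module.Finite.iff_fg.mpr hN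
  have := h.finitePresentation_map
  rw [map_mkQ_sup, ← N.range_subtype, ← LinearMap.range_comp] at this
  have := Module.FinitePresentation.fg_ker _ (B.mkQ ∘ₗ N.subtype).surjective_rangeRestrict
  rwa [LinearMap.ker_rangeRestrict, LinearMap.ker_comp, B.ker_mkQ] at this

theorem IsFpExtension.fg_inf (hN : N.FG) (h : IsFpExtension B (B ⊔ N)) : (N ⊓ B).FG := by
  rw [← Submodule.map_comap_subtype]
  exact (h.fg_comap_subtype hN).map _

theorem IsFpExtension.sup_of_inf_eq (h : IsFpExtension B₀ (B₀ ⊔ N)) (heq : N ⊓ B = N ⊓ B₀) :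
    IsFpExtension B (B ⊔ N) where
  le := le_sup_left
  finitePresentation_map := by
    have := h.finitePresentation_map
    have hker : LinearMap.ker (B.mkQ ∘ₗ N.subtype) = LinearMap.ker (B₀.mkQ ∘ₗ N.subtype) := by
      simp only [LinearMap.ker_comp, Submodule.ker_mkQ]
      simpa using congrArg (Submodule.comap N.subtype) heq
    rw [map_mkQ_sup, ← N.range_subtype, ← LinearMap.range_comp] at this ⊢
    exact .of_equiv <| (LinearMap.quotKerEquivRange _).symm ≪≫ₗ
      Submodule.quotEquivOfEq _ _ hker.symm ≪≫ₗ LinearMap.quotKerEquivRange _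

end FpExtension

section Filtration

open Set

variable {R P Λ : Type*} [Ring R] [AddCommGroup P] [Module R P]

/-- The submodule generated by the pieces `N a` of a filtration with index `a ∈ S`. -/
def pieceSup (N : Λ → Submodule R P) (S : Set Λ) : Submodule R P := ⨆ a ∈ S, N a

variable {N : Λ → Submodule R P} {S U L : Set Λ}

theorem le_pieceSup {a : Λ} (ha : a ∈ S) : N a ≤ pieceSup N S := le_biSup N ha

theorem pieceSup_mono (h : S ⊆ U) : pieceSup N S ≤ pieceSup N U := biSup_mono h

theorem pieceSup_insert (a : Λ) (S : Set Λ) : pieceSup N (insert a S) = N a ⊔ pieceSup N S :=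
  iSup_insert

variable [LinearOrder Λ]

theorem exists_mem_pieceSup_inter_Iic {x : P} (hx : x ∈ pieceSup N U) (hx0 : x ≠ 0) :
    ∃ c ∈ U, x ∈ pieceSup N (U ∩ Iic c) := by
  have hU : Nonempty U := by
    by_contra hU
    rw [nonempty_coe_sort, not_nonempty_iff_eq_empty] at hU
    simp [hU, pieceSup, hx0] at hx
  have hmono : Monotone fun c : U ↦ pieceSup N (U ∩ Iic c) := fun b c hbc ↦
    pieceSup_mono <| inter_subset_inter_right U <| Iic_subset_Iic.mpr hbc
  have hle : pieceSup N U ≤ ⨆ c : U, pieceSup N (U ∩ Iic c) := iSup₂_le fun c hc ↦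
    le_iSup_of_le ⟨c, hc⟩ <| le_pieceSup ⟨hc, self_mem_Iic⟩
  obtain ⟨c, hc⟩ := (Submodule.mem_iSup_of_directed _ hmono.directed_le).mp (hle hx)
  exact ⟨c, c.2, hc⟩

/-- A set `S` of indices is closed if the intersection of `N a` with the earlier pieces is,
for every `a ∈ S`, already contained in the earlier pieces with index in `S`. -/
def IsClosedIndexSet (N : Λ → Submodule R P) (S : Set Λ) : Prop :=
  ∀ a ∈ S, N a ⊓ pieceSup N (Iio a) ≤ pieceSup N (S ∩ Iio a)

theorem IsClosedIndexSet.sUnion {𝒮 : Set (Set Λ)} (h : ∀ S ∈ 𝒮, IsClosedIndexSet N S) :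
    IsClosedIndexSet N (⋃₀ 𝒮) := by
  rintro a ⟨S, hS, ha⟩
  exact (h S hS a ha).trans <|
    pieceSup_mono <| inter_subset_inter_left _ <| subset_sUnion_of_mem hS

theorem IsClosedIndexSet.pieceSup_inter_Iic_inf_le (hS : IsClosedIndexSet N S) {b : Λ}
    (hb : b ∈ S) : pieceSup N (S ∩ Iic b) ⊓ pieceSup N (Iio b) ≤ pieceSup N (S ∩ Iio b) := by
  have hsplit : S ∩ Iic b = insert b (S ∩ Iio b) := by
    rw [← Iio_insert, inter_insert_of_mem hb]
  rw [hsplit, pieceSup_insert, sup_comm,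
    sup_inf_assoc_of_le _ (pieceSup_mono inter_subset_right)]
  exact sup_le le_rfl (hS b hb)

/-- A filtration of `P` with finitely presented factors, given by finitely generated submodules
`N a` such that `N a` generates the `a`-th step of the filtration over the earlier ones. -/
structure IsFpFiltration (N : Λ → Submodule R P) : Prop where
  iSup_eq_top : ⨆ a, N a = ⊤
  fg : ∀ a, (N a).FG
  isFpExtension : ∀ a, IsFpExtension (pieceSup N (Iio a)) (pieceSup N (Iio a) ⊔ N a)

/-- Every closed set of indices can be enlarged, by a finitely presented extension of the
submodules they generate, so as to capture `X`. -/
def IsCapturable (N : Λ → Submodule R P) (X : Submodule R P) : Prop :=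
  ∀ S, IsClosedIndexSet N S → ∃ S', IsClosedIndexSet N S' ∧
    IsFpExtension (pieceSup N S) (pieceSup N S') ∧ X ≤ pieceSup N S'

variable {X Y : Submodule R P}

theorem IsCapturable.mono (hY : IsCapturable N Y) (h : X ≤ Y) : IsCapturable N X := by
  intro S hS
  obtain ⟨S', hS', hext, hYS⟩ := hY S hS
  exact ⟨S', hS', hext, h.trans hYS⟩

theorem IsCapturable.sup (hX : IsCapturable N X) (hY : IsCapturable N Y) :
    IsCapturable N (X ⊔ Y) := by
  intro S hS
  obtain ⟨S₁, hS₁, hext₁, hXS⟩ := hX S hS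
  obtain ⟨S₂, hS₂, hext₂, hYS⟩ := hY S₁ hS₁
  exact ⟨S₂, hS₂, hext₁.trans hext₂, sup_le (hXS.trans hext₂.le) hYS⟩

theorem isCapturable_bot : IsCapturable N ⊥ :=
  fun S hS ↦ ⟨S, hS, .refl _, bot_le⟩

theorem IsCapturable.of_fg_le_pieceSup (hU : ∀ a ∈ U, IsCapturable N (N a)) (hX : X.FG)
    (hle : X ≤ pieceSup N U) : IsCapturable N X := by
  rw [pieceSup, iSup_subtype'] at hle
  obtain ⟨t, ht⟩ := CompleteLattice.IsCompactElement.exists_finset_of_le_iSup _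
    ((Submodule.fg_iff_compact X).mp hX) _ hle
  refine IsCapturable.mono ?_ ht
  rw [← Finset.sup_eq_iSup]
  exact Finset.sup_induction isCapturable_bot (fun _ hX _ hY ↦ hX.sup hY) fun a _ ↦ hU a a.2

variable [WellFoundedLT Λ]

theorem IsClosedIndexSet.pieceSup_inf_le (hS : IsClosedIndexSet N S) (hL : IsLowerSet L) :
    pieceSup N S ⊓ pieceSup N L ≤ pieceSup N (S ∩ L) := by
  have key : ∀ b ∈ S, pieceSup N (S ∩ Iic b) ⊓ pieceSup N L ≤ pieceSup N (S ∩ L) := by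
    intro b
    induction b using WellFoundedLT.induction with
    | ind b ih =>
      rintro hb x ⟨hxS, hxL⟩
      by_cases hbL : b ∈ L
      · exact pieceSup_mono (inter_subset_inter_right S (hL.Iic_subset hbL)) hxS
      have hLb : L ⊆ Iio b := fun c hc ↦ lt_of_not_ge fun hbc ↦ hbL (hL hbc hc)
      have hx := hS.pieceSup_inter_Iic_inf_le hb ⟨hxS, pieceSup_mono hLb hxL⟩
      rcases eq_or_ne x 0 with rfl | hx0
      · exact zero_mem _
      obtain ⟨c, ⟨hcS, hcb⟩, hc⟩ := exists_mem_pieceSup_inter_Iic hx hx0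
      exact ih c hcb hcS
        ⟨pieceSup_mono (inter_subset_inter_left _ inter_subset_left) hc, hxL⟩
  rintro x ⟨hxS, hxL⟩
  rcases eq_or_ne x 0 with rfl | hx0
  · exact zero_mem _
  obtain ⟨c, hcS, hc⟩ := exists_mem_pieceSup_inter_Iic hxS hx0
  exact key c hcS ⟨hc, hxL⟩

theorem IsClosedIndexSet.insert (hS : IsClosedIndexSet N S) {a : Λ}
    (ha : N a ⊓ pieceSup N (Iio a) ≤ pieceSup N S) : IsClosedIndexSet N (insert a S) := by
  rintro b (rfl | hb)
  · calc N b ⊓ pieceSup N (Iio b) ≤ pieceSup N S ⊓ pieceSup N (Iio b) := le_inf ha inf_le_right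
      _ ≤ pieceSup N (S ∩ Iio b) := hS.pieceSup_inf_le (isLowerSet_Iio b)
      _ ≤ _ := pieceSup_mono (inter_subset_inter_left _ (subset_insert b S))
  · exact (hS b hb).trans (pieceSup_mono (inter_subset_inter_left _ (subset_insert a S)))

theorem IsClosedIndexSet.inf_pieceSup_le (hS : IsClosedIndexSet N S) {a : Λ} (ha : a ∉ S) :
    N a ⊓ pieceSup N S ≤ pieceSup N (Iio a) :=
  calc N a ⊓ pieceSup N S ≤ pieceSup N S ⊓ pieceSup N (Iic a) :=
        le_inf inf_le_right (inf_le_left.trans (le_pieceSup self_mem_Iic))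
    _ ≤ pieceSup N (S ∩ Iic a) := hS.pieceSup_inf_le (isLowerSet_Iic a)
    _ ≤ pieceSup N (Iio a) := pieceSup_mono fun _ hb ↦
        lt_of_le_of_ne hb.2 fun h ↦ ha (h ▸ hb.1)

theorem IsFpFiltration.isCapturable_piece (hN : IsFpFiltration N) (a : Λ) :
    IsCapturable N (N a) := by
  induction a using WellFoundedLT.induction with
  | ind a ih =>
    intro S hS
    obtain ⟨S₁, hS₁, hext, hle⟩ := IsCapturable.of_fg_le_pieceSup ih
      ((hN.isFpExtension a).fg_inf (hN.fg a)) inf_le_right S hS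
    by_cases ha : a ∈ S₁
    · exact ⟨S₁, hS₁, hext, le_pieceSup ha⟩
    refine ⟨insert a S₁, hS₁.insert hle, hext.trans ?_, le_pieceSup (mem_insert a S₁)⟩
    rw [pieceSup_insert, sup_comm]
    exact (hN.isFpExtension a).sup_of_inf_eq <|
      le_antisymm (le_inf inf_le_left (hS₁.inf_pieceSup_le ha)) (le_inf inf_le_left hle)

/-- A family of submodules that is closed under arbitrary sums and in which every member can be
enlarged, by a finitely presented extension, so as to capture a given finitely generated
submodule. This is the part of the conclusion of the Hill lemma used here. -/
structure IsHillFamily (H : Set (Submodule R P)) : Prop where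
  sSup_mem : ∀ C ⊆ H, sSup C ∈ H
  exists_isFpExtension : ∀ B ∈ H, ∀ X : Submodule R P, X.FG →
    ∃ B' ∈ H, IsFpExtension B B' ∧ X ≤ B'

theorem IsFpFiltration.isHillFamily (hN : IsFpFiltration N) :
    IsHillFamily (pieceSup N '' {S | IsClosedIndexSet N S}) where
  sSup_mem C hC := by
    refine ⟨⋃₀ {S | IsClosedIndexSet N S ∧ pieceSup N S ∈ C}, .sUnion fun S hS ↦ hS.1,
      le_antisymm ?_ (sSup_le ?_)⟩
    · refine iSup₂_le fun a ⟨S, hS, ha⟩ ↦ (le_pieceSup ha).trans (le_sSup hS.2)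
    · intro B hB
      obtain ⟨S, hS, rfl⟩ := hC hB
      exact pieceSup_mono (subset_sUnion_of_mem ⟨hS, hB⟩)
  exists_isFpExtension := by
    rintro _ ⟨S, hS, rfl⟩ X hX
    have hXtop : X ≤ pieceSup N univ := by simp [pieceSup, hN.iSup_eq_top]
    obtain ⟨S', hS', hext, hle⟩ :=
      IsCapturable.of_fg_le_pieceSup (fun a _ ↦ hN.isCapturable_piece a) hX hXtop S hS
    exact ⟨_, ⟨S', hS', rfl⟩, hext, hle⟩

end Filtration

section NullHomotopy

universe v

variable {R : Type*} [Ring R] {P : Type v} [AddCommGroup P] [Module R P]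
  {G : ℕ → Type v} [∀ n, AddCommGroup (G n)] [∀ n, Module R (G n)]

/-- The complex `(G, δ)` becomes exact in positive degrees under `Hom(T, -)`, for every finitely
presented module `T`. -/
def IsFpExact (δ : ∀ n, G n →ₗ[R] G (n + 1)) : Prop :=
  ∀ (T : Type v) [AddCommGroup T] [Module R T] [Module.FinitePresentation R T] (n : ℕ)
    (g : T →ₗ[R] G (n + 1)), δ (n + 1) ∘ₗ g = 0 → ∃ k : T →ₗ[R] G n, δ n ∘ₗ k = g

variable {d : P →ₗ[R] P}

theorem IsFpExtension.exists_intermediate {B B' : ℕ → Submodule R P}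
    (hB : ∀ n, IsFpExtension (B n) (B' n)) (hdd : ∀ x, d (d x) = 0)
    (hdB : ∀ n, (B n).map d ≤ B (n + 1)) (hdB' : ∀ n, (B' n).map d ≤ B' (n + 1)) :
    ∃ D : ℕ → Submodule R P, (∀ n, B n ≤ D n) ∧ (∀ n, IsFpExtension (D n) (B' n)) ∧
      (∀ n, (D n).map d ≤ B (n + 1)) ∧ ∀ n, (B' n).map d ≤ D (n + 1) := by
  have key : ∀ n, ∃ D, B n ≤ D ∧ IsFpExtension D (B' n) ∧ D.map d ≤ B (n + 1) ∧
      ∀ m, m + 1 = n → (B' m).map d ≤ D := by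
    rintro (_ | n)
    · exact ⟨B 0, le_rfl, hB 0, hdB 0, by simp⟩
    obtain ⟨Y, hY, hB'⟩ := (hB n).exists_fg_sup
    have hYn : Y.map d ≤ (B' n).map d := Submodule.map_mono (hB' ▸ le_sup_right)
    refine ⟨B (n + 1) ⊔ Y.map d, le_sup_left, (hB _).of_fg_sup (hY.map d) (hYn.trans (hdB' n)),
      ?_, ?_⟩
    · have hdd' : d ∘ₗ d = 0 := LinearMap.ext hdd
      rw [Submodule.map_sup, ← Submodule.map_comp, hdd', Submodule.map_zero, sup_bot_eq]
      exact hdB (n + 1)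
    · rintro m ⟨⟩
      rw [hB', Submodule.map_sup]
      exact sup_le_sup_right (hdB n) _
  choose D hBD hD hdD hD' using key
  exact ⟨D, hBD, hD, hdD, fun n ↦ hD' (n + 1) n rfl⟩

theorem IsHillFamily.exists_map_le {H : Set (Submodule R P)} (hH : IsHillFamily H)
    {B X : ℕ → Submodule R P} (hB : ∀ n, B n ∈ H) (hdB : ∀ n, (B n).map d ≤ B (n + 1))
    (hX : ∀ n, (X n).FG) :
    ∃ B' : ℕ → Submodule R P, (∀ n, B' n ∈ H) ∧ (∀ n, IsFpExtension (B n) (B' n)) ∧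
      (∀ n, X n ≤ B' n) ∧ ∀ n, (B' n).map d ≤ B' (n + 1) := by
  have hstep (n : ℕ) (W : {W : Submodule R P // W.FG}) : ∃ (B' : Submodule R P)
      (Y : {Y : Submodule R P // Y.FG}),
      B' ∈ H ∧ IsFpExtension (B n) B' ∧ W.1 ≤ B' ∧ B' = B n ⊔ Y.1 := by
    obtain ⟨B', hB', hext, hle⟩ := hH.exists_isFpExtension _ (hB n) W.1 W.2
    obtain ⟨Y, hY, rfl⟩ := hext.exists_fg_sup
    exact ⟨_, ⟨Y, hY⟩, hB', hext, hle, rfl⟩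
  choose B' Y hB' hext hle hsup using hstep
  let W (n : ℕ) : {W : Submodule R P // W.FG} :=
    n.rec ⟨X 0, hX 0⟩ fun n W ↦ ⟨X (n + 1) ⊔ (Y n W).1.map d, (hX _).sup ((Y n W).2.map d)⟩
  have hXW : ∀ n, X n ≤ (W n).1
    | 0 => le_rfl
    | _ + 1 => le_sup_left
  refine ⟨fun n ↦ B' n (W n), fun n ↦ hB' _ _, fun n ↦ hext _ _, fun n ↦ (hXW n).trans (hle _ _),
    fun n ↦ ?_⟩
  change (B' n (W n)).map d ≤ B' (n + 1) (W (n + 1))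
  rw [hsup n, Submodule.map_sup]
  exact sup_le ((hdB n).trans (hext _ _).le) (le_sup_right.trans (hle (n + 1) (W (n + 1))))

/-- A null-homotopy of `f : P → G`, viewed as a morphism of degree one from the periodic complex
`(P, d)`, that is defined on a family of submodules belonging to `H`. -/
structure IsPartialNullHomotopy (H : Set (Submodule R P)) (d : P →ₗ[R] P)
    (δ : ∀ n, G n →ₗ[R] G (n + 1)) (f : ∀ n, P →ₗ[R] G (n + 1)) (h : ∀ n, P →ₗ.[R] G n) :
    Prop where
  domain_mem : ∀ n, (h n).domain ∈ H
  map_domain_le : ∀ n, (h n).domain.map d ≤ (h (n + 1)).domain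
  eq : ∀ n (x : (h n).domain) (y : (h (n + 1)).domain), d x = y →
    f n x = δ n (h n x) + h (n + 1) y

variable {H : Set (Submodule R P)} {δ : ∀ n, G n →ₗ[R] G (n + 1)} {f : ∀ n, P →ₗ[R] G (n + 1)}

theorem isPartialNullHomotopy_bot (hH : IsHillFamily H) :
    IsPartialNullHomotopy H d δ f fun _ ↦ ⊥ where
  domain_mem n := by
    change ⊥ ∈ H
    simpa using hH.sSup_mem ∅ (Set.empty_subset H)
  map_domain_le _ := (Submodule.map_bot d).le
  eq := by
    rintro n ⟨x, hx⟩ ⟨y, hy⟩ -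
    obtain rfl : x = 0 := hx
    obtain rfl : y = 0 := hy
    change f n 0 = δ n 0 + 0
    simp

theorem IsHillFamily.bddAbove_isPartialNullHomotopy (hH : IsHillFamily H)
    {c : Set (∀ n, P →ₗ.[R] G n)} (hc : ∀ h ∈ c, IsPartialNullHomotopy H d δ f h)
    (hchain : IsChain (· ≤ ·) c) (hne : c.Nonempty) :
    ∃ u, IsPartialNullHomotopy H d δ f u ∧ ∀ h ∈ c, h ≤ u := by
  have hdir (n : ℕ) : DirectedOn (· ≤ ·) (Function.eval n '' c) :=
    (hchain.image_of_map_rel _ _ _ fun _ _ h ↦ h n).directedOn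
  let u (n : ℕ) : P →ₗ.[R] G n := LinearPMap.sSup _ (hdir n)
  have hle : ∀ h ∈ c, ∀ n, h n ≤ u n := fun h hh n ↦ LinearPMap.le_sSup (hdir n) ⟨h, hh, rfl⟩
  have hmem {n : ℕ} {x : P} (hx : x ∈ (u n).domain) : ∃ h ∈ c, x ∈ (h n).domain := by
    simpa using (LinearPMap.mem_domain_sSup_iff (hne.image _) (hdir n)).mp hx
  refine ⟨u, ⟨fun n ↦ ?_, fun n ↦ ?_, fun n x y hxy ↦ ?_⟩, hle⟩
  · apply hH.sSup_mem
    rintro _ ⟨_, ⟨h, hh, rfl⟩, rfl⟩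
    exact (hc h hh).domain_mem n
  · rintro _ ⟨x, hx, rfl⟩
    obtain ⟨h, hh, hxh⟩ := hmem hx
    exact (hle h hh (n + 1)).1 ((hc h hh).map_domain_le n ⟨x, hxh, rfl⟩)
  · obtain ⟨h, hh, hxh⟩ := hmem x.2
    have hyh : (y : P) ∈ (h (n + 1)).domain :=
      hxy ▸ (hc h hh).map_domain_le n ⟨x, hxh, rfl⟩
    rw [← (hle h hh n).2 (x := ⟨x, hxh⟩) rfl, ← (hle h hh (n + 1)).2 (x := ⟨y, hyh⟩) rfl]
    exact (hc h hh).eq n ⟨x, hxh⟩ ⟨y, hyh⟩ hxy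

variable [∀ n, Module.Injective R (G n)]

theorem IsFpExact.exists_lift (hδ : IsFpExact δ) {B B' : Submodule R P}
    (hB : IsFpExtension B B') {n : ℕ} (g : P →ₗ[R] G (n + 1)) (hgB : ∀ x ∈ B, g x = 0)
    (hg : ∀ x ∈ B', δ (n + 1) (g x) = 0) :
    ∃ k : P →ₗ[R] G n, (∀ x ∈ B, k x = 0) ∧ ∀ x ∈ B', δ n (k x) = g x := by
  have := hB.finitePresentation_map
  obtain ⟨k₀, hk₀⟩ := hδ (B'.map B.mkQ) n (B.liftQ g hgB ∘ₗ (B'.map B.mkQ).subtype) <| by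
    ext ⟨_, x, hx, rfl⟩
    exact hg x hx
  obtain ⟨k₁, hk₁⟩ := Module.Injective.out (B'.map B.mkQ).subtype Subtype.val_injective k₀
  refine ⟨k₁ ∘ₗ B.mkQ, fun x hx ↦ ?_, fun x hx ↦ ?_⟩
  · simp [(Submodule.Quotient.mk_eq_zero B).mpr hx]
  · have hxB : B.mkQ x ∈ B'.map B.mkQ := ⟨x, hx, rfl⟩
    calc δ n (k₁ (B.mkQ x)) = δ n (k₀ ⟨B.mkQ x, hxB⟩) := congrArg (δ n) (hk₁ ⟨B.mkQ x, hxB⟩)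
      _ = g x := LinearMap.congr_fun hk₀ ⟨B.mkQ x, hxB⟩

/- `D / B` is in general only finitely generated, so `exists_lift` does not apply to `B ≤ D`.
Correcting `e` by a map `t` that vanishes on `D` makes it apply to `B ≤ B'`. -/
theorem IsFpExact.exists_lift_of_le (hδ : IsFpExact δ) (hδδ : ∀ n x, δ (n + 1) (δ n x) = 0)
    {B D B' : Submodule R P} (hB : IsFpExtension B B') (hBD : B ≤ D) (hD : IsFpExtension D B')
    {n : ℕ} (e : P →ₗ[R] G (n + 1)) (heB : ∀ x ∈ B, e x = 0)
    (heD : ∀ x ∈ D, δ (n + 1) (e x) = 0) :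
    ∃ v : P →ₗ[R] G n, (∀ x ∈ B, v x = 0) ∧ ∀ x ∈ D, δ n (v x) = e x := by
  obtain ⟨t, htD, ht⟩ := hδ.exists_lift hD (δ (n + 1) ∘ₗ e) heD fun x _ ↦ hδδ _ _
  obtain ⟨v, hvB, hv⟩ := hδ.exists_lift hB (e - t)
    (fun x hx ↦ by simp [heB x hx, htD x (hBD hx)]) (fun x hx ↦ by simp [ht x hx])
  exact ⟨v, hvB, fun x hx ↦ by simp [hv x (hD.le hx), htD x hx]⟩

theorem IsFpExact.exists_relative_nullHomotopy (hδ : IsFpExact δ)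
    (hδδ : ∀ n x, δ (n + 1) (δ n x) = 0) (hdd : ∀ x, d (d x) = 0) {B B' : ℕ → Submodule R P}
    (hB : ∀ n, IsFpExtension (B n) (B' n)) (hdB : ∀ n, (B n).map d ≤ B (n + 1))
    (hdB' : ∀ n, (B' n).map d ≤ B' (n + 1)) (e : ∀ n, P →ₗ[R] G (n + 1))
    (he : ∀ n x, δ (n + 1) (e n x) = e (n + 1) (d x)) (heB : ∀ n, ∀ x ∈ B n, e n x = 0) :
    ∃ k : ∀ n, P →ₗ[R] G n, (∀ n, ∀ x ∈ B n, k n x = 0) ∧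
      ∀ n, ∀ x ∈ B' n, e n x = δ n (k n x) + k (n + 1) (d x) := by
  obtain ⟨D, hBD, hD, hdD, hD'⟩ := IsFpExtension.exists_intermediate hB hdd hdB hdB'
  have hdD {n x} (hx : x ∈ D n) : d x ∈ B (n + 1) := hdD n ⟨x, hx, rfl⟩
  have hD' {n x} (hx : x ∈ B' n) : d x ∈ D (n + 1) := hD' n ⟨x, hx, rfl⟩
  choose v hvB hv using fun n ↦ hδ.exists_lift_of_le hδδ (hB n) (hBD n) (hD n) (e n) (heB n)
    fun x hx ↦ (he n x).trans (heB _ _ (hdD hx))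
  choose s hsD hs using fun n ↦ hδ.exists_lift (hD n) (e n - δ n ∘ₗ v n - v (n + 1) ∘ₗ d)
    (fun x hx ↦ by simp [hv n x hx, hvB _ _ (hdD hx)])
    (fun x hx ↦ by simp [he, hδδ, hv _ _ (hD' hx)])
  refine ⟨fun n ↦ v n + s n, fun n x hx ↦ ?_, fun n x hx ↦ ?_⟩
  · simp [hvB n x hx, hsD n x (hBD n hx)]
  · simp only [LinearMap.add_apply, map_add, hs n x hx, hsD _ _ (hD' hx), LinearMap.sub_apply,
      LinearMap.comp_apply]
    abel

theorem IsPartialNullHomotopy.exists_le (hδ : IsFpExact δ) (hδδ : ∀ n x, δ (n + 1) (δ n x) = 0)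
    (hdd : ∀ x, d (d x) = 0) (hf : ∀ n x, δ (n + 1) (f n x) = f (n + 1) (d x))
    (hH : IsHillFamily H) {h : ∀ n, P →ₗ.[R] G n} (hh : IsPartialNullHomotopy H d δ f h)
    {X : ℕ → Submodule R P} (hX : ∀ n, (X n).FG) :
    ∃ h', IsPartialNullHomotopy H d δ f h' ∧ h ≤ h' ∧ ∀ n, X n ≤ (h' n).domain := by
  obtain ⟨B', hB'H, hB', hXB', hdB'⟩ := hH.exists_map_le hh.domain_mem hh.map_domain_le hX
  choose g hg using fun n ↦ Module.Injective.out (h n).domain.subtype Subtype.val_injective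
    (h n).toFun
  obtain ⟨k, hk, hgk⟩ := hδ.exists_relative_nullHomotopy hδδ hdd hB' hh.map_domain_le hdB'
    (fun n ↦ f n - δ n ∘ₗ g n - g (n + 1) ∘ₗ d) (fun n x ↦ by simp [hf, hδδ, hdd]) <| by
      intro n x hx
      have hdx := hh.map_domain_le n ⟨x, hx, rfl⟩
      have hgx : g n x = h n ⟨x, hx⟩ := hg n ⟨x, hx⟩
      have hgdx : g (n + 1) (d x) = h (n + 1) ⟨d x, hdx⟩ := hg (n + 1) ⟨d x, hdx⟩
      simp [hh.eq n ⟨x, hx⟩ ⟨d x, hdx⟩ rfl, hgx, hgdx]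
  refine ⟨fun n ↦ (g n + k n).toPMap (B' n), ⟨hB'H, hdB', ?_⟩, fun n ↦ ⟨(hB' n).le, ?_⟩, hXB'⟩
  · rintro n ⟨x, hx⟩ ⟨_, _⟩ rfl
    have := hgk n x hx
    simp only [LinearMap.sub_apply, LinearMap.comp_apply] at this
    rw [sub_sub, sub_eq_iff_eq_add] at this
    change f n x = δ n (g n x + k n x) + (g (n + 1) (d x) + k (n + 1) (d x))
    rw [this, map_add]
    abel
  · rintro x ⟨y, hy⟩ rfl
    simpa [hk n x x.2] using (hg n x).symm

theorem IsFpExact.exists_nullHomotopy (hδ : IsFpExact δ) (hδδ : ∀ n x, δ (n + 1) (δ n x) = 0)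
    (hdd : ∀ x, d (d x) = 0) (hf : ∀ n x, δ (n + 1) (f n x) = f (n + 1) (d x))
    (hH : IsHillFamily H) :
    ∃ k : ∀ n, P →ₗ[R] G n, ∀ n x, f n x = δ n (k n x) + k (n + 1) (d x) := by
  obtain ⟨h, -, hmax⟩ := zorn_le_nonempty₀ {h | IsPartialNullHomotopy H d δ f h}
    (fun c hc hchain y hy ↦ hH.bddAbove_isPartialNullHomotopy hc hchain ⟨y, hy⟩) _
    (isPartialNullHomotopy_bot hH)
  have htop (n : ℕ) (x : P) : x ∈ (h n).domain := by
    obtain ⟨h', hh', hle, hx⟩ := hmax.prop.exists_le hδ hδδ hdd hf hH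
      fun _ ↦ Submodule.fg_span_singleton x
    exact (hmax.le_of_ge hh' hle n).1 (hx n (Submodule.mem_span_singleton_self x))
  exact ⟨fun n ↦ (h n).toFun ∘ₗ LinearMap.id.codRestrict _ (htop n),
    fun n x ↦ hmax.prop.eq n ⟨x, htop n x⟩ ⟨d x, htop _ _⟩ rfl⟩

end NullHomotopy

section AcyclicPeriodic

universe v

variable {R : Type*} [Ring R]

theorem exists_comp_eq_of_exact {A B C E : Type v} [AddCommGroup A] [Module R A]
    [AddCommGroup B] [Module R B] [AddCommGroup C] [Module R C] [AddCommGroup E] [Module R E]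
    [Module.Injective R E] {f : A →ₗ[R] B} {g : B →ₗ[R] C} (hfg : Function.Exact f g)
    (ψ : B →ₗ[R] E) (hψ : ∀ x, ψ (f x) = 0) : ∃ ψ' : C →ₗ[R] E, ∀ y, ψ' (g y) = ψ y := by
  have hker : LinearMap.ker g ≤ LinearMap.ker ψ := by
    rintro y hy
    obtain ⟨x, rfl⟩ := (hfg y).mp hy
    exact hψ x
  obtain ⟨ψ', hψ'⟩ := Module.Injective.out ((LinearMap.ker g).liftQ g le_rfl)
    (LinearMap.ker_eq_bot.mp <| Submodule.ker_liftQ_eq_bot _ _ le_rfl le_rfl)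
    ((LinearMap.ker g).liftQ ψ hker)
  exact ⟨ψ', fun y ↦ hψ' (Submodule.Quotient.mk y)⟩

variable {A P : Type v} [AddCommGroup A] [Module R A] [AddCommGroup P] [Module R P]
  {G : ℕ → Type v} [∀ n, AddCommGroup (G n)] [∀ n, Module R (G n)]
  [∀ n, Module.Injective R (G n)] {δ : ∀ n, G n →ₗ[R] G (n + 1)} {d : A →ₗ[R] A}

theorem exists_extension_to_complex (hδδ : ∀ n x, δ (n + 1) (δ n x) = 0)
    (hd : Function.Exact d d) (f₀ : A →ₗ[R] G 0) (hf₀ : ∀ x, δ 0 (f₀ (d x)) = 0) :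
    ∃ f : ∀ n, A →ₗ[R] G n, f 0 = f₀ ∧ ∀ n x, f (n + 1) (d x) = δ n (f n x) := by
  have hstep (n : ℕ) (f : {f : A →ₗ[R] G n // ∀ x, δ n (f (d x)) = 0}) :
      ∃ f' : {f' : A →ₗ[R] G (n + 1) // ∀ x, δ (n + 1) (f' (d x)) = 0},
        ∀ x, f'.1 (d x) = δ n (f.1 x) := by
    obtain ⟨f', hf'⟩ := exists_comp_eq_of_exact hd (δ n ∘ₗ f.1) f.2
    refine ⟨⟨f', fun x ↦ ?_⟩, hf'⟩
    rw [hf', LinearMap.comp_apply, hδδ]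
  choose next hnext using hstep
  let f (n : ℕ) : {f : A →ₗ[R] G n // ∀ x, δ n (f (d x)) = 0} := n.rec ⟨f₀, hf₀⟩ next
  exact ⟨fun n ↦ (f n).1, rfl, fun n ↦ hnext n (f n)⟩

theorem IsFpExact.exists_cocycle_extension (hδ : IsFpExact δ)
    (hδδ : ∀ n x, δ (n + 1) (δ n x) = 0) (hd : Function.Exact d d) {s : A →ₗ[R] P}
    {π : P →ₗ[R] A} (hπs : ∀ x, π (s x) = x) {H : Set (Submodule R P)} (hH : IsHillFamily H)
    {φ : A →ₗ[R] G 0} (hφ : ∀ x, δ 0 (φ x) = 0) (hφd : ∀ x, φ (d x) = 0) :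
    ∃ h : A →ₗ[R] G 0, (∀ x, δ 0 (h x) = 0) ∧ ∀ x, h (d x) = φ x := by
  have hdd (x : A) : d (d x) = 0 := hd.apply_apply_eq_zero x
  obtain ⟨f₀, hf₀⟩ := exists_comp_eq_of_exact hd φ hφd
  obtain ⟨f, rfl, hf⟩ := exists_extension_to_complex hδδ hd f₀ fun x ↦ by rw [hf₀, hφ]
  obtain ⟨k, hk⟩ := hδ.exists_nullHomotopy (d := s ∘ₗ d ∘ₗ π) (f := fun n ↦ f (n + 1) ∘ₗ π)
    hδδ (fun x ↦ by simp [hπs, hdd]) (fun n x ↦ by simp [hπs, hf]) hH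
  refine ⟨f 0 - k 0 ∘ₗ s ∘ₗ d, fun x ↦ ?_, fun x ↦ ?_⟩
  · have hkx : f 1 (d x) = δ 0 (k 0 (s (d x))) := by simpa [hπs, hdd] using hk 0 (s (d x))
    simp [← hf, hkx]
  · simp [hf₀, hdd]

end AcyclicPeriodic

section RelativeFiltration

open Set

variable {R P Q : Type*} [Ring R] [AddCommGroup P] [Module R P] [AddCommGroup Q] [Module R Q]
  {B B' : Submodule R P}

theorem map_mapQ_map_mkQ (f : P →ₗ[R] Q) (B B' : Submodule R P) :
    (B'.map B.mkQ).map (B.mapQ (B.map f) f (B.le_comap_map f)) = (B'.map f).map (B.map f).mkQ := by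
  rw [← Submodule.map_comp, ← Submodule.map_comp, Submodule.mapQ_mkQ]

theorem mapQ_map_injective {f : P →ₗ[R] Q} (hf : Function.Injective f) (B : Submodule R P) :
    Function.Injective (B.mapQ (B.map f) f (B.le_comap_map f)) := by
  rw [← LinearMap.ker_eq_bot, Submodule.ker_mapQ, Submodule.comap_map_eq_of_injective hf,
    Submodule.mkQ_map_self]

theorem IsFpExtension.map (h : IsFpExtension B B') {f : P →ₗ[R] Q} (hf : Function.Injective f) :
    IsFpExtension (B.map f) (B'.map f) where
  le := Submodule.map_mono h.le
  finitePresentation_map := by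
    have := h.finitePresentation_map
    rw [← map_mapQ_map_mkQ]
    exact .of_equiv (M := B'.map B.mkQ) <|
      Submodule.equivMapOfInjective _ (mapQ_map_injective hf B) _

theorem map_pieceSup {C : Type*} (f : P →ₗ[R] Q) (N : C → Submodule R P) (S : Set C) :
    (pieceSup N S).map f = pieceSup (fun c ↦ (N c).map f) S := by
  simp only [pieceSup, Submodule.map_iSup]

variable {C : Type*} [LinearOrder C] {N : C → Submodule R P}

/-- A filtration with finitely presented factors from `B` to `B'`; the step with index `c` of the
filtration is generated by `B` together with all `N b` for `b ≤ c`. -/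
structure IsRelFpFiltration (B B' : Submodule R P) (N : C → Submodule R P) : Prop where
  sup_iSup_eq : B ⊔ ⨆ c, N c = B'
  fg : ∀ c, (N c).FG
  isFpExtension : ∀ c, IsFpExtension (B ⊔ pieceSup N (Iio c)) (B ⊔ pieceSup N (Iio c) ⊔ N c)

theorem IsRelFpFiltration.map (h : IsRelFpFiltration B B' N) {f : P →ₗ[R] Q}
    (hf : Function.Injective f) :
    IsRelFpFiltration (B.map f) (B'.map f) fun c ↦ (N c).map f where
  sup_iSup_eq := by rw [← h.sup_iSup_eq, Submodule.map_sup, Submodule.map_iSup]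
  fg c := (h.fg c).map f
  isFpExtension c := by
    simpa only [Submodule.map_sup, map_pieceSup] using (h.isFpExtension c).map hf

end RelativeFiltration

section SequentialFiltration

open Set

theorem wellFoundedLT_sigmaLex {ι : Type*} {C : ι → Type*} [LT ι] [WellFoundedLT ι]
    [∀ i, LT (C i)] [∀ i, WellFoundedLT (C i)] : WellFoundedLT (Σₗ i, C i) where
  wf := by
    refine Subrelation.wf ?_ <| InvImage.wf (fun a ↦ (⟨a.1, a.2⟩ : Σ' i, C i)) <|
      WellFounded.psigma_lex (wellFounded_lt (α := ι)) fun i ↦ wellFounded_lt (α := C i)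
    rintro _ _ (⟨a, b, hij⟩ | ⟨a, b, hab⟩)
    · exact .left _ _ hij
    · exact .right _ hab

variable {R P : Type*} [Ring R] [AddCommGroup P] [Module R P] {B : ℕ → Submodule R P}
  {C : ℕ → Type*} [∀ n, LinearOrder (C n)] {N : ∀ n, C n → Submodule R P}

/-- The concatenation of the filtrations `N 0`, `N 1`, … -/
def lexConcat (N : ∀ n, C n → Submodule R P) (a : Σₗ n, C n) : Submodule R P :=
  N (ofLex a).1 (ofLex a).2

theorem pieceSup_lexConcat_setOf_lt (h₀ : B 0 = ⊥)
    (h : ∀ n, IsRelFpFiltration (B n) (B (n + 1)) (N n)) (n : ℕ) :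
    pieceSup (lexConcat N) {a | (ofLex a).1 < n} = B n := by
  induction n with
  | zero => simp [pieceSup, h₀]
  | succ n ih =>
    have hset : {a : Σₗ n, C n | (ofLex a).1 < n + 1} =
        {a | (ofLex a).1 < n} ∪ range fun c ↦ toLex ⟨n, c⟩ := by
      ext ⟨m, c⟩
      refine Nat.lt_succ_iff_lt_or_eq.trans <| or_congr_right ⟨?_, ?_⟩
      · rintro rfl
        exact ⟨c, rfl⟩
      · rintro ⟨_, ⟨⟩⟩
        rfl
    rw [← (h n).sup_iSup_eq, ← ih, hset, pieceSup, iSup_union, iSup_range]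
    rfl

theorem pieceSup_lexConcat_Iio (h₀ : B 0 = ⊥)
    (h : ∀ n, IsRelFpFiltration (B n) (B (n + 1)) (N n)) (n : ℕ) (c : C n) :
    pieceSup (lexConcat N) (Iio (toLex ⟨n, c⟩)) = B n ⊔ pieceSup (N n) (Iio c) := by
  have hset : Iio (toLex ⟨n, c⟩) =
      {a : Σₗ n, C n | (ofLex a).1 < n} ∪ (fun c ↦ toLex ⟨n, c⟩) '' Iio c := by
    ext ⟨m, b⟩
    refine Sigma.Lex.lt_def.trans <| or_congr_right ⟨?_, ?_⟩
    · rintro ⟨hmn, hb⟩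
      obtain rfl : m = n := hmn
      exact ⟨b, hb, rfl⟩
    · rintro ⟨b, hb, ⟨⟩⟩
      exact ⟨rfl, hb⟩
  rw [← pieceSup_lexConcat_setOf_lt h₀ h, hset, pieceSup, iSup_union, iSup_image]
  rfl

theorem IsFpFiltration.lexConcat (h₀ : B 0 = ⊥) (htop : ⨆ n, B n = ⊤)
    (h : ∀ n, IsRelFpFiltration (B n) (B (n + 1)) (N n)) : IsFpFiltration (lexConcat N) where
  iSup_eq_top := by
    rw [eq_top_iff, ← htop]
    refine iSup_le fun n ↦ ?_
    rw [← pieceSup_lexConcat_setOf_lt h₀ h]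
    exact iSup₂_le fun a _ ↦ le_iSup _ a
  fg a := (h _).fg _
  isFpExtension := by
    rintro ⟨n, c⟩
    have := (h n).isFpExtension c
    rwa [← pieceSup_lexConcat_Iio h₀ h] at this

end SequentialFiltration

section CellAttachment

variable {R P A C : Type*} {F : C → Type*} [Ring R] [AddCommGroup P] [Module R P]
  [AddCommGroup A] [Module R A] [∀ c, AddCommGroup (F c)] [∀ c, Module R (F c)]
  {D : ∀ c, Submodule R (F c)}

section

variable [DecidableEq C]

/-- The pushout of `P` and the direct sum of the modules `F c` along the direct sum of the
submodules `D c`, that is, `P` with every `F c` glued to it along `α c : D c →ₗ[R] P`. -/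
abbrev CellAttachment (α : ∀ c, D c →ₗ[R] P) : Type _ :=
  (P × Π₀ c, F c) ⧸ LinearMap.range
    ((DFinsupp.lsum ℕ α).prod (-DFinsupp.mapRange.linearMap fun c ↦ (D c).subtype))

namespace CellAttachment

variable (α : ∀ c, D c →ₗ[R] P)

/-- The inclusion of the module that the cells are attached to. -/
def base : P →ₗ[R] CellAttachment α := Submodule.mkQ _ ∘ₗ LinearMap.inl R P _

/-- The structure map of the cell with index `c`. -/
def cell (c : C) : F c →ₗ[R] CellAttachment α :=
  Submodule.mkQ _ ∘ₗ LinearMap.inr R P _ ∘ₗ DFinsupp.lsingle c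

theorem cell_coe (c : C) (s : D c) : cell α c s = base α (α c s) := by
  refine ((Submodule.Quotient.eq _).mpr <| LinearMap.mem_range.mpr ⟨DFinsupp.single c s, ?_⟩).symm
  simp

theorem base_injective : Function.Injective (base α) := by
  refine (injective_iff_map_eq_zero _).mpr fun x hx ↦ ?_
  obtain ⟨t, ht⟩ := (Submodule.Quotient.mk_eq_zero _).mp hx
  obtain ⟨ht₁, ht₂⟩ := Prod.mk_inj.mp ht
  have ht₀ : t = 0 := by
    ext c : 2
    simpa using DFunLike.congr_fun ht₂ c
  simpa [ht₀] using ht₁.symm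

theorem range_base_sup_iSup_range_cell :
    LinearMap.range (base α) ⊔ ⨆ c, LinearMap.range (cell α c) = ⊤ := by
  simp only [base, cell, LinearMap.range_comp, ← Submodule.map_iSup, ← Submodule.map_sup,
    DFinsupp.iSup_range_lsingle, Submodule.map_top, LinearMap.sup_range_inl_inr,
    Submodule.range_mkQ]

variable {α} {π : P →ₗ[R] A} {t : ∀ c, F c →ₗ[R] A}

/-- The map out of a cell attachment given by compatible maps on the base and on the cells. -/
def desc (h : ∀ c, t c ∘ₗ (D c).subtype = π ∘ₗ α c) : CellAttachment α →ₗ[R] A :=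
  Submodule.liftQ _ (π.coprod (DFinsupp.lsum ℕ t)) <| by
    rw [LinearMap.range_le_ker_iff]
    ext c s
    simpa [add_neg_eq_zero] using (LinearMap.congr_fun (h c) s).symm

theorem desc_base (h : ∀ c, t c ∘ₗ (D c).subtype = π ∘ₗ α c) (x : P) : desc h (base α x) = π x := by
  simp [desc, base]

theorem desc_cell (h : ∀ c, t c ∘ₗ (D c).subtype = π ∘ₗ α c) (c : C) (v : F c) :
    desc h (cell α c v) = t c v := by
  simp [desc, cell]

variable (α)

theorem comap_cell {S : Set C} {c : C} (hc : c ∉ S) :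
    (LinearMap.range (base α) ⊔ pieceSup (fun c ↦ LinearMap.range (cell α c)) S).comap
      (cell α c) = D c := by
  apply le_antisymm
  · let t : ∀ c', F c' →ₗ[R] F c ⧸ D c :=
      Pi.single (M := fun c' ↦ F c' →ₗ[R] F c ⧸ D c) c (D c).mkQ
    have ht : ∀ c', t c' ∘ₗ (D c').subtype = 0 ∘ₗ α c' := by
      intro c'
      obtain rfl | hne := eq_or_ne c' c
      · ext s
        simp [t]
      · simp [t, hne]
    have hker : LinearMap.range (base α) ⊔ pieceSup (fun c ↦ LinearMap.range (cell α c)) S ≤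
        LinearMap.ker (desc ht) := by
      refine sup_le ?_ (iSup₂_le fun c' hc' ↦ ?_)
      · rintro _ ⟨x, rfl⟩
        exact desc_base ht x
      · rintro _ ⟨v, rfl⟩
        rw [LinearMap.mem_ker, desc_cell]
        simp [t, ne_of_mem_of_not_mem hc' hc]
    intro v hv
    have hv₀ : desc ht (cell α c v) = 0 := hker hv
    rw [desc_cell] at hv₀
    simpa [t] using hv₀
  · exact fun s hs ↦ Submodule.mem_sup_left ⟨α c ⟨s, hs⟩, (cell_coe α c ⟨s, hs⟩).symm⟩

end CellAttachment

end

variable [LinearOrder C] [∀ c, Module.FinitePresentation R (F c)]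

theorem CellAttachment.isRelFpFiltration (α : ∀ c, D c →ₗ[R] P) (hD : ∀ c, (D c).FG) :
    IsRelFpFiltration (LinearMap.range (base α)) ⊤ fun c ↦ LinearMap.range (cell α c) where
  sup_iSup_eq := range_base_sup_iSup_range_cell α
  fg c := Module.Finite.iff_fg.mp inferInstance
  isFpExtension c := isFpExtension_sup_range _ <| by
    rw [comap_cell α Set.self_notMem_Iio]
    exact hD c

end CellAttachment

section LiftingProblem

variable {R P A : Type*} [Ring R] [AddCommGroup P] [Module R P] [AddCommGroup A] [Module R A]
  (π : P →ₗ[R] A)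

/-- A commutative square from the inclusion of a finitely generated submodule of a finite free
module to `π`. -/
structure LiftingProblem where
  rank : ℕ
  relations : Submodule R (Fin rank → R)
  fg : relations.FG
  top : relations →ₗ[R] P
  bottom : (Fin rank → R) →ₗ[R] A
  comm : bottom ∘ₗ relations.subtype = π ∘ₗ top

/-- `π` has the right lifting property against the inclusions of finitely generated submodules
into finite free modules. -/
def HasFpLiftings : Prop :=
  ∀ p : LiftingProblem π, ∃ l : (Fin p.rank → R) →ₗ[R] P,
    l ∘ₗ p.relations.subtype = p.top ∧ π ∘ₗ l = p.bottom

/-- An arbitrary well-ordering, along which the cells of `attachLifts` are attached. -/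
noncomputable instance : LinearOrder (LiftingProblem π) :=
  (exists_wellFoundedLT _).choose

instance : WellFoundedLT (LiftingProblem π) :=
  (exists_wellFoundedLT _).choose_spec

variable {π}

theorem HasFpLiftings.surjective (hπ : HasFpLiftings π) : Function.Surjective π := by
  intro a
  let t : (Fin 1 → R) →ₗ[R] A := LinearMap.toSpanSingleton R A a ∘ₗ LinearMap.proj 0
  obtain ⟨l, -, hl⟩ := hπ ⟨1, ⊥, Submodule.fg_bot, 0, t, Subsingleton.elim _ _⟩
  exact ⟨l 1, by simpa [t] using LinearMap.congr_fun hl 1⟩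

theorem HasFpLiftings.exists_extension_ker (hπ : HasFpLiftings π) {k : ℕ}
    {S : Submodule R (Fin k → R)} (hS : S.FG) (φ : S →ₗ[R] LinearMap.ker π) :
    ∃ ψ : (Fin k → R) →ₗ[R] LinearMap.ker π, ψ ∘ₗ S.subtype = φ := by
  obtain ⟨l, hl, hl₀⟩ := hπ ⟨k, S, hS, (LinearMap.ker π).subtype ∘ₗ φ, 0, by
    ext s
    exact (φ s).2.symm⟩
  exact ⟨l.codRestrict _ (LinearMap.congr_fun hl₀), LinearMap.ext fun s ↦
    Subtype.ext (LinearMap.congr_fun hl s)⟩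

end LiftingProblem

section FpCover

theorem mono_map_of_mono_map_succ {𝒞 : Type*} [Category* 𝒞] {F : ℕ ⥤ 𝒞}
    (hF : ∀ n : ℕ, Mono (F.map (homOfLE n.le_succ))) {m n : ℕ} (hmn : m ≤ n) :
    Mono (F.map (homOfLE hmn)) := by
  induction n, hmn using Nat.le_induction with
  | base => exact inferInstanceAs (Mono (F.map (𝟙 m)))
  | succ n hmn ih =>
    have := hF n
    rw [← homOfLE_comp hmn n.le_succ, F.map_comp]
    infer_instance

variable {R : Type u} [Ring R] {A : ModuleCat.{u} R}

/-- The cell attachment that solves all lifting problems for `X` at once. -/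
noncomputable def attachLifts (X : Over A) : Over A :=
  Over.mk (Y := ModuleCat.of R (CellAttachment fun p : LiftingProblem X.hom.hom ↦ p.top)) <|
    ModuleCat.ofHom (CellAttachment.desc fun p ↦ p.comm)

/-- The inclusion into `attachLifts X`. -/
noncomputable def toAttachLifts (X : Over A) : X ⟶ attachLifts X :=
  Over.homMk (ModuleCat.ofHom (CellAttachment.base _)) <| by
    ext x
    exact CellAttachment.desc_base (fun p : LiftingProblem X.hom.hom ↦ p.comm) x

variable (A)

/-- The iterates of `attachLifts`, starting from the zero module. -/
noncomputable def coverStage : ℕ → Over A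
  | 0 => Over.mk (0 : ModuleCat.of R PUnit ⟶ A)
  | n + 1 => attachLifts (coverStage n)

/-- The sequence formed by the stages `coverStage A n`. -/
noncomputable def coverTower : ℕ ⥤ Over A :=
  Functor.ofSequence fun n ↦ toAttachLifts (coverStage A n)

/-- The union of the stages `coverStage A n`. It is filtered by finitely presented modules, and
its structure map to `A` has liftings, by the small object argument. -/
noncomputable def fpCover : Over A := colimit (coverTower A)

/-- The inclusion of a stage into `fpCover A`. -/
noncomputable def coverι (n : ℕ) : (coverStage A n).left →ₗ[R] (fpCover A).left :=
  (colimit.ι (coverTower A) n).left.hom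

theorem coverTower_map_succ (n : ℕ) :
    (coverTower A).map (homOfLE n.le_succ) = toAttachLifts (coverStage A n) :=
  Functor.ofSequence_map_homOfLE_succ _ n

theorem coverι_comp_base (n : ℕ) :
    coverι A (n + 1) ∘ₗ CellAttachment.base _ = coverι A n := by
  have h := colimit.w (coverTower A) (homOfLE n.le_succ)
  rw [coverTower_map_succ] at h
  exact congr(($h).left.hom)

theorem hom_comp_coverι (n : ℕ) :
    (fpCover A).hom.hom ∘ₗ coverι A n = (coverStage A n).hom.hom :=
  congr(ModuleCat.Hom.hom $(Over.w (colimit.ι (coverTower A) n)))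

/-- The underlying module of `fpCover A` is the colimit of those of the stages. -/
noncomputable def isColimitFpCover :
    IsColimit ((Over.forget A).mapCocone (colimit.cocone (coverTower A))) :=
  isColimitOfPreserves _ (colimit.isColimit _)

theorem iSup_range_coverι : ⨆ n, LinearMap.range (coverι A n) = ⊤ := by
  set U := ⨆ n, LinearMap.range (coverι A n)
  have hU : ModuleCat.ofHom U.mkQ = 0 := (isColimitFpCover A).hom_ext fun n ↦ by
    ext x
    exact (Submodule.Quotient.mk_eq_zero U).mpr <| Submodule.mem_iSup_of_mem n ⟨x, rfl⟩
  rw [← U.ker_mkQ]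
  exact LinearMap.ker_eq_top.mpr congr(($hU).hom)

theorem coverι_injective (n : ℕ) : Function.Injective (coverι A n) := by
  have : AB5OfSize.{0, 0} (ModuleCat.{u} R) := AB5OfSize_shrink.{0, 0, u, u} (ModuleCat.{u} R)
  have : ∀ (j j' : ℕ) (φ : j ⟶ j'), Mono ((coverTower A ⋙ Over.forget A).map φ) := by
    refine fun _ _ φ ↦ mono_map_of_mono_map_succ (fun n ↦ ?_) (leOfHom φ)
    refine (ModuleCat.mono_iff_injective _).mpr ?_
    rw [Functor.comp_map, coverTower_map_succ]
    exact CellAttachment.base_injective _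
  exact (ModuleCat.mono_iff_injective _).mp <|
    IsColimit.mono_ι_app_of_isFiltered (isColimitFpCover A) n

theorem isRelFpFiltration_range_coverι (n : ℕ) :
    IsRelFpFiltration (LinearMap.range (coverι A n)) (LinearMap.range (coverι A (n + 1)))
      fun p ↦ (LinearMap.range (CellAttachment.cell
        (fun p : LiftingProblem (coverStage A n).hom.hom ↦ p.top) p)).map (coverι A (n + 1)) := by
  have h_range : LinearMap.range (coverι A n) =
      (LinearMap.range (CellAttachment.base _)).map (coverι A (n + 1)) := by
    rw [← coverι_comp_base A n]
    exact LinearMap.range_comp _ _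
  rw [h_range, LinearMap.range_eq_map (coverι A (n + 1))]
  exact (CellAttachment.isRelFpFiltration _ LiftingProblem.fg).map (coverι_injective A (n + 1))

theorem exists_isHillFamily_fpCover :
    ∃ H : Set (Submodule R (fpCover A).left), IsHillFamily H := by
  have h₀ : LinearMap.range (coverι A 0) = ⊥ := by
    rw [LinearMap.range_eq_bot]
    ext x
    rw [Subsingleton.elim (α := PUnit) x 0]
    exact map_zero (coverι A 0)
  have := wellFoundedLT_sigmaLex (C := fun n ↦ LiftingProblem (coverStage A n).hom.hom)
  exact ⟨_, (IsFpFiltration.lexConcat h₀ (iSup_range_coverι A)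
    (isRelFpFiltration_range_coverι A)).isHillFamily⟩

theorem exists_comp_coverι_eq {T : Type*} [AddCommGroup T] [Module R T] [Module.Finite R T]
    (f : T →ₗ[R] (fpCover A).left) :
    ∃ n, ∃ f' : T →ₗ[R] (coverStage A n).left, coverι A n ∘ₗ f' = f := by
  have h_mono : Monotone fun n ↦ LinearMap.range (coverι A n) :=
    monotone_nat_of_le_succ fun n ↦
      le_sup_left.trans (isRelFpFiltration_range_coverι A n).sup_iSup_eq.le
  have h_le : LinearMap.range f ≤ ⨆ n, LinearMap.range (coverι A n) :=
    le_top.trans (iSup_range_coverι A).ge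
  obtain ⟨_, ⟨n, rfl⟩, hn⟩ := (Submodule.fg_iff_compact _).mp
    (Module.Finite.iff_fg.mp inferInstance) _ _ (Set.range_nonempty _)
    h_mono.directed_le.directedOn_range isLUB_iSup h_le
  let e := LinearEquiv.ofInjective (coverι A n) (coverι_injective A n)
  let f' := f.codRestrict _ fun x ↦ hn (f.mem_range_self x)
  exact ⟨n, e.symm ∘ₗ f', LinearMap.ext fun x ↦ congrArg Subtype.val (e.apply_symm_apply (f' x))⟩

theorem hasFpLiftings_fpCover : HasFpLiftings (fpCover A).hom.hom := by
  intro p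
  have : Module.Finite R p.relations := Module.Finite.iff_fg.mpr p.fg
  obtain ⟨n, α, hα⟩ := exists_comp_coverι_eq A p.top
  let q : LiftingProblem (coverStage A n).hom.hom :=
    { p with
      top := α
      comm := by rw [← hom_comp_coverι, LinearMap.comp_assoc, hα, p.comm] }
  let top (q : LiftingProblem (coverStage A n).hom.hom) := q.top
  let l : (Fin p.rank → R) →ₗ[R] (coverStage A (n + 1)).left := CellAttachment.cell top q
  refine ⟨coverι A (n + 1) ∘ₗ l, ?_, ?_⟩
  · rw [← hα, ← coverι_comp_base A n]
    ext s
    exact congrArg (coverι A (n + 1)) (CellAttachment.cell_coe top q s)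
  · rw [← LinearMap.comp_assoc, hom_comp_coverι]
    exact LinearMap.ext (CellAttachment.desc_cell (α := top) LiftingProblem.comm q)

end FpCover

section Ext

open Abelian

universe w

section

variable {𝒞 : Type*} [Category* 𝒞] [Abelian 𝒞] [HasExt.{w} 𝒞] {S : ShortComplex 𝒞}

theorem subsingleton_ext_one_X₃ (hS : S.ShortExact) {J : 𝒞} [Subsingleton (Ext S.X₂ J 1)]
    (hJ : ∀ φ : S.X₁ ⟶ J, ∃ ψ : S.X₂ ⟶ J, S.f ≫ ψ = φ) : Subsingleton (Ext S.X₃ J 1) := by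
  refine subsingleton_of_forall_eq 0 fun x ↦ ?_
  obtain ⟨y, rfl⟩ := Ext.contravariant_sequence_exact₃ hS J x (n₀ := 0)
    (Subsingleton.elim _ _) rfl
  obtain ⟨φ, rfl⟩ := (Ext.mk₀_bijective S.X₁ J).surjective y
  obtain ⟨ψ, rfl⟩ := hJ φ
  rw [← Ext.mk₀_comp_mk₀]
  exact hS.extClass_comp_assoc _

theorem exists_comp_g_eq (hS : S.ShortExact) {T : 𝒞} [Subsingleton (Ext T S.X₁ 1)]
    (φ : T ⟶ S.X₃) : ∃ ψ : T ⟶ S.X₂, ψ ≫ S.g = φ := by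
  obtain ⟨y, hy⟩ := Ext.covariant_sequence_exact₃ T hS (Ext.mk₀ φ) (n₁ := 1) rfl
    (Subsingleton.elim _ _)
  obtain ⟨ψ, rfl⟩ := (Ext.mk₀_bijective T S.X₂).surjective y
  exact ⟨ψ, (Ext.mk₀_bijective T S.X₃).injective (by rw [← hy, Ext.mk₀_comp_mk₀])⟩

end

variable {R : Type u} [Ring R] [HasExt.{w} (ModuleCat.{u} R)]

theorem subsingleton_ext_of_finitePresentation {K : ModuleCat.{u} R}
    (hK : ∀ (k : ℕ) (S : Submodule R (Fin k → R)), S.FG → ∀ φ : S →ₗ[R] K,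
      ∃ ψ : (Fin k → R) →ₗ[R] K, ψ ∘ₗ S.subtype = φ)
    (T : ModuleCat.{u} R) [Module.FinitePresentation R T] : Subsingleton (Ext T K 1) := by
  obtain ⟨k, π, hπ⟩ := Module.Finite.exists_fin' R T
  have : Subsingleton (Ext (ModuleCat.of R (Fin k → R)) K 1) :=
    subsingleton_of_forall_eq 0 Ext.eq_zero_of_projective
  refine subsingleton_ext_one_X₃ (LinearMap.shortExact_shortComplexKer hπ) fun φ ↦ ?_
  obtain ⟨ψ, hψ⟩ := hK k _ (Module.FinitePresentation.fg_ker π hπ) φ.hom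
  exact ⟨ModuleCat.ofHom ψ, ModuleCat.hom_ext hψ⟩

theorem isFpExact_injectiveResolution {J : ModuleCat.{u} R} (I : InjectiveResolution J)
    (hJ : ∀ T : ModuleCat.{u} R, Module.FinitePresentation R T →
      ∀ n, 1 ≤ n → Subsingleton (Ext T J n)) :
    IsFpExact fun n ↦ (I.cocomplex.d n (n + 1)).hom := by
  intro T _ _ hT n g hg
  have := hJ (.of R T) hT (n + 1) n.succ_pos
  have hg' : ModuleCat.ofHom g ≫ I.cocomplex.d (n + 1) (n + 2) = 0 := ModuleCat.hom_ext hg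
  obtain ⟨k, hk⟩ := (I.extMk_eq_zero_iff (ModuleCat.ofHom g) (n + 2) rfl hg' n rfl).mp
    (Subsingleton.elim _ _)
  exact ⟨k.hom, congr(ModuleCat.Hom.hom $hk)⟩

end Ext

section FpProjective

open Stmt0

variable {R : Type u} [Ring R] {A J : RightMod R}

theorem fpInjective_ker_fpCover (A : RightMod R) :
    FpInjective R (.of Rᵐᵒᵖ (LinearMap.ker (fpCover A).hom.hom)) :=
  fun T _ ↦ subsingleton_ext_of_finitePresentation
    (fun _ _ hS φ ↦ (hasFpLiftings_fpCover A).exists_extension_ker hS φ) T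

theorem exists_section_fpCover (hA : FpProjective R A) :
    ∃ s : A →ₗ[Rᵐᵒᵖ] (fpCover A).left, ∀ x, (fpCover A).hom.hom (s x) = x := by
  have hS := LinearMap.shortExact_shortComplexKer (hasFpLiftings_fpCover A).surjective
  have := hA _ (fpInjective_ker_fpCover A)
  obtain ⟨s, hs⟩ := exists_comp_g_eq hS (𝟙 A)
  exact ⟨s.hom, fun x ↦ congr($hs x)⟩

theorem exists_extension_of_exact (hA : FpProjective R A) (hJ : StronglyFpInjective R J)
    {d : A ⟶ A} (hd : Function.Exact d d) {φ : A ⟶ J} (hφ : d ≫ φ = 0) :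
    ∃ h : A ⟶ J, d ≫ h = φ := by
  obtain ⟨s, hs⟩ := exists_section_fpCover hA
  obtain ⟨H, hH⟩ := exists_isHillFamily_fpCover A
  let I := InjectiveResolution.of J
  have (n : ℕ) : Module.Injective Rᵐᵒᵖ (I.cocomplex.X n) :=
    Module.injective_module_of_injective_object _ _ (inj := I.injective n)
  let ι : J ⟶ I.cocomplex.X 0 := I.ι.f 0
  have hι : ι ≫ I.cocomplex.d 0 1 = 0 := I.ι_f_zero_comp_complex_d
  have hφι : d ≫ φ ≫ ι = 0 := by rw [reassoc_of% hφ, zero_comp]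
  have : Mono ι := inferInstanceAs (Mono (I.ι.f 0))
  obtain ⟨k, hk, hkd⟩ := (isFpExact_injectiveResolution I hJ).exists_cocycle_extension
    (fun n x ↦ congr($(I.complex_d_comp n) x)) hd hs hH (φ := (φ ≫ ι).hom)
    (fun x ↦ congr($hι (φ x))) (fun x ↦ congr($hφι x))
  obtain ⟨(h : A ⟶ J), (hh : h ≫ ι = ModuleCat.ofHom k)⟩ := KernelFork.IsLimit.lift'
    I.isLimitKernelFork (ModuleCat.ofHom k) (ModuleCat.hom_ext <| LinearMap.ext hk)
  refine ⟨h, (cancel_mono ι).mp ?_⟩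
  rw [Category.assoc, hh]
  exact ModuleCat.hom_ext <| LinearMap.ext hkd

end FpProjective

end FpPeriodicity

namespace Stmt0

/-- Any `FpProj`-periodic right `R`-module is weakly fp-projective. -/
theorem fpProjPeriodic_weaklyFpProjective {R : Type u} [Ring R] (M : RightMod R)
    (h : ∃ (A : RightMod R) (_ : FpProjective R A) (f : M ⟶ A) (g : A ⟶ M)
      (zero : f ≫ g = 0), (ShortComplex.mk f g zero).ShortExact) :
    WeaklyFpProjective R M := by
  obtain ⟨A, hA, f, g, zero, hS⟩ := h
  intro J hJ
  have := hS.epi_g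
  have : Subsingleton (Abelian.Ext A J 1) := hA J fun T hT ↦ hJ T hT 1 le_rfl
  have hfg : Function.Exact f g :=
    (ShortComplex.ShortExact.moduleCat_exact_iff_function_exact _).mp hS.exact
  have hgf : Function.Exact (g ≫ f) (g ≫ f) :=
    hS.moduleCat_injective_f.comp_exact_iff_exact.mpr <|
      hS.moduleCat_surjective_g.comp_exact_iff_exact.mpr hfg
  refine FpPeriodicity.subsingleton_ext_one_X₃ hS fun (φ : M ⟶ J) ↦ ?_
  obtain ⟨ψ, hψ⟩ := FpPeriodicity.exists_extension_of_exact hA hJ hgf (φ := g ≫ φ)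
    (by simp [reassoc_of% zero])
  exact ⟨ψ, by rwa [Category.assoc, cancel_epi] at hψ⟩

end Stmt0
end

section
/- Let R be an associative ring and let P^• be an (unbounded) acyclic complex of right R-modules all of whose terms P^n are fp-projective. Then every module of cocycles Z^n = ker(P^n → P^{n+1}) of the complex P^• is weakly fp-projective. -/
/-!
STATEMENT 1: Let R be an associative ring and let P^• be an (unbounded) acyclic
complex of right R-modules all of whose terms are fp-projective. Then every
module of cocycles Z^n = ker(P^n → P^{n+1}) is weakly fp-projective.

Right `R`-modules are formalized as modules over the opposite ring `Rᵐᵒᵖ`.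
-/

open CategoryTheory Limits

universe u

namespace Stmt1

variable (R : Type u) [Ring R]

/-- The category of right `R`-modules. -/
abbrev RightMod := ModuleCat.{u} Rᵐᵒᵖ

instance : HasExt.{u + 1} (RightMod R) := by
  letI := HasDerivedCategory.standard (RightMod R)
  exact hasExt_of_hasDerivedCategory _

/-- A right `R`-module `J` is fp-injective if `Ext¹(T, J) = 0` for every
finitely presented right `R`-module `T`. -/
def FpInjective (J : RightMod R) : Prop :=
  ∀ T : RightMod R, Module.FinitePresentation Rᵐᵒᵖ T →
    Subsingleton (Abelian.Ext T J 1)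

/-- A right `R`-module `J` is strongly fp-injective if `Extⁿ(T, J) = 0` for
every finitely presented right `R`-module `T` and every `n ≥ 1`. -/
def StronglyFpInjective (J : RightMod R) : Prop :=
  ∀ T : RightMod R, Module.FinitePresentation Rᵐᵒᵖ T →
    ∀ n : ℕ, 1 ≤ n → Subsingleton (Abelian.Ext T J n)

/-- A right `R`-module `P` is fp-projective if `Ext¹(P, J) = 0` for every
fp-injective right `R`-module `J`. -/
def FpProjective (P : RightMod R) : Prop :=
  ∀ J : RightMod R, FpInjective R J → Subsingleton (Abelian.Ext P J 1)

/-- A right `R`-module `P` is weakly fp-projective if `Ext¹(P, J) = 0` for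
every strongly fp-injective right `R`-module `J`. -/
def WeaklyFpProjective (P : RightMod R) : Prop :=
  ∀ J : RightMod R, StronglyFpInjective R J → Subsingleton (Abelian.Ext P J 1)

/-!
Let `P` be an acyclic complex of fp-projective modules, `Z` its module of cocycles in degree `n`,
and `J` a strongly fp-injective module with injective resolution `I`. A class in `Ext¹(Z, J)` is
represented by a cocycle `Z ⟶ I¹`, which extends along the exact complex `Pⁿ ⟶ Pⁿ⁺¹ ⟶ ⋯` to a chain
map into `I¹ ⟶ I² ⟶ ⋯`. The class vanishes as soon as this chain map is null homotopic.

To find the homotopy, write each `Pⁱ` as a direct summand of a module filtered by finitely presented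
modules. By the Hill lemma such a filtration gives so many submodules that a partial null homotopy,
defined on a subcomplex of these, extends to a larger one with a finitely presented quotient in each
degree. There the obstruction vanishes, because `Hom(T, I)` is exact in positive degrees for every
finitely presented `T`; Zorn's lemma concludes.
-/

section RelativeFinitePresentation

variable {A : Type u} [Ring A] {M : Type u} [AddCommGroup M] [Module A M] {U V W N : Submodule A M}

/-- For submodules `U` and `V` of a module, the subquotient `V / (U ⊓ V)` is finitely presented.
The submodule `U` need not be contained in `V`. -/
def RelFinitePresentation (U V : Submodule A M) : Prop :=
  Module.FinitePresentation A (V ⧸ U.submoduleOf V)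

lemma relFinitePresentation_iff_map_mkQ :
    RelFinitePresentation U V ↔ Module.FinitePresentation A (V.map U.mkQ) := by
  have hker : LinearMap.ker (U.mkQ ∘ₗ V.subtype) = U.submoduleOf V := by
    rw [LinearMap.ker_comp, Submodule.ker_mkQ, Submodule.submoduleOf]
  have hrange : LinearMap.range (U.mkQ ∘ₗ V.subtype) = V.map U.mkQ := by
    rw [LinearMap.range_comp, Submodule.range_subtype]
  let e := (Submodule.quotEquivOfEq _ _ hker.symm).trans <|
    (LinearMap.quotKerEquivRange _).trans (LinearEquiv.ofEq _ _ hrange)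
  exact ⟨fun (_ : Module.FinitePresentation A (V ⧸ U.submoduleOf V)) => .of_equiv e,
    fun _ => .of_equiv e.symm⟩

namespace RelFinitePresentation

lemma refl (U : Submodule A M) : RelFinitePresentation U U := by
  rw [relFinitePresentation_iff_map_mkQ, Submodule.mkQ_map_self]
  infer_instance

lemma left_sup (h : RelFinitePresentation U N) : RelFinitePresentation U (U ⊔ N) := by
  rw [relFinitePresentation_iff_map_mkQ] at h ⊢
  rwa [Submodule.map_sup, Submodule.mkQ_map_self, bot_sup_eq]

lemma of_inf_eq {U' : Submodule A M} (h : RelFinitePresentation U N) (hU : U ⊓ N = U' ⊓ N) :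
    RelFinitePresentation U' N := by
  have : U.submoduleOf N = U'.submoduleOf N := by
    simpa [Submodule.submoduleOf] using congrArg (Submodule.comap N.subtype) hU
  rwa [RelFinitePresentation, ← this]

lemma of_range {E : Type u} [AddCommGroup E] [Module A E] [Module.FinitePresentation A E]
    (g : E →ₗ[A] M) (hg : (U.comap g).FG) :
    RelFinitePresentation U (LinearMap.range g) := by
  rw [relFinitePresentation_iff_map_mkQ, ← LinearMap.range_comp]
  have hker : (LinearMap.ker (U.mkQ ∘ₗ g)).FG := by
    rwa [LinearMap.ker_comp, Submodule.ker_mkQ]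
  have := Module.finitePresentation_of_surjective (LinearMap.rangeRestrict (U.mkQ ∘ₗ g))
    (LinearMap.surjective_rangeRestrict _) (by rwa [LinearMap.ker_rangeRestrict])
  exact this

lemma fg_inf (h : RelFinitePresentation U N) (hN : N.FG) : (U ⊓ N).FG := by
  have : Module.FinitePresentation A (N ⧸ U.submoduleOf N) := h
  have : Module.Finite A N := Module.Finite.iff_fg.2 hN
  have hfg := Module.FinitePresentation.fg_ker (U.submoduleOf N).mkQ (Submodule.mkQ_surjective _)
  rw [Submodule.ker_mkQ] at hfg
  simpa [Submodule.submoduleOf, inf_comm] using hfg.map N.subtype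

lemma exists_fg_sup_eq (h : RelFinitePresentation U V) (hUV : U ≤ V) :
    ∃ N : Submodule A M, N.FG ∧ U ⊔ N = V := by
  have : Module.FinitePresentation A (V.map U.mkQ) := relFinitePresentation_iff_map_mkQ.1 h
  obtain ⟨s, hs⟩ := Module.Finite.iff_fg.1 (inferInstance : Module.Finite A (V.map U.mkQ))
  have hsV : (s : Set (M ⧸ U)) ⊆ U.mkQ '' V := by
    rw [← Submodule.map_coe, ← hs]
    exact Submodule.subset_span
  classical
  obtain ⟨t, -, rfl⟩ := Finset.subset_set_image_iff.1 hsV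
  refine ⟨Submodule.span A t, ⟨t, rfl⟩, ?_⟩
  rw [Finset.coe_image, Submodule.span_image] at hs
  have := congrArg (Submodule.comap U.mkQ) hs
  rwa [Submodule.comap_map_mkQ, Submodule.comap_map_mkQ, sup_eq_right.2 hUV] at this

lemma trans (hUV : U ≤ V) (hVW : V ≤ W) (h₁ : RelFinitePresentation U V)
    (h₂ : RelFinitePresentation V W) : RelFinitePresentation U W := by
  rw [relFinitePresentation_iff_map_mkQ] at h₁ h₂ ⊢
  have hmap : (W.map U.mkQ).map (Submodule.factor hUV) = W.map V.mkQ := by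
    rw [← Submodule.map_comp, Submodule.factor_comp_mk]
  let l : W.map U.mkQ →ₗ[A] W.map V.mkQ :=
    (Submodule.factor hUV).restrict fun x hx => hmap ▸ Submodule.mem_map_of_mem hx
  have hl : Function.Surjective l := by
    rintro ⟨y, hy⟩
    rw [← hmap] at hy
    obtain ⟨x, hx, rfl⟩ := hy
    exact ⟨⟨x, hx⟩, rfl⟩
  have hker : LinearMap.ker l = (V.map U.mkQ).submoduleOf (W.map U.mkQ) := by
    rw [LinearMap.ker_restrict, Submodule.factor, Submodule.ker_mapQ,
      Submodule.comap_id, Submodule.submoduleOf]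
  have : Module.FinitePresentation A (LinearMap.ker l) := by
    rw [hker]
    exact .of_equiv (R := A) (M := V.map U.mkQ) (N := (V.map U.mkQ).submoduleOf (W.map U.mkQ))
      (Submodule.submoduleOfEquivOfLe (Submodule.map_mono hVW)).symm
  exact Module.finitePresentation_of_ker l hl

end RelFinitePresentation

end RelativeFinitePresentation

/-- A family of submodules as provided by the Hill lemma for a module filtered by finitely
presented modules: it is closed under arbitrary sums, and each of its members can be enlarged
inside the family, by a finitely presented quotient, so as to contain any finitely generated
submodule. -/
structure IsHillFamily {A : Type u} [Ring A] {F : Type u} [AddCommGroup F] [Module A F]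
    (𝓗 : Set (Submodule A F)) : Prop where
  sSup_mem : ∀ 𝓢 ⊆ 𝓗, sSup 𝓢 ∈ 𝓗
  exists_le : ∀ U ∈ 𝓗, ∀ K : Submodule A F, K.FG →
    ∃ V ∈ 𝓗, U ≤ V ∧ K ≤ V ∧ RelFinitePresentation U V

section HillLemma

variable {A : Type u} [Ring A] {F : Type u} [AddCommGroup F] [Module A F]
variable {ι : Type*} (N : ι → Submodule A F)

/-- The sum of the submodules `N b` over the indices `b` in `S`. -/
def partialSum (S : Set ι) : Submodule A F := ⨆ b ∈ S, N b

variable {N}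

lemma le_partialSum {S : Set ι} {b : ι} (hb : b ∈ S) : N b ≤ partialSum N S :=
  le_biSup N hb

lemma partialSum_mono {S T : Set ι} (h : S ⊆ T) : partialSum N S ≤ partialSum N T :=
  biSup_mono h

lemma partialSum_insert (a : ι) (S : Set ι) :
    partialSum N (insert a S) = N a ⊔ partialSum N S :=
  iSup_insert

lemma partialSum_sUnion (𝓢 : Set (Set ι)) :
    partialSum N (⋃₀ 𝓢) = ⨆ S ∈ 𝓢, partialSum N S := by
  simp only [partialSum, Set.mem_sUnion, iSup_exists, iSup_and]
  rw [iSup_comm]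
  exact iSup_congr fun S => iSup_comm

lemma exists_finset_le_partialSum {S : Set ι} {K : Submodule A F} (hK : K.FG)
    (h : K ≤ partialSum N S) : ∃ t : Finset ι, ↑t ⊆ S ∧ K ≤ partialSum N t := by
  classical
  rw [partialSum, iSup_subtype'] at h
  obtain ⟨t, ht⟩ :=
    CompleteLattice.IsCompactElement.exists_finset_of_le_iSup _
      ((Submodule.fg_iff_compact K).1 hK) _ h
  refine ⟨t.image Subtype.val, by simp, ht.trans (iSup₂_le fun b hb => le_partialSum ?_)⟩
  simpa using hb

variable [LinearOrder ι]

lemma eq_zero_or_exists_mem_partialSum_Iic {S : Set ι} {x : F} (hx : x ∈ partialSum N S) :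
    x = 0 ∨ ∃ b ∈ S, x ∈ partialSum N (S ∩ Set.Iic b) := by
  rw [← Submodule.span_singleton_le_iff_mem] at hx
  obtain ⟨t, htS, hxt⟩ := exists_finset_le_partialSum (Submodule.fg_span_singleton x) hx
  rw [Submodule.span_singleton_le_iff_mem] at hxt
  rcases t.eq_empty_or_nonempty with rfl | hne
  · exact .inl (by simpa [partialSum] using hxt)
  · exact .inr ⟨t.max' hne, htS (t.max'_mem hne),
      partialSum_mono (Set.subset_inter htS fun b hb => t.le_max' b hb) hxt⟩

variable (N) in
/-- A set `S` of indices is closed if, for every `a ∈ S`, the part of `N a` lying in the sum of the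
earlier `N b` already lies in the sum of those with `b ∈ S`. -/
def HillClosed (S : Set ι) : Prop :=
  ∀ a ∈ S, N a ⊓ partialSum N (Set.Iio a) ≤ partialSum N (S ∩ Set.Iio a)

namespace HillClosed

lemma sUnion {𝓢 : Set (Set ι)} (h : ∀ S ∈ 𝓢, HillClosed N S) : HillClosed N (⋃₀ 𝓢) := by
  rintro a ⟨S, hS, ha⟩
  exact (h S hS a ha).trans
    (partialSum_mono (Set.inter_subset_inter_left _ (Set.subset_sUnion_of_mem hS)))

lemma union {S T : Set ι} (hS : HillClosed N S) (hT : HillClosed N T) : HillClosed N (S ∪ T) := by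
  rw [← Set.sUnion_pair]
  exact sUnion (by simp [hS, hT])

lemma of_insert {a : ι} {S : Set ι} (h : HillClosed N (insert a S)) (ha : ∀ b ∈ S, b < a) :
    HillClosed N S := by
  intro b hb
  refine (h b (.inr hb)).trans (partialSum_mono ?_)
  rintro c ⟨rfl | hc, hcb⟩
  · exact absurd hcb (ha b hb).not_gt
  · exact ⟨hc, hcb⟩

variable [WellFoundedLT ι]

lemma inf_partialSum_le {S : Set ι} (hS : HillClosed N S) {D : Set ι} (hD : IsLowerSet D) :
    partialSum N S ⊓ partialSum N D ≤ partialSum N (S ∩ D) := by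
  suffices ∀ c, ∀ x ∈ partialSum N (S ∩ Set.Iic c), x ∈ partialSum N D →
      x ∈ partialSum N (S ∩ D) by
    rintro x ⟨hxS, hxD⟩
    obtain rfl | ⟨c, -, hxc⟩ := eq_zero_or_exists_mem_partialSum_Iic hxS
    · exact zero_mem _
    · exact this c x hxc hxD
  intro c
  induction c using WellFoundedLT.induction with
  | ind c ih =>
    intro x hxc hxD
    by_cases hcD : c ∈ D
    · exact partialSum_mono (Set.inter_subset_inter_right _ fun b hb => hD hb hcD) hxc
    have hDc : D ⊆ Set.Iio c := fun b hb => not_le.1 fun hcb => hcD (hD hcb hb)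
    have hx : x ∈ partialSum N (S ∩ Set.Iio c) := by
      by_cases hcS : c ∈ S
      · rw [← Set.Iio_insert, Set.inter_insert_of_mem hcS, partialSum_insert] at hxc
        obtain ⟨y, hy, z, hz, rfl⟩ := Submodule.mem_sup.1 hxc
        have hyc : y ∈ partialSum N (Set.Iio c) := by
          simpa using sub_mem (partialSum_mono hDc hxD) (partialSum_mono Set.inter_subset_right hz)
        exact add_mem (hS c hcS ⟨hy, hyc⟩) hz
      · rwa [← Set.Iio_insert, Set.inter_insert_of_notMem hcS] at hxc
    obtain rfl | ⟨b, hb, hxb⟩ := eq_zero_or_exists_mem_partialSum_Iic hx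
    · exact zero_mem _
    · exact ih b hb.2 x (partialSum_mono (Set.inter_subset_inter_left _ Set.inter_subset_left) hxb)
        hxD

lemma insert_of_inf_le {a : ι} {S : Set ι} (hS : HillClosed N S)
    (ha : N a ⊓ partialSum N (Set.Iio a) ≤ partialSum N S) : HillClosed N (insert a S) := by
  rintro b (rfl | hb)
  · refine (le_inf ha inf_le_right).trans ((hS.inf_partialSum_le (isLowerSet_Iio b)).trans ?_)
    exact partialSum_mono (Set.inter_subset_inter_left _ (Set.subset_insert _ _))
  · exact (hS b hb).trans
      (partialSum_mono (Set.inter_subset_inter_left _ (Set.subset_insert _ _)))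

lemma relFinitePresentation_insert {a : ι} {S : Set ι} (hS : HillClosed N S)
    (hNa : RelFinitePresentation (partialSum N (Set.Iio a)) (N a))
    (ha : N a ⊓ partialSum N (Set.Iio a) ≤ partialSum N S) :
    RelFinitePresentation (partialSum N S) (partialSum N (insert a S)) := by
  by_cases haS : a ∈ S
  · rw [Set.insert_eq_of_mem haS]
    exact .refl _
  rw [partialSum_insert, sup_comm]
  refine (hNa.of_inf_eq (le_antisymm (le_inf (by rwa [inf_comm]) inf_le_right) ?_)).left_sup
  have hIic : N a ≤ partialSum N (Set.Iic a) := le_partialSum Set.self_mem_Iic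
  refine le_inf ((inf_le_inf_left _ hIic).trans
    ((hS.inf_partialSum_le (isLowerSet_Iic a)).trans (partialSum_mono ?_))) inf_le_right
  rw [← Set.Iio_insert, Set.inter_insert_of_notMem haS]
  exact Set.inter_subset_right

lemma relFinitePresentation_union
    (hN : ∀ a, RelFinitePresentation (partialSum N (Set.Iio a)) (N a))
    {S : Set ι} (hS : HillClosed N S) (T : Finset ι) (hT : HillClosed N (T : Set ι)) :
    RelFinitePresentation (partialSum N S) (partialSum N (S ∪ T)) := by
  induction T using Finset.induction_on_max with
  | empty => simpa using RelFinitePresentation.refl (partialSum N S)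
  | insert a T hTa ih =>
    rw [Finset.coe_insert] at hT
    have hT' : HillClosed N (T : Set ι) := hT.of_insert hTa
    have ha : N a ⊓ partialSum N (Set.Iio a) ≤ partialSum N (S ∪ T) := by
      refine (hT a (Set.mem_insert _ _)).trans (partialSum_mono ?_)
      rintro b ⟨rfl | hb, hba⟩
      · exact absurd hba (lt_irrefl b)
      · exact .inr hb
    rw [Finset.coe_insert, Set.union_insert]
    exact .trans (partialSum_mono Set.subset_union_left) (partialSum_mono (Set.subset_insert _ _))
      (ih hT') ((hS.union hT').relFinitePresentation_insert (hN a) ha)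

end HillClosed

lemma exists_hillClosed_finset_of_forall_mem {S : Set ι}
    (hS : ∀ b ∈ S, ∃ T : Finset ι, b ∈ T ∧ HillClosed N (T : Set ι))
    {K : Submodule A F} (hK : K.FG) (hKS : K ≤ partialSum N S) :
    ∃ T : Finset ι, HillClosed N (T : Set ι) ∧ K ≤ partialSum N (T : Set ι) := by
  classical
  obtain ⟨t, htS, hKt⟩ := exists_finset_le_partialSum hK hKS
  choose! T hbT hT using hS
  refine ⟨t.biUnion T, ?_, hKt.trans (partialSum_mono fun b hb => ?_)⟩
  · rw [Finset.coe_biUnion, ← Set.sUnion_image]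
    refine HillClosed.sUnion ?_
    rintro _ ⟨b, hb, rfl⟩
    exact hT b (htS hb)
  · exact Finset.mem_biUnion.2 ⟨b, hb, hbT b (htS hb)⟩

variable [WellFoundedLT ι]

lemma exists_hillClosed_finset_mem
    (hfg : ∀ a, (N a).FG)
    (hN : ∀ a, RelFinitePresentation (partialSum N (Set.Iio a)) (N a)) (a : ι) :
    ∃ T : Finset ι, a ∈ T ∧ HillClosed N (T : Set ι) := by
  classical
  induction a using WellFoundedLT.induction with
  | ind a ih =>
    have hK : (N a ⊓ partialSum N (Set.Iio a)).FG := inf_comm (N a) _ ▸ (hN a).fg_inf (hfg a)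
    obtain ⟨T, hT, hKT⟩ := exists_hillClosed_finset_of_forall_mem ih hK inf_le_right
    exact ⟨insert a T, Finset.mem_insert_self a T, by
      rw [Finset.coe_insert]
      exact hT.insert_of_inf_le hKT⟩

theorem isHillFamily_partialSum_hillClosed
    (hfg : ∀ a, (N a).FG)
    (hN : ∀ a, RelFinitePresentation (partialSum N (Set.Iio a)) (N a)) (htop : ⨆ a, N a = ⊤) :
    IsHillFamily (partialSum N '' {S | HillClosed N S}) where
  sSup_mem 𝓢 h𝓢 := by
    obtain ⟨𝓣, h𝓣, rfl⟩ := Set.subset_image_iff.1 h𝓢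
    exact ⟨⋃₀ 𝓣, HillClosed.sUnion h𝓣, by rw [partialSum_sUnion, sSup_image]⟩
  exists_le := by
    rintro _ ⟨S, hS, rfl⟩ K hK
    have hKtop : K ≤ partialSum N Set.univ := by simp [partialSum, htop]
    obtain ⟨T, hT, hKT⟩ := exists_hillClosed_finset_of_forall_mem
      (fun b _ => exists_hillClosed_finset_mem hfg hN b) hK hKtop
    exact ⟨_, ⟨S ∪ T, hS.union hT, rfl⟩, partialSum_mono Set.subset_union_left,
      hKT.trans (partialSum_mono Set.subset_union_right),
      hS.relFinitePresentation_union hN T hT⟩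

end HillLemma

section NullHomotopy

variable {A : Type u} [Ring A]

/-- A complex `X 0 → X 1 → ⋯` whose terms have the extension property of fp-injective modules, and
which remains exact in positive degrees after applying `Hom(T, -)` for finitely presented `T`. -/
structure IsFPInjectiveTarget {X : ℕ → Type u} [∀ i, AddCommGroup (X i)] [∀ i, Module A (X i)]
    (D : ∀ i, X i →ₗ[A] X (i + 1)) : Prop where
  comp_eq_zero : ∀ i, D (i + 1) ∘ₗ D i = 0
  exists_extension : ∀ (i : ℕ) {M N : Type u} [AddCommGroup M] [Module A M] [AddCommGroup N]
    [Module A N] (j : M →ₗ[A] N), Function.Injective j →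
    Module.FinitePresentation A (N ⧸ LinearMap.range j) →
    ∀ h : M →ₗ[A] X i, ∃ h' : N →ₗ[A] X i, h' ∘ₗ j = h
  exists_lift : ∀ (i : ℕ) {T : Type u} [AddCommGroup T] [Module A T],
    Module.FinitePresentation A T → ∀ v : T →ₗ[A] X (i + 1), D (i + 1) ∘ₗ v = 0 →
    ∃ w : T →ₗ[A] X i, D i ∘ₗ w = v

variable {X : ℕ → Type u} [∀ i, AddCommGroup (X i)] [∀ i, Module A (X i)]
  {D : ∀ i, X i →ₗ[A] X (i + 1)}

namespace IsFPInjectiveTarget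

lemma exists_lift_of_le_ker (hD : IsFPInjectiveTarget D) {i : ℕ} {T : Type u} [AddCommGroup T]
    [Module A T] [Module.FinitePresentation A T] {K : Submodule A T} (hK : K.FG)
    {v : T →ₗ[A] X (i + 1)} (hKv : K ≤ LinearMap.ker v) (hv : D (i + 1) ∘ₗ v = 0) :
    ∃ w : T →ₗ[A] X i, K ≤ LinearMap.ker w ∧ D i ∘ₗ w = v := by
  have hT : Module.FinitePresentation A (T ⧸ K) :=
    Module.finitePresentation_of_surjective K.mkQ K.mkQ_surjective (by rwa [K.ker_mkQ])
  obtain ⟨w, hw⟩ := hD.exists_lift i hT (K.liftQ v hKv) <| Submodule.linearMap_qext _ <| by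
    rw [LinearMap.comp_assoc, Submodule.liftQ_mkQ, hv, LinearMap.zero_comp]
  refine ⟨w ∘ₗ K.mkQ, ?_, ?_⟩
  · exact K.ker_mkQ.symm.le.trans (LinearMap.ker_le_ker_comp _ _)
  · rw [← LinearMap.comp_assoc, hw, Submodule.liftQ_mkQ]

variable {W : ℕ → Type u} [∀ i, AddCommGroup (W i)] [∀ i, Module A (W i)]
  {d : ∀ i, W i →ₗ[A] W (i + 1)}

lemma exists_nullHomotopy_of_finitePresentation (hD : IsFPInjectiveTarget D)
    [∀ i, Module.FinitePresentation A (W i)] (hd : ∀ i, d (i + 1) ∘ₗ d i = 0)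
    {f : ∀ i, W i →ₗ[A] X (i + 1)} (hf : ∀ i, D (i + 1) ∘ₗ f i = f (i + 1) ∘ₗ d i) :
    ∃ h : ∀ i, W i →ₗ[A] X i, ∀ i, f i = D i ∘ₗ h i + h (i + 1) ∘ₗ d i := by
  -- `f = s + D r` with `s` zero on boundaries, and `g`, also zero on boundaries, corrects `r`.
  let B : ∀ i, Submodule A (W i)
    | 0 => ⊥
    | i + 1 => LinearMap.range (d i)
  have hB : ∀ i, (B i).FG
    | 0 => Submodule.fg_bot
    | i + 1 => Module.Finite.iff_fg.1 (Module.Finite.range (d i))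
  have hBd : ∀ i, B i ≤ LinearMap.ker (d i)
    | 0 => bot_le
    | i + 1 => LinearMap.range_le_ker_iff.2 (hd i)
  have hker : ∀ {i} {M : Type u} [AddCommGroup M] [Module A M] {w : W (i + 1) →ₗ[A] M},
      B (i + 1) ≤ LinearMap.ker w → w ∘ₗ d i = 0 := LinearMap.range_le_ker_iff.1
  have hs (i : ℕ) : ∃ s : W i →ₗ[A] X (i + 1),
      B i ≤ LinearMap.ker s ∧ D (i + 1) ∘ₗ s = D (i + 1) ∘ₗ f i :=
    hD.exists_lift_of_le_ker (hB i)
      (hf i ▸ (hBd i).trans (LinearMap.ker_le_ker_comp _ _)) (by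
        rw [← LinearMap.comp_assoc, hD.comp_eq_zero, LinearMap.zero_comp])
  choose s hsB hsD using hs
  have hr (i : ℕ) : ∃ r : W i →ₗ[A] X i, D i ∘ₗ r = f i - s i :=
    hD.exists_lift i inferInstance _ (by rw [LinearMap.comp_sub, hsD, sub_self])
  choose r hr using hr
  have hg (i : ℕ) : ∃ g : W i →ₗ[A] X i,
      B i ≤ LinearMap.ker g ∧ D i ∘ₗ g = s i - r (i + 1) ∘ₗ d i := by
    refine hD.exists_lift_of_le_ker (hB i) (fun x hx => ?_) ?_
    · have hsx : s i x = 0 := hsB i hx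
      have hdx : d i x = 0 := hBd i hx
      simp [hsx, hdx]
    · rw [LinearMap.comp_sub, hsD, ← LinearMap.comp_assoc, hr, hf, LinearMap.sub_comp,
        hker (hsB (i + 1)), sub_zero, sub_self]
  choose g hgB hgD using hg
  refine ⟨fun i => r i + g i, fun i => ?_⟩
  rw [LinearMap.comp_add, LinearMap.add_comp, hr, hgD, hker (hgB (i + 1))]
  abel

lemma exists_nullHomotopy_of_le_ker (hD : IsFPInjectiveTarget D)
    (hd : ∀ i, d (i + 1) ∘ₗ d i = 0) {K : ∀ i, Submodule A (W i)}
    (hKd : ∀ i, K i ≤ (K (i + 1)).comap (d i)) (hK : ∀ i, Module.FinitePresentation A (W i ⧸ K i))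
    {f : ∀ i, W i →ₗ[A] X (i + 1)} (hf : ∀ i, D (i + 1) ∘ₗ f i = f (i + 1) ∘ₗ d i)
    (hKf : ∀ i, K i ≤ LinearMap.ker (f i)) :
    ∃ h : ∀ i, W i →ₗ[A] X i, (∀ i, K i ≤ LinearMap.ker (h i)) ∧
      ∀ i, f i = D i ∘ₗ h i + h (i + 1) ∘ₗ d i := by
  obtain ⟨h, hh⟩ := hD.exists_nullHomotopy_of_finitePresentation
    (d := fun i => (K i).mapQ (K (i + 1)) (d i) (hKd i))
    (f := fun i => (K i).liftQ (f i) (hKf i))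
    (fun i => Submodule.linearMap_qext _ <| by
      ext x
      have hddx : d (i + 1) (d i x) = 0 := LinearMap.congr_fun (hd i) x
      simp [hddx])
    (fun i => Submodule.linearMap_qext _ <| by
      ext x
      simpa using LinearMap.congr_fun (hf i) x)
  refine ⟨fun i => h i ∘ₗ (K i).mkQ, fun i => ?_, fun i => ?_⟩
  · exact (K i).ker_mkQ.symm.le.trans (LinearMap.ker_le_ker_comp _ _)
  · ext x
    simpa using LinearMap.congr_fun (hh i) ((K i).mkQ x)

end IsFPInjectiveTarget

end NullHomotopy

section HillFamilyNullHomotopy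

variable {A : Type u} [Ring A]
  {F : ℕ → Type u} [∀ i, AddCommGroup (F i)] [∀ i, Module A (F i)]
  {d : ∀ i, F i →ₗ[A] F (i + 1)}
  {X : ℕ → Type u} [∀ i, AddCommGroup (X i)] [∀ i, Module A (X i)]
  {D : ∀ i, X i →ₗ[A] X (i + 1)}
  {f : ∀ i, F i →ₗ[A] X (i + 1)}

lemma IsHillFamily.bot_mem {M : Type u} [AddCommGroup M] [Module A M] {𝓗 : Set (Submodule A M)}
    (h𝓗 : IsHillFamily 𝓗) : ⊥ ∈ 𝓗 :=
  sSup_empty (α := Submodule A M) ▸ h𝓗.sSup_mem ∅ (Set.empty_subset _)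

lemma exists_relFinitePresentation_subcomplex {𝓗 : ∀ i, Set (Submodule A (F i))}
    (h𝓗 : ∀ i, IsHillFamily (𝓗 i)) {U : ∀ i, Submodule A (F i)} (hU : ∀ i, U i ∈ 𝓗 i)
    (hUd : ∀ i, (U i).map (d i) ≤ U (i + 1)) {K : ∀ i, Submodule A (F i)} (hK : ∀ i, (K i).FG) :
    ∃ V : ∀ i, Submodule A (F i), (∀ i, V i ∈ 𝓗 i) ∧ (∀ i, U i ≤ V i) ∧ (∀ i, K i ≤ V i) ∧
      (∀ i, RelFinitePresentation (U i) (V i)) ∧ ∀ i, (V i).map (d i) ≤ V (i + 1) := by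
  let Admissible (i : ℕ) (V : Submodule A (F i)) : Prop :=
    V ∈ 𝓗 i ∧ U i ≤ V ∧ K i ≤ V ∧ RelFinitePresentation (U i) V
  have exists_next (i : ℕ) (V : Submodule A (F i)) (hV : Admissible i V) :
      ∃ V', Admissible (i + 1) V' ∧ V.map (d i) ≤ V' := by
    obtain ⟨-, hUV, -, hrel⟩ := hV
    obtain ⟨L, hL, rfl⟩ := hrel.exists_fg_sup_eq hUV
    obtain ⟨V', hV', hUV', hKV', hrel'⟩ := (h𝓗 (i + 1)).exists_le _ (hU (i + 1)) _
      ((hK (i + 1)).sup (hL.map (d i)))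
    obtain ⟨hKV', hLV'⟩ := sup_le_iff.1 hKV'
    refine ⟨V', ⟨hV', hUV', hKV', hrel'⟩, ?_⟩
    rw [Submodule.map_sup]
    exact sup_le ((hUd i).trans hUV') hLV'
  obtain ⟨V₀, hV₀⟩ := (h𝓗 0).exists_le _ (hU 0) _ (hK 0)
  choose! next hnext hmap using exists_next
  let V : ∀ i, Submodule A (F i) := Nat.rec V₀ next
  have hV (i : ℕ) : Admissible i (V i) := by
    induction i with
    | zero => exact hV₀
    | succ i ih => exact hnext i _ ih
  exact ⟨V, fun i => (hV i).1, fun i => (hV i).2.1, fun i => (hV i).2.2.1, fun i => (hV i).2.2.2,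
    fun i => hmap i _ (hV i)⟩

/-- A null homotopy of the maps `f i` defined on the subcomplex formed by the domains of the
partial maps `p i`. -/
structure IsPartialNullHomotopy (d : ∀ i, F i →ₗ[A] F (i + 1)) (D : ∀ i, X i →ₗ[A] X (i + 1))
    (f : ∀ i, F i →ₗ[A] X (i + 1)) (p : ∀ i, F i →ₗ.[A] X i) : Prop where
  map_le : ∀ i, (p i).domain.map (d i) ≤ (p (i + 1)).domain
  eq_add : ∀ i (x : (p i).domain),
    f i x = D i (p i x) + p (i + 1) ⟨d i x, map_le i (Submodule.mem_map_of_mem x.2)⟩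

lemma IsFPInjectiveTarget.exists_extension_of_le (hD : IsFPInjectiveTarget D) {i : ℕ}
    {M : Type u} [AddCommGroup M] [Module A M] (p : M →ₗ.[A] X i) {V : Submodule A M}
    (hV : p.domain ≤ V) (hrel : RelFinitePresentation p.domain V) :
    ∃ h : V →ₗ[A] X i, p ≤ ⟨V, h⟩ := by
  obtain ⟨h, hh⟩ := hD.exists_extension i (Submodule.inclusion hV)
    (Submodule.inclusion_injective hV) (by rwa [Submodule.range_inclusion]) p.toFun
  refine ⟨h, hV, fun x y hxy => ?_⟩
  obtain rfl : y = Submodule.inclusion hV x := Subtype.ext hxy.symm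
  exact (LinearMap.congr_fun hh x).symm

namespace IsPartialNullHomotopy

lemma exists_extension (hD : IsFPInjectiveTarget D) (hd : ∀ i, d (i + 1) ∘ₗ d i = 0)
    (hf : ∀ i, D (i + 1) ∘ₗ f i = f (i + 1) ∘ₗ d i) {p : ∀ i, F i →ₗ.[A] X i}
    (hp : IsPartialNullHomotopy d D f p) {V : ∀ i, Submodule A (F i)}
    (hpV : ∀ i, (p i).domain ≤ V i) (hVd : ∀ i, (V i).map (d i) ≤ V (i + 1))
    (hrel : ∀ i, RelFinitePresentation (p i).domain (V i)) :
    ∃ q, IsPartialNullHomotopy d D f q ∧ p ≤ q ∧ ∀ i, (q i).domain = V i := by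
  choose h hh using fun i => hD.exists_extension_of_le (p i) (hpV i) (hrel i)
  let dV (i : ℕ) : V i →ₗ[A] V (i + 1) :=
    (d i).restrict fun x hx => hVd i (Submodule.mem_map_of_mem hx)
  let φ (i : ℕ) : V i →ₗ[A] X (i + 1) := f i ∘ₗ (V i).subtype - D i ∘ₗ h i - h (i + 1) ∘ₗ dV i
  have hdV (i : ℕ) : dV (i + 1) ∘ₗ dV i = 0 := by
    ext x
    exact LinearMap.congr_fun (hd i) x
  have hφ (i : ℕ) : D (i + 1) ∘ₗ φ i = φ (i + 1) ∘ₗ dV i := by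
    have hfV : D (i + 1) ∘ₗ f i ∘ₗ (V i).subtype = f (i + 1) ∘ₗ (V (i + 1)).subtype ∘ₗ dV i := by
      rw [← LinearMap.comp_assoc, hf]
      rfl
    simp only [φ, LinearMap.comp_sub, LinearMap.sub_comp, LinearMap.comp_assoc, hfV, hdV]
    rw [← LinearMap.comp_assoc _ (D i), hD.comp_eq_zero]
    simp
  have hφ_ker (i : ℕ) : (p i).domain.submoduleOf (V i) ≤ LinearMap.ker (φ i) := by
    intro x hx
    have h₁ : p i ⟨x, hx⟩ = h i x := (hh i).2 rfl
    have h₂ : p (i + 1) ⟨d i x, hp.map_le i (Submodule.mem_map_of_mem hx)⟩ = h (i + 1) (dV i x) :=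
      (hh (i + 1)).2 rfl
    have := hp.eq_add i ⟨x, hx⟩
    rw [h₁, h₂] at this
    simp [φ, this]
  obtain ⟨k, hk_ker, hk⟩ := hD.exists_nullHomotopy_of_le_ker hdV
    (fun i x hx => hp.map_le i (Submodule.mem_map_of_mem hx)) hrel hφ hφ_ker
  refine ⟨fun i => ⟨V i, h i + k i⟩, ⟨hVd, fun i x => ?_⟩, fun i => ⟨hpV i, fun x y hxy => ?_⟩,
    fun i => rfl⟩
  · have := LinearMap.congr_fun (hk i) x
    simp only [φ, LinearMap.sub_apply, LinearMap.add_apply, LinearMap.comp_apply,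
      Submodule.subtype_apply, sub_sub, sub_eq_iff_eq_add] at this
    change f i x = D i (h i x + k i x) + (h (i + 1) (dV i x) + k (i + 1) (dV i x))
    rw [this, map_add]
    abel
  · have hky : k i y = 0 := hk_ker i (show (y : F i) ∈ (p i).domain from hxy ▸ x.2)
    exact ((hh i).2 hxy).trans (by simp [hky])

lemma exists_upperBound {c : Set (∀ i, F i →ₗ.[A] X i)} (hc : IsChain (· ≤ ·) c)
    (hne : c.Nonempty) (hcp : ∀ p ∈ c, IsPartialNullHomotopy d D f p) :
    ∃ q, IsPartialNullHomotopy d D f q ∧ (∀ p ∈ c, p ≤ q) ∧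
      ∀ i, (q i).domain = sSup ((fun p => (p i).domain) '' c) := by
  have hdir (i : ℕ) : DirectedOn (· ≤ ·) ((fun p => p i) '' c) :=
    hc.directedOn.mono_comp fun _ _ hpq => hpq i
  let q (i : ℕ) := LinearPMap.sSup _ (hdir i)
  have hle {p} (hp : p ∈ c) : p ≤ q := fun i => LinearPMap.le_sSup (hdir i) ⟨p, hp, rfl⟩
  have hmem {i : ℕ} {x : F i} (hx : x ∈ (q i).domain) : ∃ p ∈ c, x ∈ (p i).domain := by
    simpa using (LinearPMap.mem_domain_sSup_iff (hne.image _) (hdir i)).1 hx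
  have hmap (i : ℕ) : (q i).domain.map (d i) ≤ (q (i + 1)).domain := by
    rintro _ ⟨x, hx, rfl⟩
    obtain ⟨p, hp, hxp⟩ := hmem hx
    exact (hle hp (i + 1)).1 ((hcp p hp).map_le i (Submodule.mem_map_of_mem hxp))
  refine ⟨q, ⟨hmap, fun i x => ?_⟩, fun p hp => hle hp, fun i => ?_⟩
  · obtain ⟨p, hp, hxp⟩ := hmem x.2
    have hqi : p i ⟨x, hxp⟩ = q i x := (hle hp i).2 rfl
    have hqs : p (i + 1) ⟨d i x, (hcp p hp).map_le i (Submodule.mem_map_of_mem hxp)⟩ =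
        q (i + 1) ⟨d i x, hmap i (Submodule.mem_map_of_mem x.2)⟩ := (hle hp (i + 1)).2 rfl
    rw [← hqi, ← hqs]
    exact (hcp p hp).eq_add i ⟨x, hxp⟩
  · rw [LinearPMap.domain_sSup, Set.image_image]

end IsPartialNullHomotopy

theorem IsFPInjectiveTarget.exists_nullHomotopy_of_isHillFamily (hD : IsFPInjectiveTarget D)
    (hd : ∀ i, d (i + 1) ∘ₗ d i = 0) (hf : ∀ i, D (i + 1) ∘ₗ f i = f (i + 1) ∘ₗ d i)
    {𝓗 : ∀ i, Set (Submodule A (F i))} (h𝓗 : ∀ i, IsHillFamily (𝓗 i)) :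
    ∃ h : ∀ i, F i →ₗ[A] X i, ∀ i, f i = D i ∘ₗ h i + h (i + 1) ∘ₗ d i := by
  let 𝓟 : Set (∀ i, F i →ₗ.[A] X i) :=
    {p | (∀ i, (p i).domain ∈ 𝓗 i) ∧ IsPartialNullHomotopy d D f p}
  have bot_mem : ⊥ ∈ 𝓟 := by
    refine ⟨fun i => (h𝓗 i).bot_mem, ⟨fun i => (Submodule.map_bot _).le, ?_⟩⟩
    rintro i ⟨x, hx⟩
    obtain rfl : x = 0 := (Submodule.mem_bot A).1 hx
    change f i 0 = D i 0 + 0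
    rw [map_zero, map_zero, add_zero]
  obtain ⟨p, -, hp⟩ := zorn_le_nonempty₀ 𝓟 (fun c hc𝓟 hc p hp => by
    obtain ⟨q, hq, hcq, hdom⟩ := IsPartialNullHomotopy.exists_upperBound hc ⟨p, hp⟩
      fun p hp => (hc𝓟 hp).2
    refine ⟨q, ⟨fun i => ?_, hq⟩, hcq⟩
    rw [hdom]
    refine (h𝓗 i).sSup_mem _ ?_
    rintro _ ⟨p, hp, rfl⟩
    exact (hc𝓟 hp).1 i) ⊥ bot_mem
  have htop (i : ℕ) : (p i).domain = ⊤ := by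
    refine eq_top_iff.2 fun x _ => ?_
    obtain ⟨V, hV, hpV, hKV, hrel, hVd⟩ := exists_relFinitePresentation_subcomplex h𝓗 hp.1.1
      hp.1.2.map_le (K := Function.update (fun _ => ⊥) i (Submodule.span A {x})) fun j => by
        obtain rfl | hj := eq_or_ne j i
        · simpa using Submodule.fg_span_singleton x
        · simpa [hj] using Submodule.fg_bot
    obtain ⟨q, hq, hpq, hdom⟩ := hp.1.2.exists_extension hD hd hf hpV hVd hrel
    refine (hp.2 ⟨fun j => hdom j ▸ hV j, hq⟩ hpq i).1 ?_
    rw [hdom]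
    exact hKV i (by simp [Submodule.mem_span_singleton_self])
  refine ⟨fun i => (p i).toFun ∘ₗ (LinearEquiv.ofTop _ (htop i)).symm.toLinearMap, fun i => ?_⟩
  ext x
  exact hp.1.2.eq_add i ⟨x, htop i ▸ trivial⟩

end HillFamilyNullHomotopy

section RelativeCellComplex

open HomotopicalAlgebra

variable {A : Type u} [Ring A]

section AttachCells

variable {α : Type*} {X Y : α → ModuleCat.{u} A} {g : ∀ a, X a ⟶ Y a}
  {M N : ModuleCat.{u} A} {f : M ⟶ N}

lemma range_sup_iSup_range_cell (c : AttachCells.{u} g f) :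
    LinearMap.range f.hom ⊔ ⨆ i, LinearMap.range (c.cell i).hom = ⊤ := by
  let S := LinearMap.range f.hom ⊔ ⨆ i, LinearMap.range (c.cell i).hom
  have hmkQ : ModuleCat.ofHom S.mkQ = 0 := by
    refine c.hom_ext ?_ fun i => ?_ <;> rw [comp_zero] <;> ext1 <;>
      refine LinearMap.range_le_ker_iff.1 (le_of_le_of_eq ?_ S.ker_mkQ.symm)
    · exact le_sup_left
    · exact (le_iSup (fun i => LinearMap.range (c.cell i).hom) i).trans le_sup_right
  refine S.ker_mkQ.symm.trans (LinearMap.ker_eq_top.2 ?_)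
  exact congrArg ModuleCat.Hom.hom hmkQ

lemma exists_projection_of_attachCells (c : AttachCells.{u} g f) (i : c.ι) :
    ∃ p : N ⟶ ModuleCat.of A (Y (c.π i) ⧸ LinearMap.range (g (c.π i)).hom),
      f ≫ p = 0 ∧ c.cell i ≫ p = ModuleCat.ofHom (Submodule.mkQ _) ∧
        ∀ i' ≠ i, c.cell i' ≫ p = 0 := by
  classical
  let r := Pi.single (M := fun i' => Y (c.π i') ⟶
    ModuleCat.of A (Y (c.π i) ⧸ LinearMap.range (g (c.π i)).hom)) i
      (ModuleCat.ofHom (Submodule.mkQ _))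
  have hr (i' : c.ι) : g (c.π i') ≫ r i' = 0 := by
    obtain rfl | hi := eq_or_ne i' i
    · ext x
      simp [r]
    · simp [r, Pi.single_eq_of_ne hi]
  have hcell (i' : c.ι) : c.cofan₂.inj i' ≫ Cofan.IsColimit.desc c.isColimit₂ r = r i' :=
    Cofan.IsColimit.fac _ _ _
  have hm : c.m ≫ Cofan.IsColimit.desc c.isColimit₂ r = 0 :=
    Cofan.IsColimit.hom_ext c.isColimit₁ _ _ fun i' => by
      rw [c.hm_assoc, hcell, hr, comp_zero]
  refine ⟨c.isPushout.desc 0 (Cofan.IsColimit.desc c.isColimit₂ r) (by rw [hm, comp_zero]),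
    c.isPushout.inl_desc _ _ _, ?_, fun i' hi => ?_⟩ <;>
    rw [c.cell_def, Category.assoc, c.isPushout.inr_desc, hcell]
  · exact Pi.single_eq_same i _
  · exact Pi.single_eq_of_ne hi _

lemma comap_cell_le_range (c : AttachCells.{u} g f) (i : c.ι) :
    (LinearMap.range f.hom ⊔ ⨆ (i') (_ : i' ≠ i), LinearMap.range (c.cell i').hom).comap
      (c.cell i).hom ≤ LinearMap.range (g (c.π i)).hom := by
  obtain ⟨p, hf, hi, hne⟩ := exists_projection_of_attachCells c i
  have hle : LinearMap.range f.hom ⊔ ⨆ (i') (_ : i' ≠ i), LinearMap.range (c.cell i').hom ≤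
      LinearMap.ker p.hom :=
    sup_le (LinearMap.range_le_ker_iff.2 (congrArg ModuleCat.Hom.hom hf)) <| iSup₂_le fun i' hi' =>
      LinearMap.range_le_ker_iff.2 (congrArg ModuleCat.Hom.hom (hne i' hi'))
  refine (Submodule.comap_mono hle).trans_eq ?_
  rw [← LinearMap.ker_comp, ← ModuleCat.hom_comp, hi, ModuleCat.hom_ofHom, Submodule.ker_mkQ]

end AttachCells

variable {J : Type u} [LinearOrder J] [OrderBot J] [SuccOrder J] [WellFoundedLT J]
  {α : Type*} {X Y : α → ModuleCat.{u} A} {g : ∀ a, X a ⟶ Y a}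
  {M N : ModuleCat.{u} A} {f : M ⟶ N}

lemma map_comp_incl_app (c : RelativeCellComplex.{u} (fun _ : J => g) f) {i j : J} (h : i ⟶ j) :
    c.F.map h ≫ c.incl.app j = c.incl.app i := by
  simp

lemma range_incl_le_iSup_range_cells (c : RelativeCellComplex.{u} (fun _ : J => g) f)
    (hM : IsZero M) (j : J) :
    LinearMap.range (c.incl.app j).hom ≤
      ⨆ (γ : c.Cells) (_ : γ.j < j), LinearMap.range γ.ι.hom := by
  induction j using SuccOrder.limitRecOn with
  | isMin j hj =>
    obtain rfl := hj.eq_bot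
    have h0 : c.incl.app ⊥ = 0 := (hM.of_iso c.isoBot).eq_of_src _ _
    rw [h0]
    simp
  | succ j hj ih =>
    have h1 : LinearMap.range (c.incl.app (Order.succ j)).hom = LinearMap.range (c.incl.app j).hom ⊔
        ⨆ k, LinearMap.range (RelativeCellComplex.Cells.mk (c := c) j hj k).ι.hom := by
      rw [LinearMap.range_eq_map, ← range_sup_iSup_range_cell (c.attachCells j hj),
        Submodule.map_sup, Submodule.map_iSup, ← LinearMap.range_comp, ← ModuleCat.hom_comp,
        map_comp_incl_app]
      simp_rw [← LinearMap.range_comp, ← ModuleCat.hom_comp]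
      rfl
    rw [h1]
    refine sup_le (ih.trans ?_) (iSup_le fun k => ?_)
    · exact iSup₂_mono' fun γ hγ => ⟨γ, hγ.trans (Order.lt_succ_of_not_isMax hj), le_rfl⟩
    · exact le_iSup₂_of_le ⟨j, hj, k⟩ (Order.lt_succ_of_not_isMax hj) le_rfl
  | isSuccLimit j hj ih =>
    let S := ⨆ (γ : c.Cells) (_ : γ.j < j), LinearMap.range γ.ι.hom
    have hmkQ : c.incl.app j ≫ ModuleCat.ofHom S.mkQ = 0 := by
      refine (c.F.isColimitOfIsWellOrderContinuous j hj).hom_ext fun ⟨i, hi⟩ => ?_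
      have hiS : LinearMap.range (c.incl.app i).hom ≤ LinearMap.ker S.mkQ := by
        rw [S.ker_mkQ]
        exact (ih i hi).trans (iSup₂_mono' fun γ hγ => ⟨γ, hγ.trans hi, le_rfl⟩)
      have hi0 : c.incl.app i ≫ ModuleCat.ofHom S.mkQ = 0 :=
        ModuleCat.hom_ext (LinearMap.range_le_ker_iff.1 hiS)
      have hij : i ≤ j := le_of_lt hi
      change c.F.map (homOfLE hij) ≫ c.incl.app j ≫ ModuleCat.ofHom S.mkQ = _ ≫ 0
      rw [← Category.assoc, map_comp_incl_app, hi0]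
      exact comp_zero.symm
    refine le_of_le_of_eq ?_ S.ker_mkQ
    exact LinearMap.range_le_ker_iff.2 (congrArg ModuleCat.Hom.hom hmkQ)

lemma iSup_range_cells_eq_top (c : RelativeCellComplex.{u} (fun _ : J => g) f) (hM : IsZero M) :
    ⨆ γ : c.Cells, LinearMap.range γ.ι.hom = ⊤ := by
  let S := ⨆ γ : c.Cells, LinearMap.range γ.ι.hom
  have hmkQ : ModuleCat.ofHom S.mkQ = 0 :=
    c.hom_ext (hM.eq_of_src _ _) fun γ => by
      ext1
      refine (LinearMap.range_le_ker_iff.1 (le_of_le_of_eq ?_ S.ker_mkQ.symm)).trans ?_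
      · exact le_iSup (fun γ : c.Cells => LinearMap.range γ.ι.hom) γ
      · simp
  refine S.ker_mkQ.symm.trans (LinearMap.ker_eq_top.2 ?_)
  exact congrArg ModuleCat.Hom.hom hmkQ

lemma exists_wellOrder_monotone {ι J : Type*} [LinearOrder J] [WellFoundedLT J] (ρ : ι → J) :
    ∃ (_ : LinearOrder ι), WellFoundedLT ι ∧ Monotone ρ := by
  obtain ⟨_, _⟩ := exists_wellFoundedLT ι
  let e : ι → J ×ₗ ι := fun a => toLex (ρ a, a)
  refine ⟨LinearOrder.lift' e fun a b h => congrArg (fun z => (ofLex z).2) h,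
    ⟨InvImage.wf e wellFounded_lt⟩, fun a b hab => ?_⟩
  exact (Prod.Lex.le_iff.1 (show e a ≤ e b from hab)).elim le_of_lt fun h => h.1.le

lemma mono_incl_app (c : RelativeCellComplex.{u} (fun _ : J => g) f) (hg : ∀ a, Mono (g a))
    (j : J) :
    Mono (c.incl.app j) := by
  refine ((c.transfiniteCompositionOfShape g).ofLE
    (W' := MorphismProperty.monomorphisms (ModuleCat.{u} A)) ?_).mem_incl_app j
  rw [MorphismProperty.pushouts_le_iff, MorphismProperty.coproducts_le_iff]
  rintro _ _ _ ⟨a⟩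
  exact hg a

lemma partialSum_range_cells_Iio_le (c : RelativeCellComplex.{u} (fun _ : J => g) f)
    [LinearOrder c.Cells] (hj : Monotone fun γ : c.Cells => γ.j) (γ : c.Cells) :
    partialSum (fun γ : c.Cells => LinearMap.range γ.ι.hom) (Set.Iio γ) ≤
      (LinearMap.range (c.F.map (homOfLE (Order.le_succ γ.j))).hom ⊔
        ⨆ (k) (_ : k ≠ γ.k), LinearMap.range ((c.attachCells γ.j γ.hj).cell k).hom).map
          (c.incl.app (Order.succ γ.j)).hom := by
  refine iSup₂_le fun γ' hγ' => ?_
  obtain hlt | heq := (hj (Set.mem_Iio.1 hγ').le).lt_or_eq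
  · refine le_trans ?_ (Submodule.map_mono le_sup_left)
    have hlt' : γ'.j < γ.j := hlt
    have hγ' : γ'.ι = ((c.attachCells γ'.j γ'.hj).cell γ'.k ≫
        c.F.map (homOfLE (Order.succ_le_of_lt hlt'))) ≫ c.incl.app γ.j := by
      rw [Category.assoc, map_comp_incl_app]
      rfl
    rw [← LinearMap.range_comp, ← ModuleCat.hom_comp, map_comp_incl_app]
    change LinearMap.range γ'.ι.hom ≤ _
    rw [hγ']
    exact LinearMap.range_comp_le_range _ _
  · obtain ⟨j, hj, k⟩ := γ
    obtain ⟨j', hj', k'⟩ := γ'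
    obtain rfl : j' = j := heq
    refine le_trans ?_ (Submodule.map_mono (le_sup_of_le_right (le_iSup₂ k' ?_)))
    · rw [← LinearMap.range_comp]
      rfl
    · rintro rfl
      exact lt_irrefl _ hγ'

lemma comap_partialSum_range_cells_Iio (c : RelativeCellComplex.{u} (fun _ : J => g) f)
    (hM : IsZero M) (hg : ∀ a, Mono (g a)) [LinearOrder c.Cells]
    (hj : Monotone fun γ : c.Cells => γ.j) (γ : c.Cells) :
    (partialSum (fun γ : c.Cells => LinearMap.range γ.ι.hom) (Set.Iio γ)).comap γ.ι.hom =
      LinearMap.range (g γ.i).hom := by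
  apply le_antisymm
  · have hmono := mono_incl_app c hg (Order.succ γ.j)
    refine (Submodule.comap_mono (partialSum_range_cells_Iio_le c hj γ)).trans ?_
    change ((Submodule.map _ _).comap ((c.incl.app _).hom ∘ₗ _)) ≤ _
    rw [Submodule.comap_comp,
      Submodule.comap_map_eq_of_injective ((ModuleCat.mono_iff_injective _).1 hmono)]
    exact comap_cell_le_range _ _
  · have hγ : g γ.i ≫ γ.ι = (((c.attachCells γ.j γ.hj).cofan₁.inj γ.k) ≫
        (c.attachCells γ.j γ.hj).g₁) ≫ c.incl.app γ.j := by
      have hcell : g γ.i ≫ (c.attachCells γ.j γ.hj).cell γ.k =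
          (c.attachCells γ.j γ.hj).cofan₁.inj γ.k ≫ (c.attachCells γ.j γ.hj).m ≫
            (c.attachCells γ.j γ.hj).g₂ := (AttachCells.hm_assoc _ _ _).symm
      rw [← (c.attachCells γ.j γ.hj).isPushout.w] at hcell
      rw [← map_comp_incl_app c (homOfLE (Order.le_succ γ.j))]
      refine (congrArg (· ≫ c.incl.app (Order.succ γ.j)) hcell).trans ?_
      exact (Category.assoc _ _ _).trans
        ((congrArg _ (Category.assoc _ _ _)).trans (Category.assoc _ _ _).symm)
    rw [← Submodule.map_le_iff_le_comap, ← LinearMap.range_comp, ← ModuleCat.hom_comp, hγ]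
    refine (LinearMap.range_comp_le_range _ _).trans
      ((range_incl_le_iSup_range_cells c hM γ.j).trans ?_)
    exact iSup₂_mono' fun γ' hγ' => ⟨γ', hj.reflect_lt hγ', le_rfl⟩

theorem exists_isHillFamily_of_relativeCellComplex
    (c : RelativeCellComplex.{u} (fun _ : J => g) f) (hM : IsZero M)
    (hg : ∀ a, Mono (g a)) (hX : ∀ a, Module.Finite A (X a))
    (hY : ∀ a, Module.FinitePresentation A (Y a)) :
    ∃ 𝓗 : Set (Submodule A N), IsHillFamily 𝓗 := by
  obtain ⟨_, _, hj⟩ := exists_wellOrder_monotone fun γ : c.Cells => γ.j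
  refine ⟨_, isHillFamily_partialSum_hillClosed (N := fun γ : c.Cells => LinearMap.range γ.ι.hom)
    (fun γ => ?_) (fun γ => ?_) (iSup_range_cells_eq_top c hM)⟩
  · exact Module.Finite.iff_fg.1 (Module.Finite.range γ.ι.hom)
  · refine RelFinitePresentation.of_range γ.ι.hom ?_
    rw [comap_partialSum_range_cells_Iio c hM hg hj]
    exact Module.Finite.iff_fg.1 (Module.Finite.range (g γ.i).hom)

end RelativeCellComplex

section Ext

variable {C : Type*} [Category C] [Abelian C] [HasExt C] {S : ShortComplex C}

lemma subsingleton_ext_of_forall_exists_extension (hS : S.ShortExact) {J : C}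
    (hJ : Subsingleton (Abelian.Ext S.X₂ J 1))
    (h : ∀ φ : S.X₁ ⟶ J, ∃ ψ : S.X₂ ⟶ J, S.f ≫ ψ = φ) :
    Subsingleton (Abelian.Ext S.X₃ J 1) := by
  refine subsingleton_of_forall_eq 0 fun x => ?_
  obtain ⟨y, rfl⟩ := Abelian.Ext.contravariant_sequence_exact₃ hS J x
    (Subsingleton.elim (α := Abelian.Ext S.X₂ J 1) _ _) (n₀ := 0) rfl
  obtain ⟨φ, rfl⟩ := (Abelian.Ext.mk₀_bijective _ _).2 y
  obtain ⟨ψ, rfl⟩ := h φ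
  rw [← Abelian.Ext.mk₀_comp_mk₀]
  exact hS.extClass_comp_assoc _

lemma exists_lift_of_subsingleton_ext (hS : S.ShortExact) {T : C}
    (hT : Subsingleton (Abelian.Ext T S.X₁ 1)) (v : T ⟶ S.X₃) : ∃ s : T ⟶ S.X₂, s ≫ S.g = v := by
  obtain ⟨y, hy⟩ := Abelian.Ext.covariant_sequence_exact₃ T hS (Abelian.Ext.mk₀ v) (n₁ := 1) rfl
    (Subsingleton.elim (α := Abelian.Ext T S.X₁ 1) _ _)
  obtain ⟨s, rfl⟩ := (Abelian.Ext.mk₀_bijective _ _).2 y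
  rw [Abelian.Ext.mk₀_comp_mk₀] at hy
  exact ⟨s, (Abelian.Ext.mk₀_bijective _ _).1 hy⟩

end Ext

section FGInclusions

variable (A : Type u) [Ring A]

/-- The inclusions of the finitely generated submodules of the modules `Aⁿ`. Their cokernels are
the finitely presented modules, so the kernel of a map with the right lifting property against them
is fp-injective. -/
def fgInclusions : MorphismProperty (ModuleCat.{u} A) :=
  .ofHoms fun a : Σ n : ℕ, {L : Submodule A (Fin n → A) // L.FG} =>
    ModuleCat.ofHom a.2.1.subtype

variable {A}

lemma mono_of_fgInclusions {X Y : ModuleCat.{u} A} {i : X ⟶ Y} (hi : fgInclusions A i) :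
    Mono i := by
  obtain ⟨a⟩ := hi
  exact (ModuleCat.mono_iff_injective _).2 a.2.1.subtype_injective

lemma finite_and_finitePresentation_of_fgInclusions {X Y : ModuleCat.{u} A} {i : X ⟶ Y}
    (hi : fgInclusions A i) : Module.Finite A X ∧ Module.FinitePresentation A Y := by
  obtain ⟨⟨n, L, hL⟩⟩ := hi
  exact ⟨Module.Finite.iff_fg.2 hL, inferInstanceAs (Module.FinitePresentation A (Fin n → A))⟩

instance : (fgInclusions A).HasSmallObjectArgument.{u} := by
  obtain ⟨κ, hκ', hκ⟩ := HasCardinalLT.exists_regular_cardinal_forall.{u}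
    fun a : Σ n : ℕ, {L : Submodule A (Fin n → A) // L.FG} => Subobject (ModuleCat.of A a.2.1)
  have : Fact κ.IsRegular := ⟨hκ'⟩
  have : Nonempty κ.ord.ToType := by simpa using hκ'.ne_zero
  have := WellFoundedLT.toOrderBot κ.ord.ToType
  refine ⟨κ, inferInstance, inferInstance,
    { isSmall := ?_, preservesColimit {X Y M N} i hi f hf := ?_ }⟩
  · unfold fgInclusions
    infer_instance
  · let hmono := (hf.transfiniteCompositionOfShape (fgInclusions A).homFamily).ofLE
      (W' := MorphismProperty.monomorphisms (ModuleCat.{u} A)) <| by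
        rw [MorphismProperty.pushouts_le_iff, MorphismProperty.coproducts_le_iff]
        rintro _ _ _ ⟨a⟩
        exact mono_of_fgInclusions a.2
    have (j j' : κ.ord.ToType) (φ : j ⟶ j') : Mono (hmono.F.map φ) := hmono.mem_map φ
    refine IsGrothendieckAbelian.preservesColimit_coyoneda_obj_of_mono (Y := hmono.F) (κ := κ) ?_
    obtain ⟨a⟩ := hi
    exact hκ a

lemma surjective_of_rlp_fgInclusions {M P : ModuleCat.{u} A} {π : M ⟶ P}
    (hπ : (fgInclusions A).rlp π) : Function.Surjective π := by
  intro x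
  have := hπ _ ⟨(⟨1, ⊥, Submodule.fg_bot⟩ : Σ n : ℕ, {L : Submodule A (Fin n → A) // L.FG})⟩
  let b : ModuleCat.of A (Fin 1 → A) ⟶ P :=
    ModuleCat.ofHom ((LinearMap.toSpanSingleton A P x) ∘ₗ LinearMap.proj 0)
  have sq : CommSq 0 (ModuleCat.ofHom (⊥ : Submodule A (Fin 1 → A)).subtype) π b :=
    ⟨by ext y; simp [Subsingleton.elim y 0]⟩
  refine ⟨sq.lift 1, ?_⟩
  rw [← ModuleCat.comp_apply, sq.fac_right]
  exact one_smul A x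

end FGInclusions

section FpProjective

variable {R : Type u} [Ring R]

lemma fpInjective_ker_of_rlp_fgInclusions {M P : RightMod R} {π : M ⟶ P}
    (hπ : (fgInclusions Rᵐᵒᵖ).rlp π) : FpInjective R (.of _ (LinearMap.ker π.hom)) := by
  intro T hT
  obtain ⟨n, L, e, hL⟩ := Module.FinitePresentation.exists_fin Rᵐᵒᵖ T
  let q : (Fin n → Rᵐᵒᵖ) →ₗ[Rᵐᵒᵖ] T := e.symm ∘ₗ L.mkQ
  have hq : Function.Surjective q := e.symm.surjective.comp L.mkQ_surjective
  have hker : LinearMap.ker q = L := (LinearEquiv.ker_comp e.symm L.mkQ).trans L.ker_mkQ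
  have : Projective (ModuleCat.of Rᵐᵒᵖ (Fin n → Rᵐᵒᵖ)) :=
    (IsProjective.iff_projective _).1 inferInstance
  refine subsingleton_ext_of_forall_exists_extension (LinearMap.shortExact_shortComplexKer hq)
    (Abelian.Ext.subsingleton_of_projective (ModuleCat.of Rᵐᵒᵖ (Fin n → Rᵐᵒᵖ)) _ 0) fun φ => ?_
  have := hπ _ ⟨(⟨n, LinearMap.ker q, hker.symm ▸ hL⟩ :
    Σ n : ℕ, {L : Submodule Rᵐᵒᵖ (Fin n → Rᵐᵒᵖ) // L.FG})⟩
  have sq : CommSq (φ ≫ ModuleCat.ofHom (LinearMap.ker π.hom).subtype)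
      (ModuleCat.ofHom (LinearMap.ker q).subtype) π 0 :=
    ⟨by ext x; exact (φ x).2⟩
  refine ⟨ModuleCat.ofHom (LinearMap.codRestrict _ sq.lift.hom fun x => ?_), ?_⟩
  · exact LinearMap.congr_fun (congrArg ModuleCat.Hom.hom sq.fac_right) x
  · ext x
    exact LinearMap.congr_fun (congrArg ModuleCat.Hom.hom sq.fac_left) x

/-- The small object argument factors `0 ⟶ P` through a relative cell complex `0 ⟶ F` and a
surjection `F ⟶ P` with fp-injective kernel, which splits. -/
theorem FpProjective.exists_retract_isHillFamily {P : RightMod R} (hP : FpProjective R P) :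
    ∃ (F : RightMod R) (s : P ⟶ F) (p : F ⟶ P) (𝓗 : Set (Submodule Rᵐᵒᵖ F)),
      s ≫ p = 𝟙 P ∧ IsHillFamily 𝓗 := by
  let I := fgInclusions Rᵐᵒᵖ
  let κ := I.smallObjectκ
  have : Fact κ.IsRegular := MorphismProperty.smallObjectκ_isRegular I
  let Z : RightMod R := .of _ PUnit
  let π := SmallObject.πObj I κ (0 : Z ⟶ P)
  have hπ : I.rlp π := SmallObject.rlp_πObj I κ _
  obtain ⟨s, hs⟩ := exists_lift_of_subsingleton_ext
    (LinearMap.shortExact_shortComplexKer (surjective_of_rlp_fgInclusions hπ))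
    (hP _ (fpInjective_ker_of_rlp_fgInclusions hπ)) (𝟙 P)
  obtain ⟨𝓗, h𝓗⟩ := exists_isHillFamily_of_relativeCellComplex
    (SmallObject.relativeCellComplexιObj I κ (0 : Z ⟶ P)) (ModuleCat.isZero_of_subsingleton Z)
    (fun a => mono_of_fgInclusions a.2)
    (fun a => (finite_and_finitePresentation_of_fgInclusions a.2).1)
    (fun a => (finite_and_finitePresentation_of_fgInclusions a.2).2)
  exact ⟨_, s, π, 𝓗, hs, h𝓗⟩

end FpProjective

section Cocycles

lemma exists_chainMap_of_injective {C : Type*} [Category C] [Abelian C] {X Y : ℕ → C}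
    {δ : ∀ i, X i ⟶ X (i + 1)} {D : ∀ i, Y i ⟶ Y (i + 1)} [∀ i, Injective (Y (i + 1))]
    (hδ : ∀ i, δ i ≫ δ (i + 1) = 0) (hexact : ∀ i, (ShortComplex.mk _ _ (hδ i)).Exact)
    (hD : ∀ i, D i ≫ D (i + 1) = 0) (f₀ : X 0 ⟶ Y 0) (hf₀ : kernel.ι (δ 0) ≫ f₀ ≫ D 0 = 0) :
    ∃ f : ∀ i, X i ⟶ Y i, f 0 = f₀ ∧ ∀ i, f i ≫ D i = δ i ≫ f (i + 1) := by
  have exists_next (i : ℕ) (g : X i ⟶ Y i) (hg : kernel.ι (δ i) ≫ g ≫ D i = 0) :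
      ∃ g' : X (i + 1) ⟶ Y (i + 1), kernel.ι (δ (i + 1)) ≫ g' ≫ D (i + 1) = 0 ∧
        g ≫ D i = δ i ≫ g' := by
    have hdesc := (ShortComplex.exact_kernel (δ i)).comp_descToInjective (g ≫ D i) hg
    have : Epi (kernel.lift (δ (i + 1)) (δ i) (hδ i)) := (hexact i).epi_kernelLift
    refine ⟨_, ?_, hdesc.symm⟩
    rw [← cancel_epi (kernel.lift (δ (i + 1)) (δ i) (hδ i)), kernel.lift_ι_assoc,
      reassoc_of% hdesc, hD, comp_zero, comp_zero]
  choose next hnext hcomm using exists_next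
  let f : ∀ i, {g : X i ⟶ Y i // kernel.ι (δ i) ≫ g ≫ D i = 0} :=
    Nat.rec ⟨f₀, hf₀⟩ fun i g => ⟨next i g.1 g.2, hnext i g.1 g.2⟩
  exact ⟨fun i => (f i).1, rfl, fun i => hcomm i (f i).1 (f i).2⟩

variable {R : Type u} [Ring R]

lemma StronglyFpInjective.isFPInjectiveTarget {J : RightMod R} (hJ : StronglyFpInjective R J)
    (I : InjectiveResolution J) :
    IsFPInjectiveTarget fun i => (I.cocomplex.d i (i + 1)).hom where
  comp_eq_zero i := congrArg ModuleCat.Hom.hom (I.cocomplex.d_comp_d _ _ _)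
  exists_extension i M N _ _ _ _ j hj _ h := by
    have : Mono (ModuleCat.ofHom j) := (ModuleCat.mono_iff_injective _).2 hj
    have : Injective (ModuleCat.of Rᵐᵒᵖ (I.cocomplex.X i)) := I.injective i
    exact ⟨_, congrArg ModuleCat.Hom.hom
      (Injective.comp_factorThru (ModuleCat.ofHom h) (ModuleCat.ofHom j))⟩
  exists_lift i T _ _ hT v hv := by
    have hv' : ModuleCat.ofHom v ≫ I.cocomplex.d (i + 1) (i + 2) = 0 := ModuleCat.hom_ext hv
    have := hJ (.of _ T) hT (i + 1) (Nat.le_add_left 1 i)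
    obtain ⟨w, hw⟩ := (I.extMk_eq_zero_iff _ (i + 2) rfl hv' i rfl).1 (Subsingleton.elim _ _)
    exact ⟨w.hom, congrArg ModuleCat.Hom.hom hw⟩

lemma IsFPInjectiveTarget.exists_nullHomotopy_of_fpProjective {P : ℕ → RightMod R}
    (hP : ∀ i, FpProjective R (P i)) {d : ∀ i, P i →ₗ[Rᵐᵒᵖ] P (i + 1)}
    (hd : ∀ i, d (i + 1) ∘ₗ d i = 0) {X : ℕ → Type u} [∀ i, AddCommGroup (X i)]
    [∀ i, Module Rᵐᵒᵖ (X i)] {D : ∀ i, X i →ₗ[Rᵐᵒᵖ] X (i + 1)} (hD : IsFPInjectiveTarget D)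
    {f : ∀ i, P i →ₗ[Rᵐᵒᵖ] X (i + 1)} (hf : ∀ i, D (i + 1) ∘ₗ f i = f (i + 1) ∘ₗ d i) :
    ∃ h : ∀ i, P i →ₗ[Rᵐᵒᵖ] X i, ∀ i, f i = D i ∘ₗ h i + h (i + 1) ∘ₗ d i := by
  choose F s p 𝓗 hsp h𝓗 using fun i => (hP i).exists_retract_isHillFamily
  have hps (i : ℕ) (x : P i) : (p i).hom ((s i).hom x) = x :=
    LinearMap.congr_fun (congrArg ModuleCat.Hom.hom (hsp i)) x
  obtain ⟨h, hh⟩ := hD.exists_nullHomotopy_of_isHillFamily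
    (d := fun i => (s (i + 1)).hom ∘ₗ d i ∘ₗ (p i).hom) (f := fun i => f i ∘ₗ (p i).hom)
    (fun i => by
      ext x
      simpa [hps] using congrArg (s (i + 2)).hom (LinearMap.congr_fun (hd i) ((p i).hom x)))
    (fun i => by
      ext x
      simpa [hps] using LinearMap.congr_fun (hf i) ((p i).hom x)) h𝓗
  refine ⟨fun i => h i ∘ₗ (s i).hom, fun i => ?_⟩
  ext x
  simpa [hps] using LinearMap.congr_fun (hh i) ((s i).hom x)

theorem weaklyFpProjective_kernel_of_exact {P : ℕ → RightMod R} {d : ∀ i, P i ⟶ P (i + 1)}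
    (hd : ∀ i, d i ≫ d (i + 1) = 0) (hexact : ∀ i, (ShortComplex.mk _ _ (hd i)).Exact)
    (hP : ∀ i, FpProjective R (P i)) : WeaklyFpProjective R (kernel (d 0)) := by
  intro J hJ
  let I := injectiveResolution J
  refine subsingleton_of_forall_eq 0 fun x => ?_
  obtain ⟨α, hα, rfl⟩ := I.extMk_surjective x 2 rfl
  rw [I.extMk_eq_zero_iff α 2 rfl hα 0 rfl]
  have hfactor := Injective.comp_factorThru α (kernel.ι (d 0))
  obtain ⟨f, hf0, hf⟩ := exists_chainMap_of_injective (Y := fun i => I.cocomplex.X (i + 1))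
    hd hexact (fun i => I.cocomplex.d_comp_d _ _ _) (Injective.factorThru α (kernel.ι (d 0)))
    (by rw [reassoc_of% hfactor, hα])
  obtain ⟨h, hh⟩ := (hJ.isFPInjectiveTarget I).exists_nullHomotopy_of_fpProjective hP
    (d := fun i => (d i).hom) (f := fun i => (f i).hom)
    (fun i => congrArg ModuleCat.Hom.hom (hd i)) fun i => congrArg ModuleCat.Hom.hom (hf i)
  have hh0 : f 0 = ModuleCat.ofHom (h 0) ≫ I.cocomplex.d 0 1 + d 0 ≫ ModuleCat.ofHom (h 1) :=
    ModuleCat.hom_ext (hh 0)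
  refine ⟨kernel.ι (d 0) ≫ ModuleCat.ofHom (h 0), ?_⟩
  rw [← hfactor, ← hf0, hh0, Preadditive.comp_add, kernel.condition_assoc, zero_comp, add_zero,
    Category.assoc]

theorem cocycles_weaklyFpProjective_general (P : CochainComplex (RightMod R) ℤ) (n : ℤ)
    (hexact : ∀ i > n, P.ExactAt i) (hfpproj : ∀ i ≥ n, FpProjective R (P.X i)) :
    WeaklyFpProjective R (kernel (P.d n (n + 1))) := by
  -- A recursive form of `i ↦ n + i`, so that `deg (i + 1)` is definitionally `deg i + 1`.
  let deg : ℕ → ℤ := Nat.rec n fun _ k => k + 1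
  have le_deg (i : ℕ) : n ≤ deg i := by
    induction i with
    | zero => exact le_rfl
    | succ i ih => exact ih.trans (Int.le_add_one le_rfl)
  exact weaklyFpProjective_kernel_of_exact (P := fun i => P.X (deg i))
    (d := fun i => P.d (deg i) (deg i + 1)) (fun i => P.d_comp_d _ _ _)
    (fun i => (P.exactAt_iff' _ _ _ (ComplexShape.prev_eq' _ rfl)
      (ComplexShape.next_eq' _ rfl)).1
      (hexact (deg (i + 1)) (Int.lt_add_one_of_le (le_deg i))))
    fun i => hfpproj _ (le_deg i)

end Cocycles

/-- In an acyclic complex of fp-projective right `R`-modules, all the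
modules of cocycles `Z^n = ker (P^n → P^{n+1})` are weakly fp-projective. -/
theorem cocycles_weaklyFpProjective {R : Type u} [Ring R]
    (P : CochainComplex (RightMod R) ℤ)
    (hacyclic : ∀ n : ℤ, P.ExactAt n)
    (hfpproj : ∀ n : ℤ, FpProjective R (P.X n)) :
    ∀ n : ℤ, WeaklyFpProjective R (kernel (P.d n (n + 1))) :=
  fun n => cocycles_weaklyFpProjective_general P n (fun i _ => hacyclic i) fun i _ => hfpproj i

end Stmt1
end

section
/- Let R be an associative ring, let P^• be a complex of fp-projective right R-modules, and let J^• be an acyclic complex of fp-injective right R-modules whose modules of cocycles are all fp-injective. Then every morphism of complexes P^• → J^• is homotopic to zero. -/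
/-!
STATEMENT 2: Let R be an associative ring, let P^• be a complex of
fp-projective right R-modules, and let J^• be an acyclic complex of
fp-injective right R-modules whose modules of cocycles are all fp-injective.
Then every morphism of complexes P^• → J^• is homotopic to zero.

Right `R`-modules are formalized as modules over the opposite ring `Rᵐᵒᵖ`.
-/

open CategoryTheory Limits

universe u

namespace Stmt2

variable (R : Type u) [Ring R]

/-- The category of right `R`-modules. -/
abbrev RightMod := ModuleCat.{u} Rᵐᵒᵖ

instance : HasExt.{u + 1} (RightMod R) := by
  letI := HasDerivedCategory.standard (RightMod R)
  exact hasExt_of_hasDerivedCategory _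

/-- A right `R`-module `J` is fp-injective if `Ext¹(T, J) = 0` for every
finitely presented right `R`-module `T`. -/
def FpInjective (J : RightMod R) : Prop :=
  ∀ T : RightMod R, Module.FinitePresentation Rᵐᵒᵖ T →
    Subsingleton (Abelian.Ext T J 1)

/-- A right `R`-module `P` is fp-projective if `Ext¹(P, J) = 0` for every
fp-injective right `R`-module `J`. -/
def FpProjective (P : RightMod R) : Prop :=
  ∀ J : RightMod R, FpInjective R J → Subsingleton (Abelian.Ext P J 1)

/-!
By the small object argument applied to the inclusions of finitely generated submodules into finite
free modules, an fp-projective module `P` receives an epimorphism from a module `B` filtered by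
finitely presented modules, and the kernel of `B → P` is fp-injective, so that `P` is a retract of
`B`. The Hill lemma turns the filtration of `B` into a family of submodules which is closed under
sums and whose members can be enlarged by finitely presented extensions to contain any given
element.

After replacing a complex of fp-projective modules by one with terms `Bⁿ`, a null-homotopy is built
by Zorn's lemma on subcomplexes with terms in the Hill families. Such a subcomplex can be enlarged
by a complex of finitely presented modules `T`, and a null-homotopy extends along the enlargement:
its components extend because `Ext¹(Tⁱ, Jʲ) = 0`, and the resulting error `T → J` is null-homotopic
because `Hom(M, J)` is acyclic for every finitely presented `M`.
-/

section ExtOne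

universe v w

variable {C : Type w} [Category.{v} C] [Abelian C] [HasExt.{u} C]
  {S : ShortComplex C}

lemma exists_lift_of_subsingleton_ext (hS : S.ShortExact) {T : C}
    [Subsingleton (Abelian.Ext T S.X₁ 1)] (f : T ⟶ S.X₃) : ∃ g : T ⟶ S.X₂, g ≫ S.g = f := by
  obtain ⟨x, hx⟩ := Abelian.Ext.covariant_sequence_exact₃ T hS (Abelian.Ext.mk₀ f) (zero_add 1)
    (Subsingleton.elim _ _)
  obtain ⟨g, rfl⟩ := Abelian.Ext.addEquiv₀.symm.surjective x
  exact ⟨g, Abelian.Ext.addEquiv₀.symm.injective ((Abelian.Ext.mk₀_comp_mk₀ g S.g).symm.trans hx)⟩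

lemma exists_extension_of_subsingleton_ext (hS : S.ShortExact) {J : C}
    [Subsingleton (Abelian.Ext S.X₃ J 1)] (f : S.X₁ ⟶ J) : ∃ g : S.X₂ ⟶ J, S.f ≫ g = f := by
  obtain ⟨x, hx⟩ := Abelian.Ext.contravariant_sequence_exact₁ hS J (Abelian.Ext.mk₀ f) (add_zero 1)
    (Subsingleton.elim _ _)
  obtain ⟨g, rfl⟩ := Abelian.Ext.addEquiv₀.symm.surjective x
  exact ⟨g, Abelian.Ext.addEquiv₀.symm.injective ((Abelian.Ext.mk₀_comp_mk₀ S.f g).symm.trans hx)⟩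

lemma subsingleton_ext_of_exists_extension (hS : S.ShortExact) [Projective S.X₂] {J : C}
    (hJ : ∀ f : S.X₁ ⟶ J, ∃ g : S.X₂ ⟶ J, S.f ≫ g = f) :
    Subsingleton (Abelian.Ext S.X₃ J 1) := by
  refine subsingleton_of_forall_eq 0 fun x => ?_
  obtain ⟨y, rfl⟩ := Abelian.Ext.contravariant_sequence_exact₃ hS J x
    (Abelian.Ext.eq_zero_of_projective _) (add_zero 1)
  obtain ⟨f, rfl⟩ := Abelian.Ext.addEquiv₀.symm.surjective y
  obtain ⟨g, rfl⟩ := hJ f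
  change hS.extClass.comp (Abelian.Ext.mk₀ _) _ = 0
  rw [← Abelian.Ext.mk₀_comp_mk₀]
  exact hS.extClass_comp_assoc _

end ExtOne

section HomAcyclic

universe v w

/-- A cochain complex `J` is `𝒯`-Hom-acyclic if the complexes `Hom(T, J)` are acyclic for all
objects `T` of the class `𝒯`. -/
def IsHomAcyclic {C : Type w} [Category.{v} C] [Preadditive C] (𝒯 : ObjectProperty C)
    (J : CochainComplex C ℤ) : Prop :=
  ∀ ⦃i j k : ℤ⦄, i + 1 = j → j + 1 = k → ∀ ⦃T : C⦄, 𝒯 T → ∀ f : T ⟶ J.X j,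
    f ≫ J.d j k = 0 → ∃ g : T ⟶ J.X i, g ≫ J.d i j = f

variable {C : Type w} [Category.{v} C] [Abelian C] {𝒯 : ObjectProperty C}
  {J : CochainComplex C ℤ}

lemma IsHomAcyclic.of_subsingleton_ext_kernel [HasExt.{u} C] (hJ : ∀ n, J.ExactAt n)
    (hT : ∀ n T, 𝒯 T → Subsingleton (Abelian.Ext T (kernel (J.d n (n + 1))) 1)) :
    IsHomAcyclic 𝒯 J := by
  rintro i _ _ rfl rfl T hTT f hf
  have hexact := (J.exactAt_iff' i (i + 1) (i + 1 + 1) (by simp) (by simp)).1 (hJ (i + 1))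
  let p : J.X i ⟶ kernel (J.d (i + 1) (i + 1 + 1)) :=
    kernel.lift _ (J.d i (i + 1)) (J.d_comp_d _ _ _)
  have hp : p ≫ kernel.ι _ = J.d i (i + 1) := kernel.lift_ι _ _ _
  let S := ShortComplex.mk (kernel.ι (J.d i (i + 1))) p (by
    rw [← cancel_mono (kernel.ι _), Category.assoc, hp, kernel.condition, zero_comp])
  have hS : S.ShortExact :=
    { exact := S.exact_of_f_is_kernel <|
        isKernelOfComp (kernel.ι _) _ (kernelIsKernel (J.d i (i + 1))) S.zero hp
      mono_f := inferInstanceAs (Mono (kernel.ι _))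
      epi_g := (ShortComplex.exact_iff_epi_kernel_lift _).1 hexact }
  have := hT i T hTT
  obtain ⟨g, hg⟩ := exists_lift_of_subsingleton_ext hS (kernel.lift _ f hf)
  exact ⟨g, by rw [← hp, ← Category.assoc, hg, kernel.lift_ι]⟩

lemma IsHomAcyclic.exists_lift_of_comp_eq_zero (hJ : IsHomAcyclic 𝒯 J) {i j k : ℤ}
    (hij : i + 1 = j) (hjk : j + 1 = k) {A B : C} (a : A ⟶ B) (ha : 𝒯 (cokernel a))
    (f : B ⟶ J.X j) (haf : a ≫ f = 0) (hf : f ≫ J.d j k = 0) :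
    ∃ g : B ⟶ J.X i, a ≫ g = 0 ∧ g ≫ J.d i j = f := by
  obtain ⟨g, hg⟩ := hJ hij hjk ha (cokernel.desc a f haf) (by
    rw [← cancel_epi (cokernel.π a), ← Category.assoc, cokernel.π_desc, hf, comp_zero])
  exact ⟨cokernel.π a ≫ g, by rw [← Category.assoc, cokernel.condition, zero_comp],
    by rw [Category.assoc, hg, cokernel.π_desc]⟩

theorem IsHomAcyclic.nonempty_homotopy_zero (hJ : IsHomAcyclic 𝒯 J)
    {K : CochainComplex C ℤ} (hK : ∀ n, 𝒯 (K.X n))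
    (hcoker : ∀ m n, 𝒯 (cokernel (K.d m n))) (φ : K ⟶ J) : Nonempty (Homotopy φ 0) := by
  -- `φ - r` is a cocycle in each degree because `r` and `φ` have the same coboundary, while `r`
  -- kills the coboundaries of `K`; so lifts can be chosen degree by degree, without induction.
  have exists_r (j : ℤ) : ∃ r : K.X j ⟶ J.X j,
      K.d (j - 1) j ≫ r = 0 ∧ r ≫ J.d j (j + 1) = φ.f j ≫ J.d j (j + 1) :=
    hJ.exists_lift_of_comp_eq_zero rfl rfl _ (hcoker _ _) _ (by simp) (by simp)
  choose r hdr hrd using exists_r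
  replace hdr (i j : ℤ) (hij : i + 1 = j) : K.d i j ≫ r j = 0 := by
    obtain rfl : i = j - 1 := by lia
    exact hdr j
  have exists_x (i j : ℤ) (hij : i + 1 = j) :
      ∃ x : K.X j ⟶ J.X i, x ≫ J.d i j = φ.f j - r j :=
    hJ hij rfl (hK j) _ (by rw [Preadditive.sub_comp, hrd, sub_self])
  choose! x hx using exists_x
  have exists_y (i j : ℤ) (hij : i + 1 = j) : ∃ y : K.X j ⟶ J.X i,
      K.d i j ≫ y = 0 ∧ y ≫ J.d i j = r j - K.d j (j + 1) ≫ x j (j + 1) := by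
    refine hJ.exists_lift_of_comp_eq_zero hij rfl _ (hcoker _ _) _ ?_ ?_
    · simp [hdr i j hij]
    · simp [hx _ _ rfl, hrd, hdr _ _ rfl]
  choose! y hdy hyd using exists_y
  have hφ : φ = Homotopy.nullHomotopicMap' fun i j _ => x j i + y j i := by
    ext j
    obtain ⟨i, hij⟩ : ∃ i, i + 1 = j := ⟨j - 1, sub_add_cancel j 1⟩
    rw [Homotopy.nullHomotopicMap'_f hij rfl, Preadditive.comp_add, hdy _ _ rfl,
      Preadditive.add_comp, hx _ _ hij, hyd _ _ hij]
    abel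
  exact ⟨(Homotopy.ofEq hφ).trans (Homotopy.nullHomotopy' _)⟩

end HomAcyclic

section ExtendHomotopy

universe v w

variable {C : Type w} [Category.{v} C] [Abelian C] {J : CochainComplex C ℤ}

lemma exists_homotopy_extension {S : ShortComplex (CochainComplex C ℤ)} (hS : S.ShortExact)
    (hext : ∀ i j, ∀ f : S.X₁.X i ⟶ J.X j, ∃ g : S.X₂.X i ⟶ J.X j, S.f.f i ≫ g = f)
    (hnull : ∀ ψ : S.X₃ ⟶ J, Nonempty (Homotopy ψ 0)) (φ : S.X₂ ⟶ J)
    (h : Homotopy (S.f ≫ φ) 0) :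
    ∃ h' : Homotopy φ 0, ∀ i j, S.f.f i ≫ h'.hom i j = h.hom i j := by
  choose t ht using fun i j => hext i j (h.hom i j)
  have := hS.epi_g
  let τ : S.X₂ ⟶ J := Homotopy.nullHomotopicMap' fun i j _ => t i j
  have hτ : S.f ≫ τ = S.f ≫ φ := by
    rw [Homotopy.comp_nullHomotopicMap']
    ext j
    rw [Homotopy.nullHomotopicMap'_f (sub_add_cancel j 1) rfl, h.comm,
      dNext_eq _ (show (ComplexShape.up ℤ).Rel j (j + 1) from rfl),
      prevD_eq _ (show (ComplexShape.up ℤ).Rel (j - 1) j from sub_add_cancel j 1)]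
    simp [ht]
  have hker : S.f ≫ (φ - τ) = 0 := by rw [Preadditive.comp_sub, hτ, sub_self]
  obtain ⟨k⟩ := hnull (hS.exact.desc (φ - τ) hker)
  have hφ : φ = τ + S.g ≫ hS.exact.desc (φ - τ) hker := by simp
  refine ⟨(Homotopy.ofEq hφ).trans (((Homotopy.nullHomotopy' _).add (k.compLeft S.g)).trans
    (Homotopy.ofEq (by simp))), fun i j => ?_⟩
  have hfg : S.f.f i ≫ S.g.f i = 0 := by rw [← HomologicalComplex.comp_f, S.zero]; rfl
  by_cases hij : j + 1 = i
  · simp [hij, ht, reassoc_of% hfg]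
  · rw [h.zero i j hij, Homotopy.zero _ i j hij, comp_zero]

end ExtendHomotopy

section ComplexOfRetracts

universe v w t

variable {C : Type w} [Category.{v} C] [HasZeroMorphisms C] {ι : Type t} {c : ComplexShape ι}
  (P : HomologicalComplex C c) {B : ι → C} (h : ∀ i, Retract (P.X i) (B i))

/-- The complex with terms `B i` obtained from a complex `P` whose terms are retracts of the
`B i`: its differential retracts onto `P`, applies the differential of `P` and includes back. -/
def complexOfRetracts : HomologicalComplex C c where
  X := B
  d i j := (h i).r ≫ P.d i j ≫ (h j).i
  shape i j hij := by simp [P.shape i j hij]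

/-- A complex whose terms are retracts of the objects `B i` is a retract of the complex
`complexOfRetracts` on these objects. -/
def retractComplexOfRetracts : Retract P (complexOfRetracts P h) where
  i := { f := fun i => (h i).i, comm' := by simp [complexOfRetracts] }
  r := { f := fun i => (h i).r, comm' := by simp [complexOfRetracts] }
  retract := by ext i; exact (h i).retract

end ComplexOfRetracts

section FPExtension

variable {S M : Type*} [Ring S] [AddCommGroup M] [Module S M]

/-- `IsFPExtension N N'` says that the subquotient `N' / (N ∩ N')` is finitely presented. It is used
for `N ≤ N'`, as the relation that `N'` is obtained from `N` by a finitely presented extension. -/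
def IsFPExtension (N N' : Submodule S M) : Prop :=
  Module.FinitePresentation S (N' ⧸ N.submoduleOf N')

namespace IsFPExtension

variable {N N' N'' : Submodule S M}

lemma refl (N : Submodule S M) : IsFPExtension N N := by
  have : Subsingleton (N ⧸ N.submoduleOf N) := by
    rw [Submodule.Quotient.subsingleton_iff, Submodule.submoduleOf_self]
  exact .of_subsingleton _

lemma trans (h : N ≤ N') (h' : N' ≤ N'') (hN : IsFPExtension N N') (hN' : IsFPExtension N' N'') :
    IsFPExtension N N'' := by
  let f : (N' ⧸ N.submoduleOf N') →ₗ[S] N'' ⧸ N.submoduleOf N'' :=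
    Submodule.mapQ _ _ (Submodule.inclusion h') fun _ hx => hx
  let g : (N'' ⧸ N.submoduleOf N'') →ₗ[S] N'' ⧸ N'.submoduleOf N'' :=
    Submodule.factor (Submodule.comap_mono h)
  have hf : Function.Injective f := by
    rw [← LinearMap.ker_eq_bot]
    exact Submodule.ker_liftQ_eq_bot' _ _ (by rw [LinearMap.ker_comp, Submodule.ker_mkQ]; rfl)
  have hfg : LinearMap.ker g = LinearMap.range f := by
    have hrange : LinearMap.range (Submodule.inclusion h') = N'.submoduleOf N'' :=
      Submodule.range_inclusion _ _ _
    exact (Submodule.ker_mapQ ..).trans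
      ((congrArg _ hrange.symm).trans (Submodule.range_mapQ ..).symm)
  have : Module.FinitePresentation S (N'' ⧸ N'.submoduleOf N'') := hN'
  have : Module.FinitePresentation S (N' ⧸ N.submoduleOf N') := hN
  have : Module.FinitePresentation S (LinearMap.ker g) :=
    .of_equiv ((LinearEquiv.ofInjective f hf).trans (LinearEquiv.ofEq _ _ hfg.symm))
  exact Module.finitePresentation_of_ker g (Submodule.factor_surjective _)

lemma of_inf_left (h : IsFPExtension (N' ⊓ N) N') : IsFPExtension N (N' ⊔ N) :=
  (LinearMap.quotientInfEquivSupQuotient N' N).finitePresentation_iff.1 h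

lemma exists_le_sup (h : IsFPExtension N N') : ∃ F : Submodule S M, F.FG ∧ N' ≤ N ⊔ F := by
  have : Module.FinitePresentation S (N' ⧸ N.submoduleOf N') := h
  obtain ⟨n, s, hs⟩ := Module.Finite.exists_fin (R := S) (M := N' ⧸ N.submoduleOf N')
  obtain ⟨t, rfl⟩ := (N.submoduleOf N').mkQ_surjective.comp_left s
  rw [Set.range_comp, ← Submodule.map_span, Submodule.map_mkQ_eq_top] at hs
  refine ⟨(Submodule.span S (Set.range t)).map N'.subtype,
    (Submodule.fg_span (Set.finite_range t)).map _, ?_⟩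
  calc N' = (⊤ : Submodule S N').map N'.subtype := N'.map_subtype_top.symm
    _ = (N.submoduleOf N').map N'.subtype ⊔ (Submodule.span S (Set.range t)).map N'.subtype := by
      rw [← hs, Submodule.map_sup]
    _ ≤ _ := sup_le_sup_right (Submodule.map_comap_le _ _) _

end IsFPExtension

end FPExtension

section Subcomplex

universe v t

variable {S : Type u} [Ring S] {α : Type t} {c : ComplexShape α}

/-- A family of submodules of the terms of a complex is a subcomplex if the differentials preserve
it. -/
def IsSubcomplex (Q : HomologicalComplex (ModuleCat.{v} S) c) (N : ∀ i, Submodule S (Q.X i)) :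
    Prop :=
  ∀ i j, N i ≤ (N j).comap (Q.d i j).hom

namespace IsSubcomplex

variable {Q : HomologicalComplex (ModuleCat.{v} S) c} {N N' : ∀ i, Submodule S (Q.X i)}

/-- The complex formed by the submodules `N i` and the restricted differentials. -/
def complex (hN : IsSubcomplex Q N) : HomologicalComplex (ModuleCat.{v} S) c where
  X i := .of S (N i)
  d i j := ModuleCat.ofHom ((Q.d i j).hom.restrict (hN i j))
  shape i j hij := by
    ext x
    exact ConcreteCategory.congr_hom (Q.shape i j hij) x.1
  d_comp_d' i j k _ _ := by
    ext x
    exact ConcreteCategory.congr_hom (Q.d_comp_d i j k) x.1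

/-- The inclusion of a subcomplex. -/
def ι (hN : IsSubcomplex Q N) : hN.complex ⟶ Q where
  f i := ModuleCat.ofHom (N i).subtype

/-- The inclusion of a subcomplex into a larger one. -/
def inclusion (hN : IsSubcomplex Q N) (hN' : IsSubcomplex Q N') (h : ∀ i, N i ≤ N' i) :
    hN.complex ⟶ hN'.complex where
  f i := ModuleCat.ofHom (Submodule.inclusion (h i))

/-- The morphism from a complex to the subcomplex of all its elements. -/
def toComplexOfEqTop (hN : IsSubcomplex Q N) (h : ∀ i, N i = ⊤) : Q ⟶ hN.complex where
  f i := ModuleCat.ofHom (LinearMap.codRestrict (N i) LinearMap.id (by simp [h]))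

end IsSubcomplex

end Subcomplex

section HillFamily

/-- A *Hill family* of submodules is a family closed under sums whose members can be enlarged, by
finitely presented extensions within the family, so as to contain any given finitely generated
submodule. The name refers to the Hill lemma, which constructs such families out of filtrations. -/
structure IsHillFamily {S M : Type*} [Ring S] [AddCommGroup M] [Module S M]
    (H : Set (Submodule S M)) : Prop where
  sSup_mem : ∀ c ⊆ H, sSup c ∈ H
  exists_extension : ∀ N ∈ H, ∀ F : Submodule S M, F.FG →
    ∃ N' ∈ H, N ⊔ F ≤ N' ∧ IsFPExtension N N'

lemma IsHillFamily.bot_mem {S M : Type*} [Ring S] [AddCommGroup M] [Module S M]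
    {H : Set (Submodule S M)} (hH : IsHillFamily H) : ⊥ ∈ H := by
  simpa using hH.sSup_mem ∅ (Set.empty_subset _)

end HillFamily

section PartialNullHomotopy

universe v

variable {S : Type u} [Ring S] {Q J : CochainComplex (ModuleCat.{v} S) ℤ}

/-- The family `s` of partially defined maps is a null-homotopy of `φ` restricted to the subcomplex
with terms `(s i).domain`. The map `s i` takes values in the product of all the terms of `J`, where
only the component of degree `i - 1` may be nonzero; this avoids identifying `(i - 1) + 1` with `i`
in dependent types. -/
def IsPartialNullHomotopy (φ : Q ⟶ J) (s : ∀ i, Q.X i →ₗ.[S] ∀ j, J.X j) : Prop :=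
  ∀ ⦃i j k : ℤ⦄, i + 1 = j → j + 1 = k → ∀ ⦃x y⦄, (x, y) ∈ (s j).graph →
    (∀ l, l + 1 ≠ j → y l = 0) ∧
    ∃ z, (Q.d j k x, z) ∈ (s k).graph ∧ φ.f j x = J.d i j (y i) + z j

namespace IsPartialNullHomotopy

variable {φ : Q ⟶ J} {s : ∀ i, Q.X i →ₗ.[S] ∀ j, J.X j}

lemma isSubcomplex (hs : IsPartialNullHomotopy φ s) : IsSubcomplex Q fun i => (s i).domain := by
  intro j k x hx
  by_cases hjk : j + 1 = k
  · obtain ⟨-, z, hz, -⟩ := hs (sub_add_cancel j 1) hjk ((s j).mem_graph ⟨x, hx⟩)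
    exact LinearPMap.mem_domain_of_mem_graph hz
  · simp [Q.shape j k hjk]

lemma exists_homotopy (hs : IsPartialNullHomotopy φ s) :
    ∃ h : Homotopy (hs.isSubcomplex.ι ≫ φ) 0, ∀ i j (x : (s i).domain), h.hom i j x = s i x j := by
  let t (i j : ℤ) : hs.isSubcomplex.complex.X i ⟶ J.X j :=
    ModuleCat.ofHom (LinearMap.proj j ∘ₗ (s i).toFun)
  refine ⟨{
    hom := t
    zero := fun i j hij => ?_
    comm := fun j => ?_ }, fun i j x => rfl⟩
  · ext x
    exact (hs (sub_add_cancel i 1) rfl ((s i).mem_graph x)).1 j hij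
  · rw [dNext_eq _ (show (ComplexShape.up ℤ).Rel j (j + 1) from rfl),
      prevD_eq _ (show (ComplexShape.up ℤ).Rel (j - 1) j from sub_add_cancel j 1),
      HomologicalComplex.zero_f, add_zero]
    ext x
    obtain ⟨-, z, hz, hxz⟩ := hs (sub_add_cancel j 1) rfl ((s j).mem_graph x)
    obtain rfl : s (j + 1) ⟨Q.d j (j + 1) x.1, hs.isSubcomplex j (j + 1) x.2⟩ = z :=
      LinearPMap.mem_graph_snd_inj _ ((s (j + 1)).mem_graph _) hz rfl
    exact hxz.trans (add_comm _ _)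

lemma of_homotopy {N : ∀ i, Submodule S (Q.X i)} (hN : IsSubcomplex Q N)
    (h : Homotopy (hN.ι ≫ φ) 0) :
    IsPartialNullHomotopy φ fun i => ⟨N i, LinearMap.pi fun j => (h.hom i j).hom⟩ := by
  rintro i j k hij hjk x y hxy
  obtain ⟨x, rfl, rfl⟩ := (LinearPMap.mem_graph_iff _).1 hxy
  have hcomm := h.comm j
  rw [dNext_eq _ (show (ComplexShape.up ℤ).Rel j k from hjk),
    prevD_eq _ (show (ComplexShape.up ℤ).Rel i j from hij),
    HomologicalComplex.zero_f, add_zero] at hcomm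
  exact ⟨fun l hl => ConcreteCategory.congr_hom (h.zero j l hl) x, _,
    LinearPMap.mem_graph _ ⟨Q.d j k x.1, hN j k x.2⟩,
    (ConcreteCategory.congr_hom hcomm x).trans (add_comm _ _)⟩

lemma sSup {c : Set (∀ i, Q.X i →ₗ.[S] ∀ j, J.X j)} (hc : ∀ i, DirectedOn (· ≤ ·) ((· i) '' c))
    (hne : c.Nonempty) (hφ : ∀ s ∈ c, IsPartialNullHomotopy φ s) :
    IsPartialNullHomotopy φ fun i => LinearPMap.sSup _ (hc i) := by
  have hle (t) (ht : t ∈ c) (i : ℤ) : (t i).graph ≤ (LinearPMap.sSup _ (hc i)).graph :=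
    LinearPMap.le_graph_of_le (LinearPMap.le_sSup (hc i) ⟨t, ht, rfl⟩)
  intro i j k hij hjk x y hxy
  obtain ⟨_, ⟨t, ht, rfl⟩, hx⟩ := (LinearPMap.mem_domain_sSup_iff (hne.image _) (hc j)).1
    (LinearPMap.mem_domain_of_mem_graph hxy)
  have hxt := (t j).mem_graph ⟨x, hx⟩
  obtain rfl : y = t j ⟨x, hx⟩ := LinearPMap.mem_graph_snd_inj _ hxy (hle t ht j hxt) rfl
  obtain ⟨hzero, z, hz, hxz⟩ := hφ t ht hij hjk hxt
  exact ⟨hzero, z, hle t ht k hz, hxz⟩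

end IsPartialNullHomotopy

end PartialNullHomotopy

section Extension

universe v w

variable {S : Type u} [Ring S]

/-- The class of finitely presented modules. -/
abbrev finitelyPresented (S : Type u) [Ring S] : ObjectProperty (ModuleCat.{v} S) :=
  fun T => Module.FinitePresentation S T

lemma finitelyPresented_cokernel {A B : ModuleCat.{v} S} (hA : finitelyPresented S A)
    (hB : finitelyPresented S B) (f : A ⟶ B) : finitelyPresented S (cokernel f) := by
  have : Module.FinitePresentation S A := hA
  have : Module.FinitePresentation S B := hB
  refine Module.finitePresentation_of_surjective (cokernel.π f).hom
    ((ModuleCat.epi_iff_surjective _).1 inferInstance) ?_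
  rw [← (ShortComplex.exact_cokernel f).moduleCat_range_eq_ker]
  exact Submodule.fg_range f.hom

variable {Q J : CochainComplex (ModuleCat.{v} S) ℤ}
  {φ : Q ⟶ J} {s : ∀ i, Q.X i →ₗ.[S] ∀ j, J.X j}

lemma IsSubcomplex.finitelyPresented_cokernel_inclusion
    {N N' : ∀ i, Submodule S (Q.X i)} (hN : IsSubcomplex Q N) (hN' : IsSubcomplex Q N')
    (h : ∀ i, N i ≤ N' i) (hfp : ∀ i, IsFPExtension (N i) (N' i)) (n : ℤ) :
    finitelyPresented S ((cokernel (hN.inclusion hN' h)).X n) := by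
  have hS := (ShortComplex.exact_cokernel (hN.inclusion hN' h)).map (HomologicalComplex.eval _ _ n)
  have : Module.FinitePresentation S (N' n ⧸ (N n).submoduleOf (N' n)) := hfp n
  let π : N' n →ₗ[S] (cokernel (hN.inclusion hN' h)).X n :=
    ((cokernel.π (hN.inclusion hN' h)).f n).hom
  have hπ : LinearMap.ker π = (N n).submoduleOf (N' n) :=
    hS.moduleCat_range_eq_ker.symm.trans (Submodule.range_inclusion _ _ (h n))
  exact .of_equiv ((Submodule.quotEquivOfEq _ _ hπ.symm).trans
    (π.quotKerEquivOfSurjective ((ModuleCat.epi_iff_surjective _).1 inferInstance)))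

lemma IsPartialNullHomotopy.exists_extension [HasExt.{w} (ModuleCat.{v} S)]
    (hJ : IsHomAcyclic (finitelyPresented S) J)
    (hext : ∀ n T, finitelyPresented S T → Subsingleton (Abelian.Ext T (J.X n) 1))
    (hs : IsPartialNullHomotopy φ s) {N : ∀ i, Submodule S (Q.X i)} (hN : IsSubcomplex Q N)
    (hle : ∀ i, (s i).domain ≤ N i) (hfp : ∀ i, IsFPExtension (s i).domain (N i)) :
    ∃ t : ∀ i, Q.X i →ₗ.[S] ∀ j, J.X j,
      IsPartialNullHomotopy φ t ∧ (∀ i, s i ≤ t i) ∧ ∀ i, (t i).domain = N i := by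
  let ι := hs.isSubcomplex.inclusion hN hle
  have hK := hs.isSubcomplex.finitelyPresented_cokernel_inclusion hN hle hfp
  have : Mono ι := HomologicalComplex.mono_of_mono_f _ fun i =>
    (ModuleCat.mono_iff_injective _).2 (Submodule.inclusion_injective (hle i))
  have hS : (ShortComplex.mk ι (cokernel.π ι) (cokernel.condition ι)).ShortExact :=
    { exact := ShortComplex.exact_cokernel ι }
  obtain ⟨h, hh⟩ := hs.exists_homotopy
  obtain ⟨h', hh'⟩ := exists_homotopy_extension hS
    (fun i j f =>
      have : Subsingleton (Abelian.Ext ((cokernel ι).X i) (J.X j) 1) := hext j _ (hK i)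
      exists_extension_of_subsingleton_ext
        (S := ⟨ι.f i, (cokernel.π ι).f i, _⟩)
        (hS.map_of_exact (HomologicalComplex.eval _ _ i)) f)
    (hJ.nonempty_homotopy_zero hK fun m n => finitelyPresented_cokernel (hK m) (hK n) _)
    (hN.ι ≫ φ) h
  refine ⟨_, .of_homotopy hN h', fun i => ⟨hle i, fun x y hxy => ?_⟩, fun _ => rfl⟩
  ext j
  obtain rfl : Submodule.inclusion (hle i) x = y := Subtype.ext hxy
  exact (hh i j x).symm.trans <| (ConcreteCategory.congr_hom (hh' i j) x).symm

end Extension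

section HillFamilyHomotopy

universe v w

lemma exists_int_seq {X : ℤ → Type*} (r : ∀ n, X n → X (n + 1) → Prop)
    (hr : ∀ n x, ∃ y, r n x y) (b : ∀ n, X n) (hb : ∀ n y, r n (b n) y) (n₀ : ℤ) (x₀ : X n₀) :
    ∃ f : ∀ n, X n, f n₀ = x₀ ∧ ∀ n, r n (f n) (f (n + 1)) := by
  choose g hg using hr
  refine ⟨fun n => Int.inductionOn' (motive := X) n n₀ x₀ (fun k _ x => g k x)
    (fun k _ _ => b (k - 1)), Int.inductionOn'_self, fun n => ?_⟩
  rcases le_or_gt n₀ n with h | h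
  · dsimp only
    rw [Int.inductionOn'_add_one h]
    exact hg _ _
  · obtain ⟨m, rfl⟩ : ∃ m, n = m - 1 := ⟨n + 1, (add_sub_cancel_right n 1).symm⟩
    dsimp only
    rw [Int.inductionOn'_sub_one (Int.sub_one_lt_iff.1 h)]
    exact hb _ _

variable {S : Type u} [Ring S] {Q J : CochainComplex (ModuleCat.{v} S) ℤ}
  {H : ∀ n, Set (Submodule S (Q.X n))}

lemma IsSubcomplex.exists_extension (hH : ∀ n, IsHillFamily (H n))
    {N : ∀ n, Submodule S (Q.X n)} (hN : IsSubcomplex Q N) (hNH : ∀ n, N n ∈ H n) (n₀ : ℤ)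
    (x : Q.X n₀) : ∃ N', IsSubcomplex Q N' ∧ (∀ n, N' n ∈ H n) ∧ (∀ n, N n ≤ N' n) ∧
      (∀ n, IsFPExtension (N n) (N' n)) ∧ x ∈ N' n₀ := by
  -- Degrees below `n₀` stay unchanged. From `n₀` on, the finitely many generators added in degree
  -- `n` have to be mapped by the differential into what is added in degree `n + 1`.
  let X (n : ℤ) := {N' // N' ∈ H n ∧ N n ≤ N' ∧ IsFPExtension (N n) N'}
  have exists_ge (n : ℤ) (F : Submodule S (Q.X n)) (hF : F.FG) : ∃ N' : X n, F ≤ N'.1 := by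
    obtain ⟨N', hN'H, hle, hfp⟩ := (hH n).exists_extension _ (hNH n) F hF
    exact ⟨⟨N', hN'H, le_sup_left.trans hle, hfp⟩, le_sup_right.trans hle⟩
  obtain ⟨N₀, hN₀⟩ := exists_ge n₀ _ (Submodule.fg_span_singleton x)
  have exists_next (n : ℤ) (N' : X n) :
      ∃ N'' : X (n + 1), N'.1 ≤ N''.1.comap (Q.d n (n + 1)).hom := by
    obtain ⟨F, hF, hle⟩ := N'.2.2.2.exists_le_sup
    obtain ⟨N'', hN''⟩ := exists_ge (n + 1) _ (hF.map (Q.d n (n + 1)).hom)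
    exact ⟨N'', hle.trans (sup_le ((hN n (n + 1)).trans (Submodule.comap_mono N''.2.2.1))
      (Submodule.map_le_iff_le_comap.1 hN''))⟩
  obtain ⟨N', hN'₀, hN'⟩ := exists_int_seq _ exists_next (fun n => ⟨N n, hNH n, le_rfl, .refl _⟩)
    (fun n N'' => (hN n (n + 1)).trans (Submodule.comap_mono N''.2.2.1)) n₀ N₀
  refine ⟨fun n => (N' n).1, fun i j => ?_, fun n => (N' n).2.1, fun n => (N' n).2.2.1,
    fun n => (N' n).2.2.2, ?_⟩
  · by_cases hij : i + 1 = j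
    · obtain rfl := hij
      exact hN' i
    · intro y _
      simp [Q.shape i j hij]
  · simp only [hN'₀]
    exact hN₀ (Submodule.mem_span_singleton_self x)

lemma exists_maximal_isPartialNullHomotopy (hH : ∀ n, IsHillFamily (H n)) (φ : Q ⟶ J) :
    ∃ s, Maximal (fun s => (∀ i, (s i).domain ∈ H i) ∧ IsPartialNullHomotopy φ s) s := by
  let A := {s : ∀ i, Q.X i →ₗ.[S] ∀ j, J.X j |
    (∀ i, (s i).domain ∈ H i) ∧ IsPartialNullHomotopy φ s}
  have hbot : (fun _ => ⊥) ∈ A := by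
    refine ⟨fun i => (hH i).bot_mem, ?_⟩
    rintro i j k - - x y hxy
    obtain ⟨⟨x, hx⟩, rfl, rfl⟩ := (LinearPMap.mem_graph_iff _).1 hxy
    obtain rfl : x = 0 := hx
    exact ⟨fun _ _ => rfl, 0, by simp,
      show φ.f j 0 = J.d i j 0 + 0 by simp only [map_zero, add_zero]⟩
  have exists_ub (c) (hcA : c ⊆ A) (hc : IsChain (· ≤ ·) c) (y) (hy : y ∈ c) :
      ∃ ub ∈ A, ∀ z ∈ c, z ≤ ub := by
    have hdir (i : ℤ) : DirectedOn (· ≤ ·) ((· i) '' c) :=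
      hc.directedOn.mono_comp fun _ _ h => h i
    refine ⟨fun i => LinearPMap.sSup _ (hdir i),
      ⟨fun i => ?_, .sSup hdir ⟨y, hy⟩ fun s hs => (hcA hs).2⟩,
      fun z hz i => LinearPMap.le_sSup (hdir i) ⟨z, hz, rfl⟩⟩
    rw [LinearPMap.domain_sSup]
    refine (hH i).sSup_mem _ ?_
    rintro _ ⟨_, ⟨z, hz, rfl⟩, rfl⟩
    exact (hcA hz).1 i
  obtain ⟨s, -, hs⟩ := zorn_le_nonempty₀ A exists_ub _ hbot
  exact ⟨s, hs⟩

theorem nonempty_homotopy_zero_of_isHillFamily [HasExt.{w} (ModuleCat.{v} S)]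
    (hH : ∀ n, IsHillFamily (H n)) (hJ : IsHomAcyclic (finitelyPresented S) J)
    (hext : ∀ n T, finitelyPresented S T → Subsingleton (Abelian.Ext T (J.X n) 1))
    (φ : Q ⟶ J) : Nonempty (Homotopy φ 0) := by
  obtain ⟨s, ⟨hsH, hs⟩, hmax⟩ := exists_maximal_isPartialNullHomotopy hH φ
  have htop (n : ℤ) : (s n).domain = ⊤ := by
    rw [Submodule.eq_top_iff']
    intro x
    obtain ⟨N, hN, hNH, hle, hfp, hxN⟩ := hs.isSubcomplex.exists_extension hH hsH n x
    obtain ⟨t, ht, hst, htN⟩ := hs.exists_extension hJ hext hN hle hfp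
    refine (hmax ⟨fun i => ?_, ht⟩ hst n).1 ?_
    · rw [htN]
      exact hNH i
    · rw [htN]
      exact hxN
  obtain ⟨h, -⟩ := hs.exists_homotopy
  refine ⟨(Homotopy.ofEq ?_).trans ((h.compLeft (hs.isSubcomplex.toComplexOfEqTop htop)).trans
    (Homotopy.ofEq comp_zero))⟩
  ext
  rfl

end HillFamilyHomotopy

section HillLemma

variable {S G : Type*} [Ring S] [AddCommGroup G] [Module S G] {I : Type*}

lemma exists_finset_le_biSup {A : I → Submodule S G} {N : Submodule S G} (hN : N.FG) {T : Set I}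
    (h : N ≤ ⨆ i ∈ T, A i) : ∃ t : Finset I, ↑t ⊆ T ∧ N ≤ ⨆ i ∈ t, A i := by
  rw [iSup_subtype'] at h
  obtain ⟨t, ht⟩ := CompleteLattice.IsCompactElement.exists_finset_of_le_iSup _
    ((Submodule.fg_iff_compact N).1 hN) _ h
  refine ⟨t.map (.subtype _), by simp, ht.trans (iSup₂_le fun i hi => ?_)⟩
  exact le_biSup A (Finset.mem_map_of_mem _ hi)

variable [LinearOrder I]

/-- Let the submodules `A i` be added one after the other in the order of `I`. A set `T` of indices
is closed if the part of `A i`, `i ∈ T`, which is already present when `A i` is added comes from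
earlier members of `T`. These are the closed sets of the Hill lemma. -/
def IsHillClosed (A : I → Submodule S G) (T : Set I) : Prop :=
  ∀ i ∈ T, A i ⊓ ⨆ j ∈ Set.Iio i, A j ≤ ⨆ j ∈ T ∩ Set.Iio i, A j

lemma exists_mem_biSup_Iic {A : I → Submodule S G} {T : Set I} {x : G} (hx : x ∈ ⨆ i ∈ T, A i) :
    x = 0 ∨ ∃ k ∈ T, x ∈ ⨆ i ∈ T ∩ Set.Iic k, A i := by
  rcases T.eq_empty_or_nonempty with rfl | hT
  · exact .inl (by simpa using hx)
  · have := hT.to_subtype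
    have hmono : Monotone fun k : T => ⨆ i ∈ T ∩ Set.Iic k.1, A i := fun k k' h =>
      biSup_mono fun i hi => ⟨hi.1, hi.2.trans h⟩
    have hle : ⨆ i ∈ T, A i ≤ ⨆ k : T, ⨆ i ∈ T ∩ Set.Iic k.1, A i := iSup₂_le fun k hk =>
      le_iSup_of_le ⟨k, hk⟩ (le_biSup A ⟨hk, le_rfl⟩)
    obtain ⟨⟨k, hk⟩, hxk⟩ := (Submodule.mem_iSup_of_directed _ hmono.directed_le).1 (hle hx)
    exact .inr ⟨k, hk, hxk⟩

namespace IsHillClosed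

variable {A : I → Submodule S G} {T F : Set I}

lemma sUnion {𝒯 : Set (Set I)} (h : ∀ T ∈ 𝒯, IsHillClosed A T) : IsHillClosed A (⋃₀ 𝒯) := by
  rintro i ⟨T, hT, hi⟩
  exact (h T hT i hi).trans
    (biSup_mono fun j hj => ⟨Set.subset_sUnion_of_mem hT hj.1, hj.2⟩)

lemma union (hT : IsHillClosed A T) (hF : IsHillClosed A F) : IsHillClosed A (T ∪ F) := by
  rw [← Set.sUnion_pair]
  exact sUnion (by simp [hT, hF])

protected lemma insert (hT : IsHillClosed A T) {i : I}
    (hi : A i ⊓ ⨆ j ∈ Set.Iio i, A j ≤ ⨆ j ∈ T ∩ Set.Iio i, A j) :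
    IsHillClosed A (insert i T) := by
  rintro j (rfl | hj)
  · exact hi.trans (biSup_mono fun k hk => ⟨.inr hk.1, hk.2⟩)
  · exact (hT j hj).trans (biSup_mono fun k hk => ⟨.inr hk.1, hk.2⟩)

lemma biSup_inf_biSup_le [WellFoundedLT I] (hT : IsHillClosed A T) {U : Set I}
    (hU : IsLowerSet U) : (⨆ i ∈ T, A i) ⊓ ⨆ i ∈ U, A i ≤ ⨆ i ∈ T ∩ U, A i := by
  rintro x ⟨hxT, hxU⟩
  rcases exists_mem_biSup_Iic hxT with rfl | ⟨k, hk, hxk⟩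
  · exact zero_mem _
  clear hxT
  induction k using WellFoundedLT.induction with
  | ind k ih =>
  have biSup_mem_mono {V W : Set I} (h : V ⊆ W) {y : G} (hy : y ∈ ⨆ i ∈ V, A i) :
      y ∈ ⨆ i ∈ W, A i := (biSup_mono h : ⨆ i ∈ V, A i ≤ ⨆ i ∈ W, A i) hy
  by_cases hkU : k ∈ U
  · exact biSup_mem_mono (Set.inter_subset_inter_right T (hU.Iic_subset hkU)) hxk
  have hUk : U ⊆ Set.Iio k := fun i hi => lt_of_not_ge fun h => hkU (hU h hi)
  have hTk : T ∩ Set.Iic k = insert k (T ∩ Set.Iio k) := by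
    rw [← Set.Iio_insert, Set.inter_insert_of_mem hk]
  rw [hTk, iSup_insert] at hxk
  obtain ⟨a, ha, b, hb, rfl⟩ := Submodule.mem_sup.1 hxk
  have hak : a ∈ ⨆ j ∈ Set.Iio k, A j :=
    (Submodule.add_mem_iff_left _ (biSup_mem_mono Set.inter_subset_right hb)).1
      (biSup_mem_mono hUk hxU)
  rcases exists_mem_biSup_Iic (add_mem (hT k hk ⟨ha, hak⟩) hb) with h | ⟨l, hl, hxl⟩
  · exact h ▸ zero_mem _
  · exact ih l hl.2 hl.1 (biSup_mem_mono (Set.inter_subset_inter_left _ Set.inter_subset_left) hxl)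

lemma isFPExtension_insert [WellFoundedLT I] (hT : IsHillClosed A T) {i : I} (hi : i ∉ T)
    (hTi : IsHillClosed A (insert i T)) (hfp : IsFPExtension (A i ⊓ ⨆ j ∈ Set.Iio i, A j) (A i)) :
    IsFPExtension (⨆ j ∈ T, A j) (⨆ j ∈ insert i T, A j) := by
  rw [iSup_insert]
  refine .of_inf_left ?_
  convert hfp using 1
  refine le_antisymm (le_inf inf_le_left ?_) (le_inf inf_le_left ?_)
  · calc A i ⊓ ⨆ j ∈ T, A j ≤ (⨆ j ∈ T, A j) ⊓ ⨆ j ∈ Set.Iic i, A j :=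
          le_inf inf_le_right (inf_le_left.trans (le_biSup A le_rfl))
      _ ≤ ⨆ j ∈ T ∩ Set.Iic i, A j := hT.biSup_inf_biSup_le (isLowerSet_Iic i)
      _ ≤ ⨆ j ∈ Set.Iio i, A j :=
          biSup_mono fun j hj => lt_of_le_of_ne hj.2 fun h => hi (h ▸ hj.1)
  · refine (hTi i (Set.mem_insert i T)).trans (biSup_mono ?_)
    rintro j ⟨rfl | hj, hji⟩
    · exact absurd hji (lt_irrefl j)
    · exact hj

lemma isFPExtension_union [WellFoundedLT I] (hT : IsHillClosed A T)
    (hfp : ∀ i, IsFPExtension (A i ⊓ ⨆ j ∈ Set.Iio i, A j) (A i)) (F : Finset I)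
    (hF : IsHillClosed A F) : IsFPExtension (⨆ i ∈ T, A i) (⨆ i ∈ T ∪ F, A i) := by
  induction F using Finset.induction_on_max with
  | empty => simpa using IsFPExtension.refl _
  | insert a F ha ih =>
    have hF' : IsHillClosed A F := by
      intro i hi
      refine (hF i (by simpa using .inr hi)).trans (biSup_mono fun j hj => ⟨?_, hj.2⟩)
      exact Finset.mem_of_mem_insert_of_ne hj.1 (hj.2.trans (ha i hi)).ne
    have hTF : IsHillClosed A (insert a (T ∪ F)) := by
      rw [← Set.union_insert, ← Finset.coe_insert]
      exact hT.union hF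
    rw [Finset.coe_insert, Set.union_insert]
    by_cases haT : a ∈ T ∪ F
    · rw [Set.insert_eq_of_mem haT]
      exact ih hF'
    · exact .trans (biSup_mono Set.subset_union_left) (biSup_mono (Set.subset_insert _ _))
        (ih hF') ((hT.union hF').isFPExtension_insert haT hTF (hfp a))

lemma biUnion [DecidableEq I] {t : Finset I} {F : I → Finset I}
    (hF : ∀ i ∈ t, IsHillClosed A (F i)) : IsHillClosed A (t.biUnion F) := by
  rw [Finset.coe_biUnion, ← Set.sUnion_image]
  exact sUnion (Set.forall_mem_image.2 hF)

lemma exists_finset_mem [WellFoundedLT I] (hfg : ∀ i, (A i ⊓ ⨆ j ∈ Set.Iio i, A j).FG) (i : I) :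
    ∃ F : Finset I, IsHillClosed A F ∧ i ∈ F := by
  induction i using WellFoundedLT.induction with
  | ind i ih =>
  choose! F hF hmem using ih
  obtain ⟨t, hti, ht⟩ := exists_finset_le_biSup (hfg i) inf_le_right
  refine ⟨insert i (t.biUnion F), ?_, Finset.mem_insert_self _ _⟩
  rw [Finset.coe_insert]
  refine (biUnion fun j hj => hF j (hti hj)).insert (ht.trans (biSup_mono fun j hj => ⟨?_, hti hj⟩))
  exact Finset.mem_biUnion.2 ⟨j, hj, hmem j (hti hj)⟩

end IsHillClosed

theorem exists_isHillFamily [WellFoundedLT I] {A : I → Submodule S G} (htop : ⨆ i, A i = ⊤)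
    (hfg : ∀ i, (A i ⊓ ⨆ j ∈ Set.Iio i, A j).FG)
    (hfp : ∀ i, IsFPExtension (A i ⊓ ⨆ j ∈ Set.Iio i, A j) (A i)) :
    ∃ H : Set (Submodule S G), IsHillFamily H := by
  refine ⟨{N | ∃ T, IsHillClosed A T ∧ ⨆ i ∈ T, A i = N}, ⟨fun c hc => ?_, ?_⟩⟩
  · refine ⟨⋃₀ {T | IsHillClosed A T ∧ ⨆ i ∈ T, A i ∈ c}, .sUnion fun T hT => hT.1, ?_⟩
    refine le_antisymm (iSup₂_le ?_) (sSup_le fun N hN => ?_)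
    · rintro i ⟨T, ⟨-, hT⟩, hi⟩
      exact (le_biSup A hi).trans (le_sSup hT)
    · obtain ⟨T, hT, rfl⟩ := hc hN
      exact biSup_mono (Set.subset_sUnion_of_mem ⟨hT, hN⟩)
  · rintro _ ⟨T, hT, rfl⟩ N hN
    obtain ⟨t, -, ht⟩ := exists_finset_le_biSup (A := A) (T := Set.univ) hN (by simp [htop])
    choose F hF hmem using IsHillClosed.exists_finset_mem hfg
    have hclosed : IsHillClosed A (t.biUnion F) := .biUnion fun i _ => hF i
    refine ⟨_, ⟨T ∪ t.biUnion F, hT.union hclosed, rfl⟩, ?_, hT.isFPExtension_union hfp _ hclosed⟩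
    rw [iSup_union]
    exact sup_le_sup_left (ht.trans (biSup_mono fun i hi => Finset.mem_biUnion.2 ⟨i, hi, hmem i⟩)) _

end HillLemma

section RankedHillLemma

lemma exists_wellOrder_lt_of_rank_lt {I J : Type*} [LinearOrder J] [WellFoundedLT J]
    (rank : I → J) :
    ∃ (_ : LinearOrder I) (_ : WellFoundedLT I), ∀ i j, rank i < rank j → i < j := by
  obtain ⟨_, _⟩ := exists_wellFoundedLT I
  let e : I → J ×ₗ I := fun i => toLex (rank i, i)
  have he : Function.Injective e := fun i j h => congrArg (fun x => (ofLex x).2) h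
  exact ⟨.lift' e he, ⟨InvImage.wf e wellFounded_lt⟩,
    fun i j h => Prod.Lex.toLex_lt_toLex.2 (.inl h)⟩

variable {S G : Type*} [Ring S] [AddCommGroup G] [Module S G] {I J : Type*}
  [LinearOrder J] [WellFoundedLT J]

theorem exists_isHillFamily_of_rank (rank : I → J) {K A : I → Submodule S G}
    (htop : ⨆ i, A i = ⊤) (hKA : ∀ i, K i ≤ A i)
    (hK : ∀ i, K i ≤ ⨆ j ∈ {j | rank j < rank i}, A j)
    (hA : ∀ i, A i ⊓ ⨆ j ∈ {j | j ≠ i ∧ rank j ≤ rank i}, A j ≤ K i)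
    (hfg : ∀ i, (K i).FG) (hfp : ∀ i, IsFPExtension (K i) (A i)) :
    ∃ H : Set (Submodule S G), IsHillFamily H := by
  obtain ⟨_, _, hlt⟩ := exists_wellOrder_lt_of_rank_lt rank
  have hinf (i : I) : A i ⊓ ⨆ j ∈ Set.Iio i, A j = K i := by
    refine le_antisymm ((inf_le_inf_left _ (biSup_mono fun j hj => ?_)).trans (hA i))
      (le_inf (hKA i) ((hK i).trans (biSup_mono fun j => hlt j i)))
    exact ⟨ne_of_lt hj, le_of_not_gt fun h => lt_asymm hj (hlt i j h)⟩
  exact exists_isHillFamily htop (fun i => hinf i ▸ hfg i) fun i => (hinf i).symm ▸ hfp i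

end RankedHillLemma

section RelativeCellComplex

open HomotopicalAlgebra IsGrothendieckAbelian MorphismProperty

universe w v t u'

variable {C : Type u'} [Category.{v} C] [Abelian C] [IsGrothendieckAbelian.{w} C]

lemma pushouts_coproducts_monomorphisms_le :
    (coproducts.{w} (monomorphisms C)).pushouts ≤ monomorphisms C := by
  simp only [pushouts_le_iff, coproducts_le_iff, le_refl]

variable {J : Type w} [LinearOrder J] [OrderBot J] [SuccOrder J] [WellFoundedLT J]
  {α : J → Type t} {A B : (j : J) → α j → C} {basicCell : (j : J) → (i : α j) → A j i ⟶ B j i}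
  {X Y : C} {f : X ⟶ Y}

/-- A relative cell complex with monic cells, viewed as a transfinite composition of monomorphisms:
all its transition maps, and its inclusions into the colimit, are then monic. -/
def monoTransfiniteComposition (c : RelativeCellComplex.{w} basicCell f)
    (hc : ∀ γ : c.Cells, Mono (basicCell γ.j γ.i)) :
    (monomorphisms C).TransfiniteCompositionOfShape J f :=
  (c.transfiniteCompositionOfShape' hc).ofLE pushouts_coproducts_monomorphisms_le

lemma mono_F_map (c : RelativeCellComplex.{w} basicCell f)
    (hc : ∀ γ : c.Cells, Mono (basicCell γ.j γ.i)) {j j' : J} (φ : j ⟶ j') : Mono (c.F.map φ) :=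
  (monoTransfiniteComposition c hc).mem_map φ

lemma mono_incl_app (c : RelativeCellComplex.{w} basicCell f)
    (hc : ∀ γ : c.Cells, Mono (basicCell γ.j γ.i)) (j : J) : Mono (c.incl.app j) :=
  (monomorphisms C).transfiniteCompositionsOfShape_le _ _
    ((monoTransfiniteComposition c hc).ici j).mem

theorem hasSmallObjectArgument_of_le_monomorphisms (I : MorphismProperty C)
    [MorphismProperty.IsSmall.{w} I] (hI : I ≤ monomorphisms C) : HasSmallObjectArgument.{w} I := by
  obtain ⟨κ, hκ, hlt⟩ := HasCardinalLT.exists_regular_cardinal_forall.{w}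
    fun i : I.toSet => Subobject i.1.left
  have : Fact κ.IsRegular := ⟨hκ⟩
  have : Nonempty κ.ord.ToType := by simpa using hκ.ne_zero
  have := WellFoundedLT.toOrderBot κ.ord.ToType
  refine ⟨κ, inferInstance, inferInstance, { preservesColimit {A B X Y} i hi f c := ?_ }⟩
  have (j j') (φ : j ⟶ j') : Mono (c.F.map φ) := mono_F_map c (fun γ => hI _ γ.i.2) φ
  exact preservesColimit_coyoneda_obj_of_mono c.F (hlt ⟨Arrow.mk i, hi⟩)

end RelativeCellComplex

section CellComplexHill

open HomotopicalAlgebra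

universe w v t w' u'

section Abelian

variable {C : Type u'} [Category.{v} C] [Abelian C]

lemma exists_projection_of_attachCells {α : Type t} {A B : α → C} {g : ∀ a, A a ⟶ B a} {X₁ X₂ : C}
    {f : X₁ ⟶ X₂} (c : AttachCells.{w} g f) (k : c.ι) :
    ∃ q : X₂ ⟶ cokernel (g (c.π k)), f ≫ q = 0 ∧ c.cell k ≫ q = cokernel.π _ ∧
      ∀ k' ≠ k, c.cell k' ≫ q = 0 := by
  classical
  let p : c.cofan₂.pt ⟶ cokernel (g (c.π k)) := Cofan.IsColimit.desc c.isColimit₂ fun k' =>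
    if h : k' = k then eqToHom (by rw [h]) ≫ cokernel.π _ else 0
  have hp_self : c.cofan₂.inj k ≫ p = cokernel.π _ := by simp [p, Cofan.IsColimit.fac]
  have hp_ne {k'} (h : k' ≠ k) : c.cofan₂.inj k' ≫ p = 0 := by simp [p, h, Cofan.IsColimit.fac]
  have hmp : c.m ≫ p = 0 := by
    refine Cofan.IsColimit.hom_ext c.isColimit₁ _ _ fun k' => ?_
    obtain rfl | h := eq_or_ne k' k
    · simp [hp_self]
    · simp [hp_ne h]
  refine ⟨c.isPushout.desc 0 p (by simp [hmp]), by simp, ?_, fun k' h => ?_⟩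
  · simp [AttachCells.cell_def, hp_self]
  · simp [AttachCells.cell_def, hp_ne h]

variable {J : Type w'} [LinearOrder J] [OrderBot J] [SuccOrder J] [WellFoundedLT J]
  {α : J → Type t} {A B : (j : J) → α j → C} {basicCell : (j : J) → (i : α j) → A j i ⟶ B j i}
  {X Y Z : C} {f : X ⟶ Y} (c : RelativeCellComplex.{w} basicCell f) {φ : Y ⟶ Z}

lemma incl_app_comp_eq_zero (hf : f ≫ φ = 0) (j : J)
    (hφ : ∀ γ : c.Cells, γ.j < j → γ.ι ≫ φ = 0) : c.incl.app j ≫ φ = 0 := by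
  induction j using SuccOrder.limitRecOn with
  | isMin j hj =>
    obtain rfl := hj.eq_bot
    simpa [← cancel_epi c.isoBot.inv] using hf
  | succ j hj ih =>
    refine (c.attachCells j hj).hom_ext ?_ fun k => ?_
    · simpa using ih fun γ hγ => hφ γ (hγ.trans_le (Order.le_succ j))
    · exact ((Category.assoc ..).symm.trans
        (hφ ⟨j, hj, k⟩ (Order.lt_succ_of_not_isMax hj))).trans comp_zero.symm
  | isSuccLimit j hj ih =>
    refine (c.F.isColimitOfIsWellOrderContinuous j hj).hom_ext fun ⟨i, hi⟩ => ?_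
    have hi' : c.F.map (homOfLE hi.le) ≫ c.incl.app j ≫ φ = 0 := by
      simpa using ih i hi fun γ hγ => hφ γ (hγ.trans hi)
    exact hi'.trans comp_zero.symm

lemma basicCell_comp_ι_comp_eq_zero (hf : f ≫ φ = 0) (γ : c.Cells)
    (hφ : ∀ γ' : c.Cells, γ'.j < γ.j → γ'.ι ≫ φ = 0) : basicCell γ.j γ.i ≫ γ.ι ≫ φ = 0 := by
  obtain ⟨j, hj, k⟩ := γ
  let a := c.attachCells j hj
  calc basicCell j (a.π k) ≫ (a.cell k ≫ c.incl.app (Order.succ j)) ≫ φ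
      = a.cofan₁.inj k ≫ a.m ≫ a.g₂ ≫ c.incl.app (Order.succ j) ≫ φ := by
        simp [AttachCells.cell_def]
    _ = a.cofan₁.inj k ≫ a.g₁ ≫ c.incl.app j ≫ φ := by
        simp [← a.isPushout.w_assoc]
    _ = 0 := by simp [incl_app_comp_eq_zero c hf j hφ]

lemma exists_projection_of_cell (γ : c.Cells) :
    ∃ q : c.F.obj (Order.succ γ.j) ⟶ cokernel (basicCell γ.j γ.i),
      (∃ s, s ≫ c.incl.app (Order.succ γ.j) = γ.ι ∧ s ≫ q = cokernel.π _) ∧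
      ∀ γ' ≠ γ, γ'.j ≤ γ.j → ∃ s, s ≫ c.incl.app (Order.succ γ.j) = γ'.ι ∧ s ≫ q = 0 := by
  obtain ⟨j, hj, k⟩ := γ
  obtain ⟨q, hq, hqk, hqne⟩ := exists_projection_of_attachCells (c.attachCells j hj) k
  refine ⟨q, ⟨_, rfl, hqk⟩, fun ⟨j', hj', k'⟩ hne hle => ?_⟩
  obtain hlt | heq := hle.lt_or_eq
  · let s := (c.attachCells j' hj').cell k' ≫ c.F.map (homOfLE (Order.succ_le_of_lt hlt))
    have hs : (s ≫ c.F.map (homOfLE (Order.le_succ j))) ≫ c.incl.app (Order.succ j) =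
        (c.attachCells j' hj').cell k' ≫ c.incl.app (Order.succ j') := by simp [s]
    have hsq : (s ≫ c.F.map (homOfLE (Order.le_succ j))) ≫ q = 0 := by simp [hq]
    exact ⟨_, hs, hsq⟩
  · obtain rfl : j' = j := heq
    exact ⟨_, rfl, hqne k' fun h => hne (by rw [h])⟩

end Abelian

lemma isFPExtension_range {S E M : Type*} [Ring S] [AddCommGroup E] [Module S E] [AddCommGroup M]
    [Module S M] [Module.FinitePresentation S E] (e : E →ₗ[S] M) {K : Submodule S M}
    (hK : (K.comap e).FG) : IsFPExtension K (LinearMap.range e) := by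
  refine Module.finitePresentation_of_surjective
    ((K.submoduleOf (LinearMap.range e)).mkQ ∘ₗ e.rangeRestrict)
    ((Submodule.mkQ_surjective _).comp e.surjective_rangeRestrict) ?_
  rwa [LinearMap.ker_comp, Submodule.ker_mkQ]

variable {S : Type u} [Ring S] {J : Type u} [LinearOrder J] [OrderBot J] [SuccOrder J]
  [WellFoundedLT J] {α : J → Type t} {A B : (j : J) → α j → ModuleCat.{u} S}
  {basicCell : (j : J) → (i : α j) → A j i ⟶ B j i} {X Y : ModuleCat.{u} S} {f : X ⟶ Y}
  (c : RelativeCellComplex.{u} basicCell f)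

lemma iSup_range_ι_eq_top (hf : f = 0) : ⨆ γ : c.Cells, LinearMap.range γ.ι.hom = ⊤ := by
  set N := ⨆ γ : c.Cells, LinearMap.range γ.ι.hom
  have hN : ModuleCat.ofHom N.mkQ = 0 := c.hom_ext (by simp [hf]) fun γ => by
    ext x
    simpa using le_iSup (fun γ : c.Cells => LinearMap.range γ.ι.hom) γ
      (LinearMap.mem_range_self _ x)
  rw [← N.ker_mkQ, LinearMap.ker_eq_top]
  exact congrArg ModuleCat.Hom.hom hN

lemma range_basicCell_comp_ι_le (hf : f = 0) (γ : c.Cells) :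
    LinearMap.range (basicCell γ.j γ.i ≫ γ.ι).hom ≤
      ⨆ γ' ∈ {γ' : c.Cells | γ'.j < γ.j}, LinearMap.range γ'.ι.hom := by
  set N := ⨆ γ' ∈ {γ' : c.Cells | γ'.j < γ.j}, LinearMap.range γ'.ι.hom
  have hN : basicCell γ.j γ.i ≫ γ.ι ≫ ModuleCat.ofHom N.mkQ = 0 :=
    basicCell_comp_ι_comp_eq_zero c (by simp [hf]) γ fun γ' hγ' => by
      ext x
      simpa using le_biSup (fun γ : c.Cells => LinearMap.range γ.ι.hom) hγ'
        (LinearMap.mem_range_self _ x)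
  rintro _ ⟨x, rfl⟩
  simpa using ConcreteCategory.congr_hom hN x

lemma comap_ι_iSup_range_le (hc : ∀ γ : c.Cells, Mono (basicCell γ.j γ.i)) (γ : c.Cells) :
    (⨆ γ' ∈ {γ' : c.Cells | γ' ≠ γ ∧ γ'.j ≤ γ.j}, LinearMap.range γ'.ι.hom).comap γ.ι.hom ≤
      LinearMap.range (basicCell γ.j γ.i).hom := by
  obtain ⟨q, ⟨s, hs, hsq⟩, hq⟩ := exists_projection_of_cell c γ
  have := mono_incl_app c hc (Order.succ γ.j)
  have hle : ⨆ γ' ∈ {γ' : c.Cells | γ' ≠ γ ∧ γ'.j ≤ γ.j}, LinearMap.range γ'.ι.hom ≤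
      (LinearMap.ker q.hom).map (c.incl.app (Order.succ γ.j)).hom := by
    refine iSup₂_le fun γ' ⟨hne, hle⟩ => ?_
    obtain ⟨s', hs', hs'q⟩ := hq γ' hne hle
    rw [← hs']
    rintro _ ⟨x, rfl⟩
    exact ⟨s' x, ConcreteCategory.congr_hom hs'q x, rfl⟩
  intro x hx
  obtain ⟨y, hy, hyx⟩ := hle hx
  obtain rfl : y = s x := (ModuleCat.mono_iff_injective (c.incl.app (Order.succ γ.j))).1 this
    (hyx.trans (ConcreteCategory.congr_hom hs x).symm)
  have hx : cokernel.π (basicCell γ.j γ.i) x = 0 :=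
    (ConcreteCategory.congr_hom hsq x).symm.trans hy
  exact ((ShortComplex.mk _ _ (cokernel.condition (basicCell γ.j γ.i))).moduleCat_exact_iff.1
    (ShortComplex.exact_cokernel _)) x hx

theorem exists_isHillFamily_of_relativeCellComplex (hf : f = 0)
    (hc : ∀ γ : c.Cells, Mono (basicCell γ.j γ.i))
    (hA : ∀ γ : c.Cells, Module.Finite S (A γ.j γ.i))
    (hB : ∀ γ : c.Cells, Module.FinitePresentation S (B γ.j γ.i)) :
    ∃ H : Set (Submodule S Y), IsHillFamily H := by
  let K (γ : c.Cells) := LinearMap.range (basicCell γ.j γ.i ≫ γ.ι).hom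
  have hK (γ : c.Cells) : K γ = (LinearMap.range (basicCell γ.j γ.i).hom).map γ.ι.hom :=
    LinearMap.range_comp ..
  have hcomap (γ : c.Cells) : (K γ).comap γ.ι.hom = LinearMap.range (basicCell γ.j γ.i).hom := by
    rw [hK, Submodule.comap_map_eq, sup_eq_left]
    exact (Submodule.comap_mono bot_le).trans (comap_ι_iSup_range_le c hc γ)
  refine exists_isHillFamily_of_rank (fun γ : c.Cells => γ.j) (K := K) (iSup_range_ι_eq_top c hf)
    (fun γ => (hK γ).trans_le LinearMap.map_le_range) (range_basicCell_comp_ι_le c hf)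
    (fun γ => ?_) (fun γ => ?_) fun γ => ?_
  · rw [← Submodule.map_comap_eq, hK]
    exact Submodule.map_mono (comap_ι_iSup_range_le c hc γ)
  · exact .of_finite
  · have := hB γ
    exact isFPExtension_range _ (by rw [hcomap]; exact .of_finite)

end CellComplexHill

section Cover

open MorphismProperty

universe w

/-- The inclusions `L ↪ Sᵐ` of finitely generated submodules of finite free modules, used as cells
in the small object argument. Their cokernels are, up to isomorphism, all the finitely presented
modules. -/
def fgInclusions (S : Type u) [Ring S] : MorphismProperty (ModuleCat.{u} S) :=
  ofHoms fun i : Σ m, {L : Submodule S (Fin m → S) // L.FG} => ModuleCat.ofHom i.2.1.subtype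

variable {S : Type u} [Ring S] {X Y B M : ModuleCat.{u} S}

instance : MorphismProperty.IsSmall.{u} (fgInclusions S) := by
  unfold fgInclusions
  infer_instance

lemma fgInclusions_ofHom_subtype {m : ℕ} {L : Submodule S (Fin m → S)} (hL : L.FG) :
    fgInclusions S (ModuleCat.ofHom L.subtype) :=
  ⟨(⟨m, L, hL⟩ : Σ m, {L : Submodule S (Fin m → S) // L.FG})⟩

lemma fgInclusions_le_monomorphisms : fgInclusions S ≤ monomorphisms (ModuleCat.{u} S) := by
  rintro _ _ _ ⟨_, L, _⟩
  exact (ModuleCat.mono_iff_injective _).2 L.injective_subtype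

lemma finite_left_of_fgInclusions {i : X ⟶ Y} (hi : fgInclusions S i) : Module.Finite S X := by
  obtain ⟨_, L, hL⟩ := hi
  exact .of_fg hL

lemma finitelyPresented_right_of_fgInclusions {i : X ⟶ Y} (hi : fgInclusions S i) :
    finitelyPresented S Y := by
  obtain ⟨_, L, hL⟩ := hi
  exact inferInstanceAs (Module.FinitePresentation S (Fin _ → S))

theorem exists_isHillFamily_rlp_fgInclusions (M : ModuleCat.{u} S) :
    ∃ (B : ModuleCat.{u} S) (p : B ⟶ M) (H : Set (Submodule S B)),
      IsHillFamily H ∧ (fgInclusions S).rlp p := by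
  obtain ⟨κ, _, _, _⟩ := hasSmallObjectArgument_of_le_monomorphisms (fgInclusions S)
    fgInclusions_le_monomorphisms
  let f : ModuleCat.of S PUnit.{u + 1} ⟶ M := 0
  obtain ⟨H, hH⟩ := exists_isHillFamily_of_relativeCellComplex
    (SmallObject.relativeCellComplexιObj (fgInclusions S) κ f)
    ((ModuleCat.isZero_of_subsingleton _).eq_of_src _ _)
    (fun γ => fgInclusions_le_monomorphisms _ γ.i.2)
    (fun γ => finite_left_of_fgInclusions γ.i.2)
    fun γ => finitelyPresented_right_of_fgInclusions γ.i.2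
  exact ⟨_, SmallObject.πObj (fgInclusions S) κ f, H, hH, SmallObject.rlp_πObj _ κ f⟩

lemma epi_of_rlp_fgInclusions {p : B ⟶ M} (hp : (fgInclusions S).rlp p) : Epi p := by
  refine (ModuleCat.epi_iff_surjective p).2 fun x => ?_
  have sq : CommSq 0 (ModuleCat.ofHom (⊥ : Submodule S (Fin 1 → S)).subtype) p
      (ModuleCat.ofHom (LinearMap.toSpanSingleton S M x ∘ₗ LinearMap.proj 0)) := ⟨by
    ext y
    simp [(Submodule.mem_bot S).1 y.2]⟩
  have := hp _ (fgInclusions_ofHom_subtype (L := (⊥ : Submodule S (Fin 1 → S))) Submodule.fg_bot)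
  exact ⟨sq.lift 1, (ConcreteCategory.congr_hom sq.fac_right 1).trans (one_smul S x)⟩

lemma exists_extension_kernel_of_hasLiftingProperty {C : Type*} [Category* C] [HasZeroMorphisms C]
    {A A' B M : C} (i : A ⟶ A') (p : B ⟶ M) [HasKernel p] [HasLiftingProperty i p]
    (f : A ⟶ kernel p) : ∃ g : A' ⟶ kernel p, i ≫ g = f := by
  have sq : CommSq (f ≫ kernel.ι p) i p 0 := ⟨by simp⟩
  exact ⟨kernel.lift p sq.lift sq.fac_right, by simp [← cancel_mono (kernel.ι p)]⟩

theorem subsingleton_ext_kernel_of_rlp_fgInclusions [HasExt.{w} (ModuleCat.{u} S)] {p : B ⟶ M}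
    (hp : (fgInclusions S).rlp p) {T : ModuleCat.{u} S} (hT : finitelyPresented S T) :
    Subsingleton (Abelian.Ext T (kernel p) 1) := by
  have : Module.FinitePresentation S T := hT
  obtain ⟨m, L, e, hL⟩ := Module.FinitePresentation.exists_fin S T
  let π : (Fin m → S) →ₗ[S] T := e.symm.toLinearMap ∘ₗ L.mkQ
  have hπ : LinearMap.ker π = L := by rw [LinearEquiv.ker_comp, L.ker_mkQ]
  have hS := LinearMap.shortExact_shortComplexKer (f := π)
    (e.symm.surjective.comp L.mkQ_surjective)
  have : Projective (ModuleCat.of S (Fin m → S)) := (IsProjective.iff_projective _).1 inferInstance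
  have := hp _ (fgInclusions_ofHom_subtype (hπ ▸ hL : (LinearMap.ker π).FG))
  exact subsingleton_ext_of_exists_extension hS
    (exists_extension_kernel_of_hasLiftingProperty (ModuleCat.ofHom (LinearMap.ker π).subtype) p)

end Cover

variable {R}

theorem FpProjective.exists_retract {P : RightMod R} (hP : FpProjective R P) :
    ∃ (B : RightMod R) (H : Set (Submodule Rᵐᵒᵖ B)), IsHillFamily H ∧ Nonempty (Retract P B) := by
  obtain ⟨B, p, H, hH, hp⟩ := exists_isHillFamily_rlp_fgInclusions P
  have := epi_of_rlp_fgInclusions hp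
  have hS : (ShortComplex.mk _ p (kernel.condition p)).ShortExact :=
    { exact := ShortComplex.exact_kernel p }
  have := hP (kernel p) fun T hT => subsingleton_ext_kernel_of_rlp_fgInclusions hp hT
  obtain ⟨i, hi⟩ := exists_lift_of_subsingleton_ext hS (𝟙 P)
  exact ⟨B, H, hH, ⟨⟨i, p, hi⟩⟩⟩

/-- If `P^•` is a complex of fp-projective right `R`-modules and `J^•` is an
acyclic complex of fp-injective right `R`-modules whose modules of cocycles
`Z^n = ker (J^n → J^{n+1})` are all fp-injective, then any morphism of
complexes `P^• → J^•` is homotopic to zero. -/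
theorem homotopic_to_zero {R : Type u} [Ring R]
    (P J : CochainComplex (RightMod R) ℤ)
    (hP : ∀ n : ℤ, FpProjective R (P.X n))
    (hJacyclic : ∀ n : ℤ, J.ExactAt n)
    (hJ : ∀ n : ℤ, FpInjective R (J.X n))
    (hJcocycles : ∀ n : ℤ, FpInjective R (kernel (J.d n (n + 1))))
    (φ : P ⟶ J) :
    Nonempty (Homotopy φ 0) := by
  choose B H hH hB using fun n => (hP n).exists_retract
  let r := retractComplexOfRetracts P fun n => (hB n).some
  have hJT : IsHomAcyclic (finitelyPresented Rᵐᵒᵖ) J :=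
    .of_subsingleton_ext_kernel hJacyclic hJcocycles
  obtain ⟨h⟩ := nonempty_homotopy_zero_of_isHillFamily hH hJT hJ (r.r ≫ φ)
  exact ⟨(Homotopy.ofEq (by simp)).trans ((h.compLeft r.i).trans (Homotopy.ofEq (by simp)))⟩

end Stmt2
end

section
/- Let 𝒦 be an abelian category and let 𝒮 be a self-generating class of objects of 𝒦 that is closed under kernels of epimorphisms. Then 𝒮^{⊥₁} = 𝒮^{⊥≥1}; that is, for an object X ∈ 𝒦, if Ext^1_𝒦(S,X)=0 for all S ∈ 𝒮, then Ext^n_𝒦(S,X)=0 for all S ∈ 𝒮 and all n ≥ 1. -/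
/-!
STATEMENT 8: Let 𝒦 be an abelian category and 𝒮 a self-generating class of
objects closed under kernels of epimorphisms. Then 𝒮^{⊥₁} = 𝒮^{⊥≥1}.
-/

open CategoryTheory Limits

universe w v u

namespace Stmt8

/-!
Every `Ext` class of positive degree is killed by pulling back along some epimorphism: represent
it by a roof `A ⟵ X' ⟶ Y[n]` with `X'` quasi-isomorphic to `A`; the degree-zero cycles of `X'`
map onto `A`, and on them the right leg vanishes because `Y[n]` is zero in degree `0`.
When `A` lies in `𝒮`, the epimorphism can be taken with source in `𝒮`, hence with kernel in `𝒮`,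
so the class is a connecting image of a class on that kernel in degree one less, which vanishes.
-/

section

open HomologicalComplex

lemma exists_epi_single_map_eq_comp {C : Type*} [Category* C] [HasZeroMorphisms C]
    [HasZeroObject C] {ι : Type*} [DecidableEq ι] {c : ComplexShape ι} {i : ι} {A : C}
    {X : HomologicalComplex C c} [X.HasHomology i]
    (s : X ⟶ (single C c i).obj A) [Epi (homologyMap s i)] :
    ∃ (E : C) (p : E ⟶ A) (_ : Epi p) (j : (single C c i).obj E ⟶ X),
      (single C c i).map p = j ≫ s := by
  let p : X.cycles i ⟶ A := cyclesMap s i ≫ (singleObjCyclesSelfIso c i A).hom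
  have p_eq : p = X.homologyπ i ≫ homologyMap s i ≫ (singleObjHomologySelfIso c i A).hom := by
    simp [p]
  have epi_p : Epi p := by
    rw [p_eq]
    infer_instance
  refine ⟨X.cycles i, p, epi_p, mkHomFromSingle (X.iCycles i) (by simp), ?_⟩
  apply from_single_hom_ext
  simp [p, single_map_f_self, singleObjCyclesSelfIso_hom]

lemma exists_epi_Q_map_single_map_comp_eq_zero {C : Type u} [Category.{v} C] [Abelian C]
    [HasDerivedCategory.{w} C] {A : C} {i : ℤ} {L : CochainComplex C ℤ} (hL : IsZero (L.X i))
    (g : DerivedCategory.Q.obj ((single C (ComplexShape.up ℤ) i).obj A) ⟶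
      DerivedCategory.Q.obj L) :
    ∃ (E : C) (p : E ⟶ A), Epi p ∧
      DerivedCategory.Q.map ((single C (ComplexShape.up ℤ) i).map p) ≫ g = 0 := by
  obtain ⟨X, s, hs, f, rfl⟩ := DerivedCategory.right_fac g
  have quasiIso_s : QuasiIso s := by
    rwa [← DerivedCategory.isIso_Q_map_iff_quasiIso]
  obtain ⟨E, p, epi_p, j, hj⟩ := exists_epi_single_map_eq_comp s
  have j_comp_f : j ≫ f = 0 := from_single_hom_ext (hL.eq_of_tgt _ _)
  refine ⟨E, p, epi_p, ?_⟩
  rw [hj, Functor.map_comp, Category.assoc, IsIso.hom_inv_id_assoc, ← Functor.map_comp,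
    j_comp_f, Functor.map_zero]

end

section

open Abelian

variable {C : Type u} [Category.{v} C] [Abelian C]

/-- A class `S` of objects is self-generating if every epimorphism onto an object of `S` can be
precomposed to an epimorphism whose source lies in `S`. -/
def IsSelfGenerating (S : Set C) : Prop :=
  ∀ (K : C) (s : C), s ∈ S → ∀ p : K ⟶ s, Epi p →
    ∃ (s' : C) (_ : s' ∈ S) (q : s' ⟶ s) (_ : Epi q) (l : s' ⟶ K), l ≫ p = q

/-- A class `S` of objects is closed under kernels of epimorphisms. Kernels are encoded as left
terms of short exact sequences. -/
def IsClosedUnderKernelsOfEpis (S : Set C) : Prop :=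
  ∀ T : ShortComplex C, T.ShortExact → T.X₂ ∈ S → T.X₃ ∈ S → T.X₁ ∈ S

lemma shortExact_kernelSequence {A B : C} (p : A ⟶ B) [Epi p] :
    (ShortComplex.kernelSequence p).ShortExact where
  exact := ShortComplex.kernelSequence_exact p
  epi_g := inferInstanceAs (Epi p)

variable [HasExt.{w} C]

lemma exists_epi_mk₀_comp_eq_zero {A Y : C} {n : ℕ} (hn : n ≠ 0) (x : Ext A Y n) :
    ∃ (E : C) (p : E ⟶ A), Epi p ∧ (Ext.mk₀ p).comp x (zero_add n) = 0 := by
  let := HasDerivedCategory.standard C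
  let shift := ((DerivedCategory.singleFunctors C).shiftIso (n : ℤ) (-n : ℤ) 0 (by simp)).app Y
  have isZero_X : IsZero (((HomologicalComplex.single C (ComplexShape.up ℤ) (-n : ℤ)).obj Y).X 0) :=
    HomologicalComplex.isZero_single_obj_X _ _ _ _ (by simpa using hn)
  obtain ⟨E, p, epi_p, hp⟩ :=
    exists_epi_Q_map_single_map_comp_eq_zero isZero_X (x.hom ≫ shift.hom)
  have map_p_comp : (DerivedCategory.singleFunctor C 0).map p ≫ x.hom = 0 := by
    rw [← cancel_mono shift.hom, Category.assoc, zero_comp]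
    exact hp
  refine ⟨E, p, epi_p, ?_⟩
  ext
  simpa [Ext.comp_hom, ShiftedHom.mk₀_comp] using map_p_comp

lemma eq_zero_of_mk₀_comp_eq_zero {T : ShortComplex C} (hT : T.ShortExact) {Y : C} {n : ℕ}
    [Subsingleton (Ext T.X₁ Y n)] (x : Ext T.X₃ Y (n + 1))
    (hx : (Ext.mk₀ T.g).comp x (zero_add _) = 0) : x = 0 := by
  obtain ⟨y, rfl⟩ := Ext.contravariant_sequence_exact₃ hT Y x hx (add_comm 1 n)
  rw [Subsingleton.elim y 0, Ext.comp_zero]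

lemma exists_mem_epi_mk₀_comp_eq_zero {S : Set C} (hself : IsSelfGenerating S) {s Y : C}
    (hs : s ∈ S) {n : ℕ} (hn : n ≠ 0) (x : Ext s Y n) :
    ∃ s' ∈ S, ∃ q : s' ⟶ s, Epi q ∧ (Ext.mk₀ q).comp x (zero_add n) = 0 := by
  obtain ⟨E, p, epi_p, hp⟩ := exists_epi_mk₀_comp_eq_zero hn x
  obtain ⟨s', hs', q, epi_q, l, rfl⟩ := hself E s hs p epi_p
  refine ⟨s', hs', l ≫ p, epi_q, ?_⟩
  rw [← Ext.mk₀_comp_mk₀_assoc, hp, Ext.comp_zero]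

lemma subsingleton_ext_succ {S : Set C} (hself : IsSelfGenerating S)
    (hker : IsClosedUnderKernelsOfEpis S) {X : C} {n : ℕ}
    (hX : ∀ s ∈ S, Subsingleton (Ext s X n)) :
    ∀ s ∈ S, Subsingleton (Ext s X (n + 1)) := by
  intro s hs
  refine subsingleton_of_forall_eq 0 fun x ↦ ?_
  obtain ⟨s', hs', q, epi_q, hq⟩ := exists_mem_epi_mk₀_comp_eq_zero hself hs n.succ_ne_zero x
  have hT := shortExact_kernelSequence q
  have := hX _ (hker _ hT hs' hs)
  exact eq_zero_of_mk₀_comp_eq_zero hT x hq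

theorem selfGenerating_ext_vanishing_general {S : Set C} (hself : IsSelfGenerating S)
    (hker : IsClosedUnderKernelsOfEpis S) {X : C} {m : ℕ}
    (hX : ∀ s ∈ S, Subsingleton (Ext s X m)) {n : ℕ} (hmn : m ≤ n) :
    ∀ s ∈ S, Subsingleton (Ext s X n) := by
  induction n, hmn using Nat.le_induction with
  | base => exact hX
  | succ n _ ih => exact subsingleton_ext_succ hself hker ih

end

/-- If `𝒮` is a self-generating class of objects of an abelian category that
is closed under kernels of epimorphisms, and `Ext¹(S, X) = 0` for all `S ∈ 𝒮`,
then `Extⁿ(S, X) = 0` for all `S ∈ 𝒮` and all `n ≥ 1`. -/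
theorem selfGenerating_ext_vanishing
    (C : Type u) [Category.{v} C] [Abelian C] [HasExt.{w} C]
    (S : Set C)
    -- 𝒮 is self-generating
    (hself : ∀ (K : C) (s : C), s ∈ S → ∀ p : K ⟶ s, Epi p →
      ∃ (s' : C) (_ : s' ∈ S) (q : s' ⟶ s) (_ : Epi q) (l : s' ⟶ K),
        l ≫ p = q)
    -- 𝒮 is closed under kernels of epimorphisms
    (hker : ∀ (T : ShortComplex C), T.ShortExact →
      T.X₂ ∈ S → T.X₃ ∈ S → T.X₁ ∈ S)
    (X : C) (hX : ∀ s ∈ S, Subsingleton (Abelian.Ext s X 1)) :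
    ∀ s ∈ S, ∀ n : ℕ, 1 ≤ n → Subsingleton (Abelian.Ext s X n) :=
  fun s hs _ hn ↦ selfGenerating_ext_vanishing_general hself hker hX hn s hs

end Stmt8
end
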